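/- Let V be a PVAS of dimension d with edge set E, let →_V* be its reachability relation, and let S ⊆ ℕ^d × ℕ^d be a semilinear relation. Then →_V* ∩ S is a finite union of relations b_i + P_i, where each b_i ∈ ℕ^d × ℕ^d and each P_i ⊆ ℕ^d × ℕ^d is a smooth periodic relation such that for every linear relation L ⊆ b_i + P_i there exists p ∈ P_i such that p + L is flattable with respect to V. -/

import Mathlib

/-- Vectors of naturals of dimension `d`. -/
abbrev NVec (d : ℕ) := Fin d → ℕ

/-- A priority vector addition system (PVAS) of dimension `d`: a finite set of edges,
each edge having an update vector in `ℤ^d` and a test level `g(e) ∈ {0,…,d}`. -/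
structure PVAS (d : ℕ) where
  E : Type
  fintypeE : Fintype E
  upd : E → Fin d → ℤ
  test : E → ℕ
  test_le : ∀ e, test e ≤ d

namespace PVAS

variable {d : ℕ} (V : PVAS d)

/-- The step relation induced by an edge `e`: `x →_e x'` iff the first `test e`
counters of `x` are `0` and `x' = x + upd e` (which must stay in `ℕ^d`). -/
def StepE (e : V.E) (x x' : NVec d) : Prop :=
  (∀ j : Fin d, (j : ℕ) < V.test e → x j = 0) ∧
    ∀ i : Fin d, (x' i : ℤ) = (x i : ℤ) + V.upd e i

/-- The one-step relation: union of the `→_e`. -/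
def Step (x x' : NVec d) : Prop := ∃ e : V.E, V.StepE e x x'

/-- The reachability relation `→_V*`. -/
def Reach : NVec d → NVec d → Prop := Relation.ReflTransGen V.Step

/-- For a word `w = e₁ … e_k` of edges, `→_w := →_{e₁} ∘ … ∘ →_{e_k}`. -/
def StepWord : List V.E → NVec d → NVec d → Prop
  | [] => Eq
  | e :: w => fun x z => ∃ y, V.StepE e x y ∧ StepWord w y z

end PVAS

/-- Composition of a finite list of relations. -/
def compList {α : Type*} : List (α → α → Prop) → α → α → Prop
  | [] => Eq
  | R :: Rs => fun x z => ∃ y, R x y ∧ compList Rs y z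

/-- A set in a commutative monoid is linear if it is of the form
`b + ℕ·p₁ + … + ℕ·p_r`. -/
def IsLinSet {M : Type*} [AddCommMonoid M] (L : Set M) : Prop :=
  ∃ (b : M) (r : ℕ) (p : Fin r → M),
    L = {x | ∃ c : Fin r → ℕ, x = b + ∑ i, c i • p i}

/-- A set is semilinear if it is a finite union of linear sets. -/
def IsSemilinSet {M : Type*} [AddCommMonoid M] (S : Set M) : Prop :=
  ∃ (n : ℕ) (L : Fin n → Set M), (∀ i, IsLinSet (L i)) ∧ S = ⋃ i, L i

/-- Pairs of natural vectors: relations on `ℕ^d`, viewed as subsets of `ℕ^{2d}`. -/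
abbrev PairN (d : ℕ) := NVec d × NVec d

/-- Pairs of rational vectors: `ℚ^d × ℚ^d ≅ ℚ^{2d}`. -/
abbrev PairQ (d : ℕ) := (Fin d → ℚ) × (Fin d → ℚ)

/-- Coordinatewise cast of a pair of natural vectors into rational vectors. -/
def castPQ {d : ℕ} (x : PairN d) : PairQ d :=
  (fun i => (x.1 i : ℚ), fun i => (x.2 i : ℚ))

/-- A set in a commutative monoid is periodic if it contains `0` and is closed
under addition. -/
def IsPeriodic {M : Type*} [AddCommMonoid M] (P : Set M) : Prop :=
  0 ∈ P ∧ ∀ p ∈ P, ∀ q ∈ P, p + q ∈ P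

/-- `v ∈ ℚ^{2d}` is a direction of `P ⊆ ℕ^{2d}`: some full line `x + ℕ·(n v)` with
`n > 0` is contained in `P`. -/
def IsDirection {d : ℕ} (P : Set (PairN d)) (v : PairQ d) : Prop :=
  ∃ n : ℕ, 0 < n ∧ ∃ x : PairN d, ∀ k : ℕ, ∃ p ∈ P,
    castPQ p = castPQ x + ((k * n : ℕ) : ℚ) • v

/-- The set of directions of `P`. -/
def dirSet {d : ℕ} (P : Set (PairN d)) : Set (PairQ d) := {v | IsDirection P v}

/-- A cone in `ℚ^{2d}`: contains `0`, closed under addition and under multiplication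
by positive rationals. -/
def IsCone {d : ℕ} (C : Set (PairQ d)) : Prop :=
  0 ∈ C ∧ (∀ u ∈ C, ∀ v ∈ C, u + v ∈ C) ∧ ∀ u ∈ C, ∀ l : ℚ, 0 < l → l • u ∈ C

/-- Definable subsets of `ℚ^{2d}`: finite Boolean combinations of half-spaces
(equivalently, first-order definable over `(ℚ,+,≥)`). -/
inductive IsQDef {d : ℕ} : Set (PairQ d) → Prop
  | halfspace (a : PairQ d) (b : ℚ) :
      IsQDef {x | b ≤ (∑ i, a.1 i * x.1 i) + ∑ i, a.2 i * x.2 i}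
  | compl {S : Set (PairQ d)} : IsQDef S → IsQDef Sᶜ
  | inter {S T : Set (PairQ d)} : IsQDef S → IsQDef T → IsQDef (S ∩ T)

/-- `P` is asymptotically definable if its set of directions is a definable cone. -/
def AsymptoticallyDefinable {d : ℕ} (P : Set (PairN d)) : Prop :=
  IsCone (dirSet P) ∧ IsQDef (dirSet P)

/-- `P` is well-directed: every sequence of elements of `P` has an infinite
subsequence `(p_{m_k})` such that `p_{m_j} + ℕ·(p_{m_k} − p_{m_j}) ⊆ P` for `j ≤ k`. -/
def WellDirected {d : ℕ} (P : Set (PairN d)) : Prop :=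
  ∀ p : ℕ → PairN d, (∀ m, p m ∈ P) →
    ∃ φ : ℕ → ℕ, StrictMono φ ∧
      ∀ j k : ℕ, j ≤ k → ∀ t : ℕ, ∃ q ∈ P,
        castPQ q = castPQ (p (φ j)) + (t : ℚ) • (castPQ (p (φ k)) - castPQ (p (φ j)))

/-- `P` is smooth if it is asymptotically definable and well-directed. -/
def IsSmooth {d : ℕ} (P : Set (PairN d)) : Prop :=
  AsymptoticallyDefinable P ∧ WellDirected P

/-- A relation `R ⊆ ℕ^d × ℕ^d` is flattable with respect to the PVAS `V`: it is
contained in `→_{w₁}* ∘ … ∘ →_{w_r}*` for finitely many words of edges. -/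
def Flattable {d : ℕ} (V : PVAS d) (R : Set (PairN d)) : Prop :=
  ∃ ws : List (List V.E),
    ∀ p ∈ R, compList (ws.map fun w => Relation.ReflTransGen (V.StepWord w)) p.1 p.2

/-!
Call a family of runs, each with a source and a target, an amalgamation system if it is
well-quasi-ordered and two runs above a common run `a` can be amalgamated, with their displacements
added. Then the displacements of the runs above `a` form a monoid `P`, and the relation given by the
endpoints of the runs is a finite union of sets `b + P`, one for each minimal run. Single steps and
linear relations have this shape, and it is preserved by unions, compositions, intersections and,
thanks to Higman's lemma, by iteration.

Reachability is built one test level at a time. A sequence of steps splits at the edges of highest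
test level `k`, and the blocks between two of them lead from a configuration whose first `k`
counters vanish to another one. Hence only relations between such configurations need to be
iterated.

Smoothness of the monoids is not stable under these operations. The invariant which is carried
instead is tameness: for every linear subspace `W`, some finitely generated cone lies between the
cone of directions of `P ∩ W` and its algebraic closure. Definability follows by induction on the
dimension, since the two cones can differ only on proper faces. The hard case is the monoid of the
pairs `(u, w)` such that iterated runs lead from `c + u` to `c + w`. There the counters split into
those that can be pumped and those that stay fixed along every relevant path. Forgetting the former
turns paths into closed walks, whose effects generate a tame cone; pumping restores the forgotten
counters in the limit, which is exactly the freedom left by the algebraic closure.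

Flattability is carried along in the following form: given finitely many periods in `P`, a large
enough multiple of their sum makes room for a flat execution of all their combinations.
-/

/-! ### Polyhedral cones -/

section Polyhedral

open PointedCone

variable {𝕜 M N : Type*} [Field 𝕜] [LinearOrder 𝕜] [IsStrictOrderedRing 𝕜]
  [AddCommGroup M] [Module 𝕜 M] [AddCommGroup N] [Module 𝕜 N] {p : M →ₗ[𝕜] N →ₗ[𝕜] 𝕜}

theorem mem_sup_hull_singleton_iff {C : PointedCone 𝕜 N} {g x : N} :
    x ∈ C ⊔ hull 𝕜 {g} ↔ ∃ t : 𝕜, 0 ≤ t ∧ x - t • g ∈ C := by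
  simp only [Submodule.mem_sup, Submodule.mem_span_singleton]
  constructor
  · rintro ⟨y, hy, _, ⟨⟨t, ht⟩, rfl⟩, rfl⟩
    exact ⟨t, ht, by simpa [Nonneg.mk_smul] using hy⟩
  · rintro ⟨t, ht, h⟩
    exact ⟨_, h, _, ⟨⟨t, ht⟩, rfl⟩, by simp [Nonneg.mk_smul]⟩

theorem exists_nonneg_forall_mul_le {ι : Type*} (s : Finset ι) {a b : ι → 𝕜}
    (hzero : ∀ i ∈ s, a i = 0 → 0 ≤ b i) (hpos : ∀ i ∈ s, 0 < a i → 0 ≤ b i)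
    (hcross : ∀ i ∈ s, ∀ j ∈ s, 0 < a i → a j < 0 → a j * b i ≤ a i * b j) :
    ∃ t : 𝕜, 0 ≤ t ∧ ∀ i ∈ s, t * a i ≤ b i := by
  classical
  let lower : Finset 𝕜 := insert 0 ((s.filter (a · < 0)).image fun j => b j / a j)
  have hne : lower.Nonempty := ⟨0, Finset.mem_insert_self _ _⟩
  refine ⟨lower.max' hne, lower.le_max' _ (Finset.mem_insert_self _ _), fun i hi => ?_⟩
  rcases lt_trichotomy (a i) 0 with ha | ha | ha
  · rw [← div_le_iff_of_neg ha]
    exact lower.le_max' _ (Finset.mem_insert_of_mem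
      (Finset.mem_image_of_mem _ (Finset.mem_filter.2 ⟨hi, ha⟩)))
  · simpa [ha] using hzero i hi ha
  · rw [← le_div_iff₀ ha, Finset.max'_le_iff]
    intro y hy
    rcases Finset.mem_insert.1 hy with rfl | hy
    · exact div_nonneg (hpos i hi ha) ha.le
    · obtain ⟨j, hj, rfl⟩ := Finset.mem_image.1 hy
      obtain ⟨hjs, hja⟩ := Finset.mem_filter.1 hj
      rw [le_div_iff₀ ha, div_mul_eq_mul_div, div_le_iff_of_neg hja]
      linarith [hcross i hi j hjs ha hja]

-- Fourier–Motzkin elimination: the constraints of `C ⊔ hull {g}` are the constraints of `C` that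
-- are nonnegative at `g` and the positive combinations of two constraints that vanish at `g`.
theorem dualFG_sup_hull_singleton {C : PointedCone 𝕜 N} (hC : C.DualFG p) (g : N) :
    (C ⊔ hull 𝕜 {g}).DualFG p := by
  classical
  obtain ⟨s, rfl⟩ := hC
  let kept := s.filter fun m => 0 ≤ p m g
  let combined := ((s ×ˢ s).filter fun q => 0 < p q.1 g ∧ p q.2 g < 0).image
    fun q => p q.1 g • q.2 - p q.2 g • q.1
  refine ⟨kept ∪ combined, SetLike.ext fun x => ?_⟩
  have mem_kept {m : M} : m ∈ kept ↔ m ∈ s ∧ 0 ≤ p m g := Finset.mem_filter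
  simp only [mem_sup_hull_singleton_iff, mem_dual, SetLike.mem_coe, map_sub, map_smul,
    smul_eq_mul, sub_nonneg]
  constructor
  · intro h
    have hkept {m : M} (hm : m ∈ s) (hg : 0 ≤ p m g) : 0 ≤ p m x :=
      h (Finset.mem_union_left _ (mem_kept.2 ⟨hm, hg⟩))
    refine exists_nonneg_forall_mul_le s (fun m hm hg => hkept hm hg.ge)
      (fun m hm hg => hkept hm hg.le) fun m hm m' hm' hg hg' => ?_
    simpa using h (Finset.mem_union_right _ (Finset.mem_image.2
      ⟨(m, m'), by simp [hm, hm', hg, hg'], rfl⟩))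
  · rintro ⟨t, ht, h⟩ m hm
    rcases Finset.mem_union.1 hm with hm | hm
    · obtain ⟨hms, hg⟩ := mem_kept.1 hm
      exact (mul_nonneg ht hg).trans (h hms)
    · obtain ⟨⟨m₁, m₂⟩, hq, rfl⟩ := Finset.mem_image.1 hm
      simp only [Finset.mem_filter, Finset.mem_product] at hq
      obtain ⟨⟨hm₁, hm₂⟩, hg₁, hg₂⟩ := hq
      simp only [map_sub, map_smul, LinearMap.sub_apply, LinearMap.smul_apply, smul_eq_mul]
      nlinarith [mul_le_mul_of_nonneg_left (h hm₂) hg₁.le,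
        mul_le_mul_of_nonpos_left (h hm₁) hg₂.le]

theorem dualFG_bot [Module.Finite 𝕜 M] (hp : Function.Injective p.flip) :
    (⊥ : PointedCone 𝕜 N).DualFG p := by
  have hfg : (⊤ : PointedCone 𝕜 M).FG := Module.Finite.fg_top
  convert FG.dual_dualfg p hfg using 1
  simpa using (dual_univ hp).symm

theorem dualFG_of_fg [Module.Finite 𝕜 M] (hp : Function.Injective p.flip) {C : PointedCone 𝕜 N}
    (hC : C.FG) : C.DualFG p := by
  classical
  obtain ⟨G, rfl⟩ := hC
  induction G using Finset.induction_on with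
  | empty => simpa using dualFG_bot hp
  | insert g G _ ih =>
    rw [Finset.coe_insert, Submodule.span_insert, sup_comm]
    exact dualFG_sup_hull_singleton ih g

theorem fg_of_dualFG [Module.Finite 𝕜 M] [Module.Finite 𝕜 N] (hp : Function.Injective p)
    (hp' : Function.Injective p.flip) {C : PointedCone 𝕜 N} (hC : C.DualFG p) : C.FG := by
  obtain ⟨s, rfl⟩ := hC
  obtain ⟨t, ht⟩ := dualFG_of_fg (p := p.flip) hp (Submodule.fg_span (R := {c : 𝕜 // 0 ≤ c})
    s.finite_toSet)
  have hfg : (hull 𝕜 (t : Set N)).FG := Submodule.fg_span t.finite_toSet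
  convert hfg
  rw [← (dualFG_of_fg hp' hfg).dual_dual_flip, dual_hull, ht, dual_hull]

theorem fg_inf_submodule [Module.Finite 𝕜 N] {C : PointedCone 𝕜 N} (hC : C.FG)
    (W : Submodule 𝕜 N) : (C ⊓ (W : PointedCone 𝕜 N)).FG := by
  have hinj : Function.Injective (LinearMap.id (R := 𝕜) (M := Module.Dual 𝕜 N)).flip :=
    Module.eval_apply_injective 𝕜
  have hW : (W : PointedCone 𝕜 N).FG := (IsNoetherian.noetherian W).restrictScalars
  exact fg_of_dualFG Function.injective_id hinj
    ((dualFG_of_fg hinj hC).inf (dualFG_of_fg hinj hW))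

end Polyhedral

/-! ### Tame cones -/

section TameCone

variable {𝕜 E F : Type*} [Field 𝕜] [LinearOrder 𝕜] [IsStrictOrderedRing 𝕜]
  [AddCommGroup E] [Module 𝕜 E] [AddCommGroup F] [Module 𝕜 F]

/-- The algebraic closure of a cone `U`: the points reached along a ray directed by an element
of `U`. -/
def algClosure (U : PointedCone 𝕜 E) : PointedCone 𝕜 E :=
  .ofConeComb {v | ∃ m ∈ U, ∀ ε : 𝕜, 0 < ε → v + ε • m ∈ U} ⟨0, 0, U.zero_mem, by simp⟩ <| by
    rintro x ⟨m, hm, hx⟩ y ⟨n, hn, hy⟩ a ha b hb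
    refine ⟨a • m + b • n, U.add_mem (U.smul_mem ha hm) (U.smul_mem hb hn), fun ε hε => ?_⟩
    convert U.add_mem (U.smul_mem ha (hx ε hε)) (U.smul_mem hb (hy ε hε)) using 1
    module

theorem le_algClosure (U : PointedCone 𝕜 E) : U ≤ algClosure U :=
  fun _ hv => ⟨0, U.zero_mem, fun ε _ => by simpa using hv⟩

theorem algClosure_mono {U U' : PointedCone 𝕜 E} (h : U ≤ U') : algClosure U ≤ algClosure U' :=
  fun _ ⟨m, hm, hv⟩ => ⟨m, h hm, fun ε hε => h (hv ε hε)⟩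

theorem map_algClosure_le (U : PointedCone 𝕜 E) (f : E →ₗ[𝕜] F) :
    (algClosure U).map f ≤ algClosure (U.map f) := by
  rintro _ ⟨v, ⟨m, hm, hv⟩, rfl⟩
  exact ⟨f m, ⟨m, hm, rfl⟩, fun ε hε => ⟨_, hv ε hε, by simp⟩⟩

/-- An element `m` of a cone `U` is an order unit if every element of `U` is dominated by a
multiple of `m`; order units are the algebraic interior points of `U` in its linear span. -/
structure IsOrderUnit (U : PointedCone 𝕜 E) (m : E) : Prop where
  mem : m ∈ U
  exists_smul_sub_mem : ∀ u ∈ U, ∃ N : 𝕜, 0 < N ∧ N • m - u ∈ U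

theorem IsOrderUnit.add_smul_mem {U : PointedCone 𝕜 E} {m v : E} (hm : IsOrderUnit U m)
    (hv : v ∈ algClosure U) {ε : 𝕜} (hε : 0 < ε) : v + ε • m ∈ U := by
  obtain ⟨u, hu, hv⟩ := hv
  obtain ⟨N, hN, hNu⟩ := hm.exists_smul_sub_mem u hu
  have hεN : 0 < ε / N := div_pos hε hN
  convert U.add_mem (hv (ε / N) hεN) (U.smul_mem hεN.le hNu) using 1
  rw [smul_sub, smul_smul, div_mul_cancel₀ _ hN.ne']
  abel

theorem exists_isOrderUnit [FiniteDimensional 𝕜 E] (U : PointedCone 𝕜 E) :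
    ∃ m, IsOrderUnit U m := by
  have hfg : (Submodule.span 𝕜 (U : Set E)).FG := IsNoetherian.noetherian _
  obtain ⟨s, hs, hspan⟩ := (Submodule.fg_span_iff_fg_span_finset_subset (U : Set E)).1 hfg
  refine ⟨∑ b ∈ s, b, U.sum_mem fun b hb => hs hb, fun u hu => ?_⟩
  have hus : u ∈ Submodule.span 𝕜 (s : Set E) := hspan ▸ Submodule.subset_span hu
  obtain ⟨c, -, rfl⟩ := Submodule.mem_span_finset.1 hus
  refine ⟨1 + ∑ b ∈ s, |c b|, by positivity, ?_⟩
  rw [Finset.smul_sum, ← Finset.sum_sub_distrib]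
  refine U.sum_mem fun b hb => ?_
  rw [← sub_smul]
  refine U.smul_mem ?_ (hs hb)
  have hle := Finset.single_le_sum (f := fun b => |c b|) (fun _ _ => abs_nonneg _) hb
  linarith [le_abs_self (c b)]

theorem algClosure_algClosure_le [FiniteDimensional 𝕜 E] (U : PointedCone 𝕜 E) :
    algClosure (algClosure U) ≤ algClosure U := by
  rintro v ⟨m, hm, hv⟩
  obtain ⟨e, he⟩ := exists_isOrderUnit U
  refine ⟨m + e, by simpa using he.add_smul_mem hm one_pos, fun ε hε => ?_⟩
  simpa only [add_assoc, smul_add] using he.add_smul_mem (hv ε hε) hε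

/-- A cone is almost finitely generated if a finitely generated cone lies between it and its
algebraic closure. -/
def IsAlmostFG (U : PointedCone 𝕜 E) : Prop :=
  ∃ K : PointedCone 𝕜 E, K.FG ∧ U ≤ K ∧ K ≤ algClosure U

theorem IsAlmostFG.of_le_of_le_algClosure [FiniteDimensional 𝕜 E] {U U' : PointedCone 𝕜 E}
    (h : IsAlmostFG U') (hle : U ≤ U') (hle' : U' ≤ algClosure U) : IsAlmostFG U := by
  obtain ⟨K, hK, hU'K, hKU'⟩ := h
  exact ⟨K, hK, hle.trans hU'K,
    hKU'.trans ((algClosure_mono hle').trans (algClosure_algClosure_le U))⟩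

theorem IsAlmostFG.map {U : PointedCone 𝕜 E} (h : IsAlmostFG U) (f : E →ₗ[𝕜] F) :
    IsAlmostFG (U.map f) := by
  obtain ⟨K, hK, hUK, hKU⟩ := h
  exact ⟨K.map f, hK.map _, Submodule.map_mono hUK,
    (Submodule.map_mono hKU).trans (map_algClosure_le U f)⟩

/-- A cone is tame if its intersection with every linear subspace is almost finitely generated.
In finite dimension, tame cones are definable. -/
def IsTameCone (U : PointedCone 𝕜 E) : Prop :=
  ∀ W : Submodule 𝕜 E, IsAlmostFG (U ⊓ (W : PointedCone 𝕜 E))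

theorem isTameCone_of_fg [FiniteDimensional 𝕜 E] {K : PointedCone 𝕜 E} (hK : K.FG) :
    IsTameCone K :=
  fun W => ⟨_, fg_inf_submodule hK W, le_rfl, le_algClosure _⟩

namespace IsTameCone

theorem isAlmostFG {U : PointedCone 𝕜 E} (h : IsTameCone U) : IsAlmostFG U := by
  simpa using h ⊤

theorem inf_submodule {U : PointedCone 𝕜 E} (h : IsTameCone U) (W : Submodule 𝕜 E) :
    IsTameCone (U ⊓ (W : PointedCone 𝕜 E)) := by
  intro W'
  simpa only [PointedCone.ofSubmodule_inf, ← inf_assoc] using h (W ⊓ W')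

theorem map {U : PointedCone 𝕜 E} (h : IsTameCone U) (f : E →ₗ[𝕜] F) : IsTameCone (U.map f) := by
  intro W
  convert (h (W.comap f)).map f using 1
  ext y
  constructor
  · rintro ⟨⟨x, hx, rfl⟩, hW⟩
    exact ⟨x, ⟨hx, hW⟩, rfl⟩
  · rintro ⟨x, ⟨hx, hW⟩, rfl⟩
    exact ⟨⟨x, hx, rfl⟩, hW⟩

end IsTameCone

theorem mem_span_cone_iff {U : PointedCone 𝕜 E} {x : E} :
    x ∈ Submodule.span 𝕜 (U : Set E) ↔ ∃ a ∈ U, ∃ b ∈ U, x = a - b := by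
  constructor
  · intro hx
    induction hx using Submodule.span_induction with
    | mem x hx => exact ⟨x, hx, 0, U.zero_mem, (sub_zero x).symm⟩
    | zero => exact ⟨0, U.zero_mem, 0, U.zero_mem, (sub_zero 0).symm⟩
    | add x y _ _ hx hy =>
      obtain ⟨a, ha, b, hb, rfl⟩ := hx
      obtain ⟨a', ha', b', hb', rfl⟩ := hy
      exact ⟨a + a', U.add_mem ha ha', b + b', U.add_mem hb hb', by abel⟩
    | smul c x _ hx =>
      obtain ⟨a, ha, b, hb, rfl⟩ := hx
      rcases le_total 0 c with hc | hc
      · exact ⟨c • a, U.smul_mem hc ha, c • b, U.smul_mem hc hb, smul_sub c a b⟩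
      · have hc' := neg_nonneg.2 hc
        exact ⟨-c • b, U.smul_mem hc' hb, -c • a, U.smul_mem hc' ha, by module⟩
  · rintro ⟨a, ha, b, hb, rfl⟩
    exact sub_mem (Submodule.subset_span ha) (Submodule.subset_span hb)

/-- The cone of all `u ∈ U` which can be completed inside `U` to an element of `T`. -/
def coneSummands (U T : PointedCone 𝕜 E) : PointedCone 𝕜 E :=
  .ofConeComb {u | u ∈ U ∧ ∃ w ∈ U, u + w ∈ T} ⟨0, U.zero_mem, 0, U.zero_mem, by simp⟩ <| by
    rintro x ⟨hx, w, hw, hxw⟩ y ⟨hy, z, hz, hyz⟩ a ha b hb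
    refine ⟨U.add_mem (U.smul_mem ha hx) (U.smul_mem hb hy), a • w + b • z,
      U.add_mem (U.smul_mem ha hw) (U.smul_mem hb hz), ?_⟩
    convert T.add_mem (T.smul_mem ha hxw) (T.smul_mem hb hyz) using 1
    module

theorem coneSummands_eq_inf_span (U T : PointedCone 𝕜 E) :
    coneSummands U T =
      U ⊓ (Submodule.span 𝕜 (coneSummands U T : Set E) : PointedCone 𝕜 E) := by
  refine le_antisymm (fun x hx => ⟨hx.1, Submodule.subset_span hx⟩) ?_
  rintro x ⟨hx, hspan⟩
  obtain ⟨a, ⟨-, w, hw, haw⟩, b, ⟨hb, -⟩, rfl⟩ := mem_span_cone_iff.1 hspan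
  refine ⟨hx, b + w, U.add_mem hb hw, ?_⟩
  convert haw using 1
  abel

namespace IsTameCone

theorem exists_fg_between_inf {U : PointedCone 𝕜 E} (h : IsTameCone U) (T : PointedCone 𝕜 E) :
    ∃ K : PointedCone 𝕜 E, K.FG ∧ T ⊓ U ≤ K ∧
      ∀ x ∈ K, ∃ t ∈ T, ∀ ε : 𝕜, 0 < ε → x + ε • t ∈ U := by
  have hsum := h (Submodule.span 𝕜 (coneSummands U T : Set E))
  rw [← coneSummands_eq_inf_span] at hsum
  obtain ⟨K, hK, hle, hle'⟩ := hsum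
  refine ⟨K, hK, fun t ht => hle ⟨ht.2, 0, U.zero_mem, by simpa using ht.1⟩, fun x hx => ?_⟩
  obtain ⟨m, ⟨-, w, hw, hmw⟩, hx⟩ := hle' hx
  refine ⟨m + w, hmw, fun ε hε => ?_⟩
  rw [smul_add, ← add_assoc]
  exact U.add_mem (hx ε hε).1 (U.smul_mem hε.le hw)

variable [FiniteDimensional 𝕜 E] [FiniteDimensional 𝕜 F]

theorem prod {U : PointedCone 𝕜 E} {U' : PointedCone 𝕜 F} (h : IsTameCone U)
    (h' : IsTameCone U') : IsTameCone (Submodule.prod U U' : PointedCone 𝕜 (E × F)) := by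
  intro W
  set T : PointedCone 𝕜 (E × F) := Submodule.prod U U' ⊓ (W : PointedCone 𝕜 (E × F))
  obtain ⟨K, hK, hTK, hKU⟩ := h.exists_fg_between_inf (T.map (.fst 𝕜 E F))
  obtain ⟨K', hK', hTK', hKU'⟩ := h'.exists_fg_between_inf (T.map (.snd 𝕜 E F))
  refine ⟨_, fg_inf_submodule (hK.prod hK') W, ?_, ?_⟩
  · rintro x ⟨⟨hx, hx'⟩, hW⟩
    have hxT : x ∈ T := ⟨⟨hx, hx'⟩, hW⟩
    exact ⟨⟨hTK ⟨⟨x, hxT, rfl⟩, hx⟩, hTK' ⟨⟨x, hxT, rfl⟩, hx'⟩⟩, hW⟩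
  · rintro x ⟨⟨hx, hx'⟩, hW⟩
    obtain ⟨_, ⟨t, ht, rfl⟩, hxt⟩ := hKU _ hx
    obtain ⟨_, ⟨t', ht', rfl⟩, hxt'⟩ := hKU' _ hx'
    refine ⟨t + t', T.add_mem ht ht', fun ε hε => ⟨⟨?_, ?_⟩, ?_⟩⟩
    · convert U.add_mem (hxt ε hε) (U.smul_mem hε.le ht'.1.1) using 1
      simp [add_assoc]
    · convert U'.add_mem (hxt' ε hε) (U'.smul_mem hε.le ht.1.2) using 1
      simp [add_right_comm, add_assoc]
    · exact W.add_mem hW (W.smul_mem _ (W.add_mem ht.2 ht'.2))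

theorem sup {U U' : PointedCone 𝕜 E} (h : IsTameCone U) (h' : IsTameCone U') :
    IsTameCone (U ⊔ U') := by
  convert (h.prod h').map (LinearMap.coprod .id .id) using 1
  refine Eq.trans ?_ (LinearMap.coprod_map_prod (R := {c : 𝕜 // 0 ≤ c}) .id .id U U').symm
  rw [Submodule.map_id, Submodule.map_id]

theorem iSup {ι : Type*} [Finite ι] {U : ι → PointedCone 𝕜 E} (h : ∀ i, IsTameCone (U i)) :
    IsTameCone (⨆ i, U i) := by
  classical
  cases nonempty_fintype ι
  rw [← Finset.sup_univ_eq_iSup]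
  exact Finset.sup_induction (isTameCone_of_fg Submodule.fg_bot) (fun _ h _ h' => h.sup h')
    fun i _ => h i

theorem comap {U : PointedCone 𝕜 F} (h : IsTameCone U) (f : E →ₗ[𝕜] F) :
    IsTameCone (U.comap f) := by
  have htop : IsTameCone (⊤ : PointedCone 𝕜 E) := isTameCone_of_fg Module.Finite.fg_top
  convert ((htop.prod h).inf_submodule f.graph).map (.fst 𝕜 E F) using 1
  ext x
  constructor
  · intro hx
    exact ⟨(x, f x), ⟨⟨trivial, hx⟩, rfl⟩, rfl⟩
  · rintro ⟨⟨a, b⟩, ⟨⟨-, hb⟩, rfl : b = f a⟩, rfl⟩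
    exact hb

theorem inf {U U' : PointedCone 𝕜 E} (h : IsTameCone U) (h' : IsTameCone U') :
    IsTameCone (U ⊓ U') :=
  (h.prod h').comap (LinearMap.prod .id .id)

end IsTameCone

end TameCone

/-! ### Definability of tame cones -/

namespace IsQDef

variable {d : ℕ}

theorem union {S T : Set (PairQ d)} (hS : IsQDef S) (hT : IsQDef T) : IsQDef (S ∪ T) := by
  simpa only [Set.compl_inter, compl_compl] using (hS.compl.inter hT.compl).compl

theorem univ : IsQDef (Set.univ : Set (PairQ d)) := by
  convert halfspace (d := d) 0 0
  simp

theorem biInter {ι : Type*} (s : Finset ι) {S : ι → Set (PairQ d)} (h : ∀ i ∈ s, IsQDef (S i)) :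
    IsQDef (⋂ i ∈ s, S i) := by
  classical
  induction s using Finset.induction_on with
  | empty => simpa using univ
  | insert a s _ ih =>
    rw [Finset.set_biInter_insert]
    exact (h a (Finset.mem_insert_self a s)).inter
      (ih fun i hi => h i (Finset.mem_insert_of_mem hi))

theorem biUnion {ι : Type*} (s : Finset ι) {S : ι → Set (PairQ d)} (h : ∀ i ∈ s, IsQDef (S i)) :
    IsQDef (⋃ i ∈ s, S i) := by
  simpa only [Set.compl_iInter, compl_compl] using (biInter s fun i hi => (h i hi).compl).compl

theorem setOf_nonneg (l : Module.Dual ℚ (PairQ d)) : IsQDef {x | 0 ≤ l x} := by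
  convert halfspace (d := d)
    (fun i => l (Pi.single i 1, 0), fun i => l (0, Pi.single i 1)) 0 using 4 with x
  have hsplit : x = LinearMap.inl ℚ _ _ x.1 + LinearMap.inr ℚ _ _ x.2 := by simp
  have hfst := LinearMap.pi_apply_eq_sum_univ (l ∘ₗ LinearMap.inl ℚ _ _) x.1
  have hsnd := LinearMap.pi_apply_eq_sum_univ (l ∘ₗ LinearMap.inr ℚ _ _) x.2
  have hsingle (i : Fin d) : (fun j => if i = j then (1 : ℚ) else 0) = Pi.single i 1 := by
    ext j
    simp [Pi.single_apply, eq_comm]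
  simp only [LinearMap.comp_apply, hsingle, smul_eq_mul] at hfst hsnd
  conv_lhs => rw [hsplit, map_add, hfst, hsnd]
  simp [mul_comm]

theorem setOf_pos (l : Module.Dual ℚ (PairQ d)) : IsQDef {x | 0 < l x} := by
  convert (setOf_nonneg (-l)).compl using 1
  ext x
  simp

end IsQDef

section TameConeDefinable

open Filter Topology

theorem exists_pos_forall_nonneg_sub_smul {E : Type*} [AddCommGroup E] [Module ℚ E]
    {s : Finset (E →ₗ[ℚ] ℚ)} {v : E} (hv : ∀ l ∈ s, 0 < l v) (m : E) :
    ∃ δ : ℚ, 0 < δ ∧ ∀ l ∈ s, 0 ≤ l (v - δ • m) := by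
  have hnhds : ∀ᶠ δ in 𝓝 (0 : ℚ), ∀ l ∈ s, 0 < l v - δ * l m := by
    refine (eventually_all_finset s).2 fun l hl => ?_
    have hcont : Continuous fun δ : ℚ => l v - δ * l m := by fun_prop
    exact hcont.tendsto 0 |>.eventually_const_lt (by simpa using hv l hl)
  obtain ⟨δ, hδ, hpos⟩ := ((hnhds.filter_mono nhdsWithin_le_nhds).and
    (self_mem_nhdsWithin (s := Set.Ioi 0))).exists
  exact ⟨δ, hpos, fun l hl => by simpa using (hδ l hl).le⟩

theorem mem_of_forall_nonneg_of_forall_pos {E : Type*} [AddCommGroup E] [Module ℚ E]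
    [FiniteDimensional ℚ E] {T : PointedCone ℚ E} {s : Finset (E →ₗ[ℚ] ℚ)}
    (hs : ∀ v, (∀ l ∈ s, 0 ≤ l v) → v ∈ algClosure T) {v : E} (hnonneg : ∀ l ∈ s, 0 ≤ l v)
    (hpos : ∀ l ∈ s, (∃ t ∈ T, l t ≠ 0) → 0 < l v) : v ∈ T := by
  classical
  obtain ⟨m, hm⟩ := exists_isOrderUnit T
  obtain ⟨δ, hδ, hδv⟩ := exists_pos_forall_nonneg_sub_smul
    (s := s.filter fun l => ∃ t ∈ T, l t ≠ 0) (by simpa using hpos) m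
  suffices h : v - δ • m ∈ algClosure T by simpa using hm.add_smul_mem h hδ
  refine hs _ fun l hl => ?_
  by_cases hl' : ∃ t ∈ T, l t ≠ 0
  · exact hδv l (Finset.mem_filter.2 ⟨hl, hl'⟩)
  · push Not at hl'
    simpa [hl' m hm.mem] using hnonneg l hl

open scoped Classical in
theorem coe_eq_inter_union_faces {E : Type*} [AddCommGroup E] [Module ℚ E] [FiniteDimensional ℚ E]
    {T : PointedCone ℚ E} {s : Finset (E →ₗ[ℚ] ℚ)} (hT : ∀ v ∈ T, ∀ l ∈ s, 0 ≤ l v)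
    (hs : ∀ v, (∀ l ∈ s, 0 ≤ l v) → v ∈ algClosure T) :
    (T : Set E) =
      ((⋂ l ∈ s, {x | 0 ≤ l x}) ∩ ⋂ l ∈ s.filter fun l => ∃ t ∈ T, l t ≠ 0, {x | 0 < l x}) ∪
      ⋃ l ∈ s.filter fun l => ∃ t ∈ T, l t ≠ 0, {x | x ∈ T ∧ l x = 0} := by
  ext v
  simp only [Set.mem_union, Set.mem_inter_iff, Set.mem_iInter, Set.mem_ofPred_eq, Set.mem_iUnion]
  constructor
  · intro hv
    by_cases hz : ∃ l ∈ s, (∃ t ∈ T, l t ≠ 0) ∧ l v = 0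
    · obtain ⟨l, hl, hlT, hz⟩ := hz
      exact Or.inr ⟨l, Finset.mem_filter.2 ⟨hl, hlT⟩, hv, hz⟩
    · push Not at hz
      refine Or.inl ⟨hT v hv, fun l hl => ?_⟩
      obtain ⟨hl, t, ht, hlt⟩ := Finset.mem_filter.1 hl
      exact (hT v hv l hl).lt_of_ne' (hz l hl ⟨t, ht, hlt⟩)
  · rintro (⟨hnonneg, hpos⟩ | ⟨l, -, hv, -⟩)
    · exact mem_of_forall_nonneg_of_forall_pos hs hnonneg
        fun l hl hl' => hpos l (Finset.mem_filter.2 ⟨hl, hl'⟩)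
    · exact hv

theorem IsTameCone.isQDef {d : ℕ} {T : PointedCone ℚ (PairQ d)} (h : IsTameCone T) :
    IsQDef (T : Set (PairQ d)) := by
  classical
  induction hX : Submodule.span ℚ (T : Set (PairQ d)) using WellFoundedLT.induction
    generalizing T with
  | ind X ih =>
  subst hX
  obtain ⟨K, hK, hTK, hKT⟩ := h.isAlmostFG
  have hinj : Function.Injective (LinearMap.id (R := ℚ) (M := Module.Dual ℚ (PairQ d))).flip :=
    Module.eval_apply_injective ℚ
  obtain ⟨s : Finset (PairQ d →ₗ[ℚ] ℚ), rfl⟩ := dualFG_of_fg hinj hK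
  rw [coe_eq_inter_union_faces (s := s) (fun v hv l hl => hTK hv hl)
    fun v hv => hKT fun l hl => hv l hl]
  refine ((IsQDef.biInter _ fun l _ => .setOf_nonneg l).inter
    (IsQDef.biInter _ fun l _ => .setOf_pos l)).union (IsQDef.biUnion _ fun l hl => ?_)
  obtain ⟨-, t, ht, hlt⟩ := Finset.mem_filter.1 hl
  refine ih _ (lt_of_le_of_ne (Submodule.span_mono Set.inter_subset_left) fun heq => hlt ?_)
    (h.inf_submodule (LinearMap.ker l)) rfl
  have hker : Submodule.span ℚ ((T : Set (PairQ d)) ∩ LinearMap.ker l) ≤ LinearMap.ker l :=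
    Submodule.span_le.2 fun x hx => hx.2
  exact hker (heq ▸ Submodule.subset_span ht)

end TameConeDefinable

/-! ### Tame monoids -/

section Monoid

variable {E F : Type*} [AddCommGroup E] [Module ℚ E] [AddCommGroup F] [Module ℚ F]

theorem den_nsmul_smul {c : ℚ} (hc : 0 ≤ c) (v : E) : c.den • c • v = c.num.toNat • v := by
  have hnum : (c.num.toNat : ℚ) = c.num := mod_cast Int.toNat_of_nonneg (Rat.num_nonneg.2 hc)
  rw [← Nat.cast_smul_eq_nsmul ℚ, ← Nat.cast_smul_eq_nsmul ℚ, smul_smul, Rat.den_mul_eq_num, hnum]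

theorem mem_of_nsmul_mem {W : Submodule ℚ E} {n : ℕ} (hn : 0 < n) {v : E} (h : n • v ∈ W) :
    v ∈ W := by
  rw [← Nat.cast_smul_eq_nsmul ℚ] at h
  exact (W.smul_mem_iff (by positivity)).1 h

theorem mem_hull_coe_iff {P : AddSubmonoid E} {v : E} :
    v ∈ PointedCone.hull ℚ (P : Set E) ↔ ∃ n : ℕ, 0 < n ∧ n • v ∈ P := by
  constructor
  · intro hv
    induction hv using Submodule.span_induction with
    | mem x hx => exact ⟨1, one_pos, by simpa using hx⟩
    | zero => exact ⟨1, one_pos, by simp⟩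
    | add x y _ _ hx hy =>
      obtain ⟨n, hn, hx⟩ := hx
      obtain ⟨m, hm, hy⟩ := hy
      refine ⟨n * m, by positivity, ?_⟩
      convert P.add_mem (P.nsmul_mem hx m) (P.nsmul_mem hy n) using 1
      module
    | smul c x _ hx =>
      obtain ⟨n, hn, hx⟩ := hx
      refine ⟨n * c.1.den, by positivity, ?_⟩
      convert P.nsmul_mem hx c.1.num.toNat using 1
      rw [mul_smul, Nonneg.mk_smul, den_nsmul_smul c.2, smul_comm]
  · rintro ⟨n, hn, hv⟩
    have hsmul := (PointedCone.hull ℚ (P : Set E)).smul_mem (show (0 : ℚ) ≤ (n : ℚ)⁻¹ by positivity)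
      (Submodule.subset_span hv)
    rwa [← Nat.cast_smul_eq_nsmul ℚ, inv_smul_smul₀ (by positivity)] at hsmul

/-- The cone of directions of a monoid `P`: the vectors `v` such that `P` contains an infinite
arithmetic progression whose difference is a positive multiple of `v`. -/
def dirCone (P : AddSubmonoid E) : PointedCone ℚ E where
  carrier := {v | ∃ n : ℕ, 0 < n ∧ ∃ x : E, ∀ k : ℕ, x + (k * n) • v ∈ P}
  zero_mem' := ⟨1, one_pos, 0, by simp⟩
  add_mem' := by
    rintro a b ⟨n, hn, x, hx⟩ ⟨m, hm, y, hy⟩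
    refine ⟨n * m, by positivity, x + y, fun k => ?_⟩
    convert P.add_mem (hx (k * m)) (hy (k * n)) using 1
    module
  smul_mem' := by
    rintro ⟨c, hc⟩ v ⟨n, hn, x, hx⟩
    refine ⟨n * c.den, by positivity, x, fun k => ?_⟩
    convert hx (k * c.num.toNat) using 2
    rw [Nonneg.mk_smul, ← mul_assoc, mul_smul, den_nsmul_smul hc, ← mul_smul, mul_right_comm]

theorem dirCone_mono {P Q : AddSubmonoid E} (h : P ≤ Q) : dirCone P ≤ dirCone Q :=
  fun _ ⟨n, hn, x, hx⟩ => ⟨n, hn, x, fun k => h (hx k)⟩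

theorem dirCone_inf_submodule_le (P : AddSubmonoid E) (W : Submodule ℚ E) :
    dirCone (P ⊓ W.toAddSubmonoid) ≤ W := by
  rintro v ⟨n, hn, x, hx⟩
  have hsub : (x + (1 * n) • v) - (x + (0 * n) • v) ∈ W := W.sub_mem (hx 1).2 (hx 0).2
  exact mem_of_nsmul_mem hn (by simpa using hsub)

theorem hull_inf_submodule (P : AddSubmonoid E) (W : Submodule ℚ E) :
    PointedCone.hull ℚ ((P ⊓ W.toAddSubmonoid : AddSubmonoid E) : Set E) =
      PointedCone.hull ℚ (P : Set E) ⊓ (W : PointedCone ℚ E) := by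
  ext v
  simp only [Submodule.mem_inf, mem_hull_coe_iff]
  constructor
  · rintro ⟨n, hn, hP, hW⟩
    exact ⟨⟨n, hn, hP⟩, mem_of_nsmul_mem hn hW⟩
  · rintro ⟨⟨n, hn, hP⟩, hW⟩
    exact ⟨n, hn, hP, W.nsmul_mem hW n⟩

theorem hull_le_dirCone (P : AddSubmonoid E) : PointedCone.hull ℚ (P : Set E) ≤ dirCone P := by
  intro v hv
  obtain ⟨n, hn, hv⟩ := mem_hull_coe_iff.1 hv
  exact ⟨n, hn, 0, fun k => by simpa [mul_smul] using P.nsmul_mem hv k⟩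

theorem dirCone_le_algClosure_hull (P : AddSubmonoid E) :
    dirCone P ≤ algClosure (PointedCone.hull ℚ (P : Set E)) := by
  rintro v ⟨n, hn, x, hx⟩
  have hxP : x ∈ PointedCone.hull ℚ (P : Set E) :=
    Submodule.subset_span (by simpa using hx 0)
  refine ⟨x, hxP, fun ε hε => ?_⟩
  obtain ⟨k, hk⟩ := exists_nat_gt (1 / ε)
  have hk0 : (0 : ℚ) < k := lt_trans (by positivity) hk
  have hn1 : (1 : ℚ) ≤ n := mod_cast hn
  have hkn : (0 : ℚ) < ((k * n : ℕ) : ℚ) := by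
    push_cast
    positivity
  have hcoeff : 0 ≤ ε - ((k * n : ℕ) : ℚ)⁻¹ := by
    rw [div_lt_iff₀ hε] at hk
    rw [sub_nonneg, inv_le_iff_one_le_mul₀ hkn]
    push_cast
    nlinarith
  have hpoint : ((k * n : ℕ) : ℚ)⁻¹ • (x + (k * n) • v) ∈ PointedCone.hull ℚ (P : Set E) :=
    PointedCone.smul_mem _ (inv_nonneg.2 hkn.le) (Submodule.subset_span (hx k))
  convert Submodule.add_mem _ hpoint (PointedCone.smul_mem _ hcoeff hxP) using 1
  rw [smul_add, ← Nat.cast_smul_eq_nsmul ℚ, inv_smul_smul₀ hkn.ne']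
  module

/-- A monoid is well-directed if every sequence of its elements has a subsequence along which all
rays from an element through a later one stay in the monoid. -/
def IsWellDirected {M : Type*} [AddCommGroup M] (P : AddSubmonoid M) : Prop :=
  ∀ p : ℕ → M, (∀ m, p m ∈ P) → ∃ φ : ℕ → ℕ, StrictMono φ ∧
    ∀ j k, j ≤ k → ∀ t : ℕ, p (φ j) + t • (p (φ k) - p (φ j)) ∈ P

namespace IsWellDirected

variable {M N : Type*} [AddCommGroup M] [AddCommGroup N] {P : AddSubmonoid M}

theorem inf_addSubgroup (h : IsWellDirected P) (W : AddSubgroup M) :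
    IsWellDirected (P ⊓ W.toAddSubmonoid) := by
  intro p hp
  obtain ⟨φ, hφ, hray⟩ := h p fun m => (hp m).1
  exact ⟨φ, hφ, fun j k hjk t => ⟨hray j k hjk t,
    W.add_mem (hp _).2 (W.nsmul_mem (W.sub_mem (hp _).2 (hp _).2) t)⟩⟩

theorem map (h : IsWellDirected P) (f : M →+ N) : IsWellDirected (P.map f) := by
  intro p hp
  choose q hq hqp using hp
  obtain ⟨φ, hφ, hray⟩ := h q hq
  exact ⟨φ, hφ, fun j k hjk t => ⟨_, hray j k hjk t, by simp [hqp]⟩⟩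

theorem prod {Q : AddSubmonoid N} (h : IsWellDirected P) (h' : IsWellDirected Q) :
    IsWellDirected (P.prod Q) := by
  intro p hp
  obtain ⟨φ, hφ, hray⟩ := h (fun m => (p m).1) fun m => (hp m).1
  obtain ⟨ψ, hψ, hray'⟩ := h' (fun m => (p (φ m)).2) fun m => (hp _).2
  exact ⟨φ ∘ ψ, hφ.comp hψ, fun j k hjk t => ⟨hray _ _ (hψ.monotone hjk) t, hray' j k hjk t⟩⟩

end IsWellDirected

theorem dirCone_map {P : AddSubmonoid E} (h : IsWellDirected P) (f : E →ₗ[ℚ] F) :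
    dirCone (P.map (f : E →+ F)) = (dirCone P).map f := by
  apply le_antisymm
  · rintro v ⟨n, hn, x, hx⟩
    choose q hq hqx using hx
    obtain ⟨φ, hφ, hray⟩ := h q hq
    have hlt : φ 0 < φ 1 := hφ one_pos
    have hdir : q (φ 1) - q (φ 0) ∈ dirCone P :=
      ⟨1, one_pos, q (φ 0), fun k => by simpa using hray 0 1 zero_le_one k⟩
    have himage : f (q (φ 1) - q (φ 0)) = (((φ 1 - φ 0) * n : ℕ) : ℚ) • v := by
      have h₀ : f (q (φ 0)) = _ := hqx (φ 0)
      have h₁ : f (q (φ 1)) = _ := hqx (φ 1)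
      rw [map_sub, h₀, h₁, Nat.cast_mul, Nat.cast_sub hlt.le]
      module
    have hpos : (0 : ℚ) < ((φ 1 - φ 0) * n : ℕ) := by
      exact_mod_cast Nat.mul_pos (Nat.sub_pos_of_lt hlt) hn
    refine ⟨_, (dirCone P).smul_mem (inv_nonneg.2 hpos.le) hdir, ?_⟩
    simpa [himage] using inv_smul_smul₀ hpos.ne' v
  · rintro _ ⟨u, ⟨n, hn, x, hx⟩, rfl⟩
    exact ⟨n, hn, f x, fun k => ⟨_, hx k, by simp⟩⟩

/-- The submonoid of all `u ∈ P` which can be completed inside `P` to an element of `T`. -/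
def summands (P T : AddSubmonoid E) : AddSubmonoid E where
  carrier := {u | u ∈ P ∧ ∃ w ∈ P, u + w ∈ T}
  zero_mem' := ⟨P.zero_mem, 0, P.zero_mem, by simp⟩
  add_mem' := by
    rintro a b ⟨ha, w, hw, haw⟩ ⟨hb, z, hz, hbz⟩
    refine ⟨P.add_mem ha hb, w + z, P.add_mem hw hz, ?_⟩
    rw [add_add_add_comm]
    exact T.add_mem haw hbz

theorem exists_nsmul_eq_sub_of_mem_span {P : AddSubmonoid E} {x : E}
    (hx : x ∈ Submodule.span ℚ (P : Set E)) :
    ∃ n : ℕ, 0 < n ∧ ∃ a ∈ P, ∃ b ∈ P, n • x = a - b := by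
  obtain ⟨a, ha, b, hb, rfl⟩ := mem_span_cone_iff.1 <|
    Submodule.span_mono (Submodule.subset_span (R := {c : ℚ // 0 ≤ c}) (s := (P : Set E))) hx
  obtain ⟨n, hn, ha⟩ := mem_hull_coe_iff.1 ha
  obtain ⟨m, hm, hb⟩ := mem_hull_coe_iff.1 hb
  refine ⟨n * m, by positivity, _, P.nsmul_mem ha m, _, P.nsmul_mem hb n, ?_⟩
  module

theorem summands_eq_inf_span (P T : AddSubmonoid E) :
    summands P T = P ⊓ (Submodule.span ℚ (summands P T : Set E)).toAddSubmonoid := by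
  refine le_antisymm (fun x hx => ⟨hx.1, Submodule.subset_span hx⟩) ?_
  rintro x ⟨hx, hspan⟩
  obtain ⟨n, hn, a, ⟨-, w, hw, haw⟩, b, ⟨hb, -⟩, hab⟩ := exists_nsmul_eq_sub_of_mem_span hspan
  refine ⟨hx, (n - 1) • x + b + w, P.add_mem (P.add_mem (P.nsmul_mem hx _) hb) hw, ?_⟩
  convert haw using 1
  rw [← add_assoc, ← add_assoc, ← succ_nsmul', Nat.sub_add_cancel hn, hab, sub_add_cancel]

theorem dirCone_prod_inf_submodule (P : AddSubmonoid E) (P' : AddSubmonoid F)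
    (W : Submodule ℚ (E × F)) :
    dirCone (P.prod P' ⊓ W.toAddSubmonoid) =
      Submodule.prod
        (dirCone (summands P ((P.prod P' ⊓ W.toAddSubmonoid).map (AddMonoidHom.fst E F))))
        (dirCone (summands P' ((P.prod P' ⊓ W.toAddSubmonoid).map (AddMonoidHom.snd E F)))) ⊓
      (W : PointedCone ℚ (E × F)) := by
  apply le_antisymm
  · intro v hv
    refine ⟨?_, dirCone_inf_submodule_le _ _ hv⟩
    obtain ⟨n, hn, x, hx⟩ := hv
    refine ⟨⟨n, hn, x.1, fun k => ⟨(hx k).1.1, 0, P.zero_mem, ?_⟩⟩,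
      ⟨n, hn, x.2, fun k => ⟨(hx k).1.2, 0, P'.zero_mem, ?_⟩⟩⟩ <;>
    · rw [add_zero]
      exact ⟨_, hx k, rfl⟩
  · rintro ⟨v, v'⟩ ⟨⟨⟨n, hn, x, hx⟩, ⟨n', hn', x', hx'⟩⟩, hW⟩
    obtain ⟨w, hw, m, hm, hmx : m.1 = _⟩ := (hx 0).2
    obtain ⟨w', hw', m', hm', hmx' : m'.2 = _⟩ := (hx' 0).2
    refine ⟨n * n', by positivity, m + m', fun k => ⟨⟨?_, ?_⟩, ?_⟩⟩
    · change m.1 + m'.1 + (k * (n * n')) • v ∈ P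
      convert P.add_mem (P.add_mem (hx (k * n')).1 hw) hm'.1.1 using 1
      rw [hmx]
      module
    · change m.2 + m'.2 + (k * (n * n')) • v' ∈ P'
      convert P'.add_mem (P'.add_mem (hx' (k * n)).1 hw') hm.1.2 using 1
      rw [hmx']
      module
    · exact W.add_mem (W.add_mem hm.2 hm'.2) (W.nsmul_mem hW _)

/-- A monoid is tame if it is well-directed and the directions of its intersection with any linear
subspace form a tame cone. Tame monoids are smooth, and unlike smooth ones they are closed under
intersection. -/
structure IsTame (P : AddSubmonoid E) : Prop where
  isWellDirected : IsWellDirected P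
  isTameCone_dirCone_inf (W : Submodule ℚ E) : IsTameCone (dirCone (P ⊓ W.toAddSubmonoid))

namespace IsTame

variable {P Q : AddSubmonoid E}

theorem isTameCone_dirCone (h : IsTame P) : IsTameCone (dirCone P) := by
  simpa using h.isTameCone_dirCone_inf ⊤

theorem isTameCone_hull [FiniteDimensional ℚ E] (h : IsTame P) :
    IsTameCone (PointedCone.hull ℚ (P : Set E)) := by
  intro W
  rw [← hull_inf_submodule]
  exact (h.isTameCone_dirCone_inf W).isAlmostFG.of_le_of_le_algClosure (hull_le_dirCone _)
    (dirCone_le_algClosure_hull _)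

theorem inf_submodule (h : IsTame P) (W : Submodule ℚ E) : IsTame (P ⊓ W.toAddSubmonoid) where
  isWellDirected := h.isWellDirected.inf_addSubgroup W.toAddSubgroup
  isTameCone_dirCone_inf W' := by
    rw [inf_assoc]
    exact h.isTameCone_dirCone_inf (W ⊓ W')

theorem isTameCone_dirCone_summands (h : IsTame P) (T : AddSubmonoid E) :
    IsTameCone (dirCone (summands P T)) := by
  rw [summands_eq_inf_span]
  exact h.isTameCone_dirCone_inf _

theorem map (h : IsTame P) (f : E →ₗ[ℚ] F) : IsTame (P.map (f : E →+ F)) where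
  isWellDirected := h.isWellDirected.map _
  isTameCone_dirCone_inf W := by
    convert (h.isTameCone_dirCone_inf (W.comap f)).map f using 1
    rw [← dirCone_map (h.inf_submodule _).isWellDirected]
    congr 1
    ext y
    constructor
    · rintro ⟨⟨x, hx, rfl⟩, hW⟩
      exact ⟨x, ⟨hx, hW⟩, rfl⟩
    · rintro ⟨x, ⟨hx, hW⟩, rfl⟩
      exact ⟨⟨x, hx, rfl⟩, hW⟩

variable [FiniteDimensional ℚ E] [FiniteDimensional ℚ F]

theorem prod {P' : AddSubmonoid F} (h : IsTame P) (h' : IsTame P') : IsTame (P.prod P') where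
  isWellDirected := h.isWellDirected.prod h'.isWellDirected
  isTameCone_dirCone_inf W := by
    rw [dirCone_prod_inf_submodule]
    exact ((h.isTameCone_dirCone_summands _).prod (h'.isTameCone_dirCone_summands _)).inf_submodule
      W

theorem inf (h : IsTame P) (h' : IsTame Q) : IsTame (P ⊓ Q) := by
  convert ((h.prod h').inf_submodule (LinearMap.eqLocus (.fst ℚ E E) (.snd ℚ E E))).map
    (.fst ℚ E E) using 1
  ext x
  constructor
  · rintro ⟨hP, hQ⟩
    exact ⟨(x, x), ⟨⟨hP, hQ⟩, rfl⟩, rfl⟩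
  · rintro ⟨⟨a, b⟩, ⟨⟨hP, hQ⟩, rfl : a = b⟩, rfl⟩
    exact ⟨hP, hQ⟩

end IsTame

/-- The composition of two submonoids viewed as relations. -/
def relComp {X Y Z : Type*} [AddCommMonoid X] [AddCommMonoid Y] [AddCommMonoid Z]
    (P : AddSubmonoid (X × Y)) (Q : AddSubmonoid (Y × Z)) : AddSubmonoid (X × Z) where
  carrier := {p | ∃ y, (p.1, y) ∈ P ∧ (y, p.2) ∈ Q}
  zero_mem' := ⟨0, P.zero_mem, Q.zero_mem⟩
  add_mem' := by
    rintro a b ⟨y, hP, hQ⟩ ⟨y', hP', hQ'⟩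
    exact ⟨y + y', P.add_mem hP hP', Q.add_mem hQ hQ'⟩

theorem IsTame.relComp {G : Type*} [AddCommGroup G] [Module ℚ G] [FiniteDimensional ℚ E]
    [FiniteDimensional ℚ F] [FiniteDimensional ℚ G] {P : AddSubmonoid (E × F)}
    {Q : AddSubmonoid (F × G)} (h : IsTame P) (h' : IsTame Q) : IsTame (relComp P Q) := by
  let middle : Submodule ℚ ((E × F) × F × G) :=
    LinearMap.eqLocus (.snd ℚ E F ∘ₗ .fst ℚ _ _) (.fst ℚ F G ∘ₗ .snd ℚ _ _)
  convert ((h.prod h').inf_submodule middle).map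
    (LinearMap.prodMap (.fst ℚ E F) (.snd ℚ F G)) using 1
  ext ⟨x, z⟩
  constructor
  · rintro ⟨y, hP, hQ⟩
    exact ⟨((x, y), (y, z)), ⟨⟨hP, hQ⟩, rfl⟩, rfl⟩
  · rintro ⟨⟨⟨a, b⟩, ⟨b', c⟩⟩, ⟨⟨hP, hQ⟩, rfl : b = b'⟩, hac⟩
    obtain ⟨rfl, rfl⟩ := Prod.ext_iff.1 hac
    exact ⟨b, hP, hQ⟩

end Monoid

/-! ### The monoid of natural vectors -/

section NatOrthant

variable {ι : Type*}

/-- The coordinatewise embedding of natural vectors into rational vectors. -/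
def castVec : (ι → ℕ) →+ (ι → ℚ) := (Nat.castAddMonoidHom ℚ).compLeft ι

@[simp]
theorem castVec_apply (n : ι → ℕ) (i : ι) : castVec n i = n i := rfl

theorem castVec_injective : Function.Injective (castVec (ι := ι)) :=
  Nat.cast_injective.comp_left

theorem castVec_le_castVec {m n : ι → ℕ} : castVec m ≤ castVec n ↔ m ≤ n := by
  simp [Pi.le_def]

theorem castVec_sub {m n : ι → ℕ} (h : m ≤ n) : castVec (n - m) = castVec n - castVec m :=
  funext fun i => Nat.cast_sub (h i)

variable (ι) in
/-- The monoid `ℕ^ι` of natural vectors, inside `ℚ^ι`. -/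
def natOrthant : AddSubmonoid (ι → ℚ) := AddMonoidHom.mrange castVec

theorem castVec_mem_natOrthant (n : ι → ℕ) : castVec n ∈ natOrthant ι := ⟨n, rfl⟩

theorem nonneg_of_mem_natOrthant {x : ι → ℚ} (hx : x ∈ natOrthant ι) : 0 ≤ x := by
  obtain ⟨n, rfl⟩ := hx
  exact fun i => Nat.cast_nonneg _

theorem sub_mem_natOrthant {x y : ι → ℚ} (hx : x ∈ natOrthant ι) (hy : y ∈ natOrthant ι)
    (h : x ≤ y) : y - x ∈ natOrthant ι := by
  obtain ⟨m, rfl⟩ := hx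
  obtain ⟨n, rfl⟩ := hy
  exact ⟨n - m, castVec_sub (castVec_le_castVec.1 h)⟩

/-- The vectors vanishing on a set of coordinates. -/
def zeroOn (s : Set ι) : Submodule ℚ (ι → ℚ) where
  carrier := {x | ∀ i ∈ s, x i = 0}
  zero_mem' := fun _ _ => rfl
  add_mem' hx hy i hi := by simp [hx i hi, hy i hi]
  smul_mem' c x hx i hi := by simp [hx i hi]

/-- The natural vectors whose first `k` counters are zero. -/
def natZero (d k : ℕ) : AddSubmonoid (Fin d → ℚ) :=
  natOrthant (Fin d) ⊓ (zeroOn {i : Fin d | (i : ℕ) < k}).toAddSubmonoid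

theorem natZero_antitone (d : ℕ) : Antitone (natZero d) :=
  fun _ _ hk _ hx => ⟨hx.1, fun i hi => hx.2 i (lt_of_lt_of_le hi hk)⟩

theorem sub_mem_natZero {d k : ℕ} {x y : Fin d → ℚ} (hx : x ∈ natZero d k) (hy : y ∈ natZero d k)
    (h : x ≤ y) : y - x ∈ natZero d k :=
  ⟨sub_mem_natOrthant hx.1 hy.1 h, Submodule.sub_mem _ hy.2 hx.2⟩

theorem algClosure_positive_le :
    algClosure (PointedCone.positive ℚ (ι → ℚ)) ≤ PointedCone.positive ℚ (ι → ℚ) := by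
  rintro v ⟨u, hu, hv⟩ i
  have hui : 0 ≤ u i := hu i
  by_contra! hneg
  have hneg : v i < 0 := hneg
  have hi : 0 ≤ v i + -v i / (u i + 1) * u i :=
    hv (-v i / (u i + 1)) (div_pos (neg_pos.2 hneg) (by positivity)) i
  have heq : v i + -v i / (u i + 1) * u i = v i / (u i + 1) := by
    field_simp
    ring
  exact absurd (heq ▸ hi) (div_neg_of_neg_of_pos hneg (by positivity)).not_ge

variable [Finite ι]

theorem isWellDirected_natOrthant : IsWellDirected (natOrthant ι) := by
  intro p hp
  choose q hq using hp
  obtain rfl : castVec ∘ q = p := funext hq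
  obtain ⟨φ, hφ⟩ := (wellQuasiOrdered_le (α := ι → ℕ)).exists_monotone_subseq q
  refine ⟨φ, φ.strictMono, fun j k hjk t => add_mem (castVec_mem_natOrthant _) (nsmul_mem ?_ t)⟩
  exact sub_mem_natOrthant ⟨_, rfl⟩ ⟨_, rfl⟩ (castVec_le_castVec.2 (hφ j k hjk))

theorem positive_le_hull_single [DecidableEq ι] : PointedCone.positive ℚ (ι → ℚ) ≤
    PointedCone.hull ℚ (Set.range fun i => (Pi.single i 1 : ι → ℚ)) := by
  cases nonempty_fintype ι
  intro x (hx : 0 ≤ x)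
  rw [pi_eq_sum_univ' x]
  exact sum_mem fun i _ => PointedCone.smul_mem _ (hx i) (Submodule.subset_span ⟨i, rfl⟩)

theorem hull_natOrthant :
    PointedCone.hull ℚ (natOrthant ι : Set (ι → ℚ)) = PointedCone.positive ℚ (ι → ℚ) := by
  classical
  apply le_antisymm
  · exact Submodule.span_le.2 fun x hx => nonneg_of_mem_natOrthant hx
  · refine positive_le_hull_single.trans (Submodule.span_mono ?_)
    rintro _ ⟨i, rfl⟩
    exact ⟨Pi.single i 1, by ext j; simp [Pi.single_apply]⟩

theorem fg_positive : (PointedCone.positive ℚ (ι → ℚ)).FG := by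
  classical
  have hrange : (Set.range fun i => (Pi.single i 1 : ι → ℚ)).Finite := Set.finite_range _
  refine ⟨hrange.toFinset, le_antisymm (Submodule.span_le.2 ?_) ?_⟩
  · rw [Set.Finite.coe_toFinset]
    rintro _ ⟨i, rfl⟩
    exact Pi.single_nonneg.2 zero_le_one
  · rw [Set.Finite.coe_toFinset]
    exact positive_le_hull_single

theorem dirCone_natOrthant_inf (W : Submodule ℚ (ι → ℚ)) :
    dirCone (natOrthant ι ⊓ W.toAddSubmonoid) =
      PointedCone.positive ℚ (ι → ℚ) ⊓ (W : PointedCone ℚ (ι → ℚ)) := by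
  apply le_antisymm
  · refine le_inf ?_ (dirCone_inf_submodule_le _ _)
    refine (dirCone_mono inf_le_left).trans ((dirCone_le_algClosure_hull _).trans ?_)
    rw [hull_natOrthant]
    exact algClosure_positive_le
  · rw [← hull_natOrthant, ← hull_inf_submodule]
    exact hull_le_dirCone _

theorem isTame_natOrthant : IsTame (natOrthant ι) where
  isWellDirected := isWellDirected_natOrthant
  isTameCone_dirCone_inf W := by
    rw [dirCone_natOrthant_inf]
    exact (isTameCone_of_fg fg_positive).inf_submodule W

theorem isTame_closure_range {E : Type*} [AddCommGroup E] [Module ℚ E] (g : ι → E) :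
    IsTame (AddSubmonoid.closure (Set.range g)) := by
  cases nonempty_fintype ι
  have hclosure : AddSubmonoid.closure (Set.range g) =
      (natOrthant ι).map (Fintype.linearCombination ℚ g : (ι → ℚ) →+ E) := by
    ext x
    rw [AddSubmonoid.mem_closure_range_iff_of_fintype, natOrthant, AddMonoidHom.map_mrange]
    simp [Fintype.linearCombination_apply, Nat.cast_smul_eq_nsmul, eq_comm]
  rw [hclosure]
  exact isTame_natOrthant.map _

end NatOrthant

/-! ### Flat words -/

section Flat

variable {d : ℕ} {V : PVAS d}

variable (V) in
/-- The relation `→_{w₁}* ∘ … ∘ →_{w_r}*` given by a list of words. -/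
def FlatReach (ws : List (List V.E)) (x y : NVec d) : Prop :=
  compList (ws.map fun w => Relation.ReflTransGen (V.StepWord w)) x y

theorem FlatReach.append {ws ws' : List (List V.E)} {x y z : NVec d} (h : FlatReach V ws x y)
    (h' : FlatReach V ws' y z) : FlatReach V (ws ++ ws') x z := by
  induction ws generalizing x with
  | nil => cases h; exact h'
  | cons w ws ih =>
    obtain ⟨y', hw, hws⟩ := h
    exact ⟨y', hw, ih hws⟩

theorem FlatReach.refl (ws : List (List V.E)) (x : NVec d) : FlatReach V ws x x := by
  induction ws with
  | nil => rfl
  | cons w ws ih => exact ⟨x, .refl, ih⟩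

theorem stepWord_append {w w' : List V.E} {x y z : NVec d} (h : V.StepWord w x y)
    (h' : V.StepWord w' y z) : V.StepWord (w ++ w') x z := by
  induction w generalizing x with
  | nil => cases h; exact h'
  | cons e w ih =>
    obtain ⟨y', he, hw⟩ := h
    exact ⟨y', he, ih hw⟩

variable {k : ℕ} {w : List V.E} {ws : List (List V.E)} {x y : NVec d}

theorem stepWord_add_right (hw : ∀ e ∈ w, V.test e ≤ k) {δ : NVec d}
    (hδ : ∀ i : Fin d, (i : ℕ) < k → δ i = 0) (h : V.StepWord w x y) :
    V.StepWord w (x + δ) (y + δ) := by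
  induction w generalizing x with
  | nil => cases h; rfl
  | cons e w ih =>
    obtain ⟨y', ⟨htest, hupd⟩, hrest⟩ := h
    rw [List.forall_mem_cons] at hw
    refine ⟨y' + δ, ⟨fun j hj => ?_, fun i => ?_⟩, ih hw.2 hrest⟩
    · simp [htest j hj, hδ j (hj.trans_le hw.1)]
    · have hi := hupd i
      simp only [Pi.add_apply, Nat.cast_add]
      lia

theorem exists_stepWord_of_reflTransGen (hw : ∀ e ∈ w, V.test e ≤ k)
    (h : Relation.ReflTransGen (V.StepWord w) x y) :
    ∃ w : List V.E, (∀ e ∈ w, V.test e ≤ k) ∧ V.StepWord w x y := by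
  induction h with
  | refl => exact ⟨[], by simp, rfl⟩
  | tail _ hstep ih =>
    obtain ⟨w', hw', h'⟩ := ih
    exact ⟨w' ++ w, List.forall_mem_append.2 ⟨hw', hw⟩, stepWord_append h' hstep⟩

theorem FlatReach.exists_stepWord (hws : ∀ w ∈ ws, ∀ e ∈ w, V.test e ≤ k)
    (h : FlatReach V ws x y) : ∃ w : List V.E, (∀ e ∈ w, V.test e ≤ k) ∧ V.StepWord w x y := by
  induction ws generalizing x with
  | nil => cases h; exact ⟨[], by simp, rfl⟩
  | cons w ws ih =>
    obtain ⟨y', hw, hrest⟩ := h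
    rw [List.forall_mem_cons] at hws
    obtain ⟨w₁, hw₁, h₁⟩ := exists_stepWord_of_reflTransGen hws.1 hw
    obtain ⟨w₂, hw₂, h₂⟩ := ih hws.2 hrest
    exact ⟨w₁ ++ w₂, List.forall_mem_append.2 ⟨hw₁, hw₂⟩, stepWord_append h₁ h₂⟩

end Flat

/-! ### Amalgamation systems -/

section AmalgSystem

/-- Vectors of rationals of dimension `d`. -/
abbrev QVec (d : ℕ) := Fin d → ℚ

/-- The monoid `ℕ^d × ℕ^d`, inside `ℚ^d × ℚ^d`. -/
def natPairs (d : ℕ) : AddSubmonoid (PairQ d) := (natOrthant (Fin d)).prod (natOrthant (Fin d))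

theorem exists_finset_forall_exists_le {α : Type*} [Preorder α] [WellQuasiOrderedLE α]
    (A : Set α) : ∃ F : Finset α, (∀ a ∈ F, a ∈ A) ∧ ∀ a ∈ A, ∃ f ∈ F, f ≤ a := by
  by_contra! hcon
  obtain ⟨f, -, hf⟩ := exists_seq_of_forall_finset_exists (· ∈ A) (fun x y => ¬ x ≤ y) hcon
  obtain ⟨m, n, hmn, hle⟩ := (wellQuasiOrdered_le (α := α)) f
  exact hf m n hmn hle

/-- An amalgamation system: well-quasi-ordered runs with natural endpoints, such that any two runs
above a common run can be combined, adding up their displacements from that run. -/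
structure AmalgSystem (d : ℕ) where
  Run : Type
  [preorder : Preorder Run]
  [wqo : WellQuasiOrderedLE Run]
  ends : Run → PairQ d
  ends_mem : ∀ a, ends a ∈ natPairs d
  monotone_ends : Monotone ends
  amalg : ∀ {a b c}, a ≤ b → a ≤ c → ∃ e, b ≤ e ∧ c ≤ e ∧ ends e = ends b + ends c - ends a

namespace AmalgSystem

attribute [instance] preorder wqo

variable {d : ℕ} (S : AmalgSystem d)

/-- The displacements of the endpoints from the run `a` to the larger runs. -/
def periods (a : S.Run) : AddSubmonoid (PairQ d) where
  carrier := {p | ∃ b, a ≤ b ∧ S.ends b = S.ends a + p}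
  zero_mem' := ⟨a, le_rfl, by simp⟩
  add_mem' := by
    rintro p q ⟨b, hb, hb'⟩ ⟨c, hc, hc'⟩
    obtain ⟨e, hbe, -, he⟩ := S.amalg hb hc
    exact ⟨e, hb.trans hbe, by rw [he, hb', hc']; abel⟩

/-- The relation on natural vectors given by the endpoints of the runs. -/
def Rel (x y : NVec d) : Prop := ∃ a, S.ends a = (castVec x, castVec y)

theorem exists_ends_eq (a : S.Run) : ∃ x y : NVec d, S.ends a = (castVec x, castVec y) := by
  obtain ⟨⟨x, hx⟩, ⟨y, hy⟩⟩ := S.ends_mem a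
  exact ⟨x, y, Prod.ext hx.symm hy.symm⟩

variable {S} {a b : S.Run}

theorem sub_mem_periods (h : a ≤ b) : S.ends b - S.ends a ∈ S.periods a := ⟨b, h, by abel⟩

theorem periods_mono (h : a ≤ b) : S.periods a ≤ S.periods b := by
  rintro p ⟨c, hc, hc'⟩
  obtain ⟨e, hbe, -, he⟩ := S.amalg h hc
  exact ⟨e, hbe, by rw [he, hc']; abel⟩

theorem sub_add_mem_periods (h : a ≤ b) {q : PairQ d} (hq : q ∈ S.periods b) :
    S.ends b - S.ends a + q ∈ S.periods a := by
  obtain ⟨c, hc, hc'⟩ := hq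
  exact ⟨c, h.trans hc, by rw [hc']; abel⟩

theorem periods_le_natPairs : S.periods a ≤ natPairs d := by
  rintro p ⟨b, hab, hb⟩
  obtain rfl : p = S.ends b - S.ends a := by rw [hb]; abel
  have hle := S.monotone_ends hab
  exact ⟨sub_mem_natOrthant (S.ends_mem a).1 (S.ends_mem b).1 hle.1,
    sub_mem_natOrthant (S.ends_mem a).2 (S.ends_mem b).2 hle.2⟩

theorem isWellDirected_periods : IsWellDirected (S.periods a) := by
  intro p hp
  choose b hab hb using hp
  obtain ⟨φ, hφ⟩ := (wellQuasiOrdered_le (α := S.Run)).exists_monotone_subseq b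
  refine ⟨φ, φ.strictMono, fun j k hjk t => ?_⟩
  have hmem : ∀ j, p j = S.ends (b j) - S.ends a := fun j => by rw [hb]; abel
  rw [hmem, hmem, sub_sub_sub_cancel_right]
  exact sub_add_mem_periods (hab _) (nsmul_mem (sub_mem_periods (hφ j k hjk)) t)

end AmalgSystem

section FlattablePeriods

variable {d : ℕ} (V : PVAS d) (k : ℕ)

/-- A set of pairs of natural vectors which is flattable using edges of test level at most `k`
only. -/
def FlattableBelow (R : Set (PairQ d)) : Prop :=
  ∃ ws : List (List V.E), (∀ w ∈ ws, ∀ e ∈ w, V.test e ≤ k) ∧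
    ∀ p ∈ R, ∃ x y : NVec d, p = (castVec x, castVec y) ∧ FlatReach V ws x y

/-- Every linear set with base point in `v + P` and periods in `P` becomes flattable after
translating it by a multiple of the sum of its periods, the multiple depending on the periods
only. -/
def FlattablePeriods (v : PairQ d) (P : AddSubmonoid (PairQ d)) : Prop :=
  ∀ (r : ℕ) (p : Fin r → PairQ d), (∀ i, p i ∈ P) → ∃ A : ℕ, ∀ q ∈ P,
    FlattableBelow V k {z | ∃ κ : Fin r → ℕ, z = v + A • ∑ i, p i + q + ∑ i, κ i • p i}

variable {V k} {P Q : AddSubmonoid (PairQ d)}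

theorem FlattablePeriods.mono {k' : ℕ} {v : PairQ d} (h : FlattablePeriods V k v P)
    (hQP : Q ≤ P) (hk : k ≤ k') : FlattablePeriods V k' v Q := by
  intro r p hp
  obtain ⟨A, hA⟩ := h r p fun i => hQP (hp i)
  refine ⟨A, fun q hq => ?_⟩
  obtain ⟨ws, hws, hflat⟩ := hA q (hQP hq)
  exact ⟨ws, fun w hw e he => (hws w hw e he).trans hk, hflat⟩

theorem FlattableBelow.comp {R₁ R₂ R : Set (PairQ d)} (h₁ : FlattableBelow V k R₁)
    (h₂ : FlattableBelow V k R₂) (h : ∀ p ∈ R, ∃ y, (p.1, y) ∈ R₁ ∧ (y, p.2) ∈ R₂) :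
    FlattableBelow V k R := by
  obtain ⟨ws₁, hws₁, hflat₁⟩ := h₁
  obtain ⟨ws₂, hws₂, hflat₂⟩ := h₂
  refine ⟨ws₁ ++ ws₂, List.forall_mem_append.2 ⟨hws₁, hws₂⟩, fun p hp => ?_⟩
  obtain ⟨y, hy₁, hy₂⟩ := h p hp
  obtain ⟨x, y₁, hxy, hreach₁⟩ := hflat₁ _ hy₁
  obtain ⟨y₂, z, hyz, hreach₂⟩ := hflat₂ _ hy₂
  rw [Prod.mk.injEq] at hxy hyz
  obtain rfl : y₁ = y₂ := castVec_injective (hxy.2.symm.trans hyz.1)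
  exact ⟨x, z, Prod.ext hxy.1 hyz.2, hreach₁.append hreach₂⟩

theorem FlattablePeriods.comp {x y z : QVec d} (hP : FlattablePeriods V k (x, y) P)
    (hQ : FlattablePeriods V k (y, z) Q) : FlattablePeriods V k (x, z) (relComp P Q) := by
  intro r p hp
  choose m hmP hmQ using hp
  obtain ⟨A, hA⟩ := hP r _ hmP
  obtain ⟨B, hB⟩ := hQ r _ hmQ
  refine ⟨A + B, ?_⟩
  rintro q ⟨n, hnP, hnQ⟩
  have hflatP := hA (B • ∑ i, ((p i).1, m i) + (q.1, n))
    (P.add_mem (P.nsmul_mem (P.sum_mem fun i _ => hmP i) _) hnP)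
  have hflatQ := hB (A • ∑ i, (m i, (p i).2) + (n, q.2))
    (Q.add_mem (Q.nsmul_mem (Q.sum_mem fun i _ => hmQ i) _) hnQ)
  refine hflatP.comp hflatQ ?_
  rintro w ⟨κ, rfl⟩
  refine ⟨y + (A + B) • ∑ i, m i + n + ∑ i, κ i • m i, ⟨κ, ?_⟩, ⟨κ, ?_⟩⟩ <;>
  · ext1 <;>
    · simp only [Prod.fst_add, Prod.snd_add, Prod.smul_fst, Prod.smul_snd, Prod.fst_sum,
        Prod.snd_sum]
      module

theorem nsmul_sum_add_add_sum_mem {r : ℕ} {p : Fin r → PairQ d} (hp : ∀ i, p i ∈ P) {q : PairQ d}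
    (hq : q ∈ P) (A : ℕ) (κ : Fin r → ℕ) : A • ∑ i, p i + q + ∑ i, κ i • p i ∈ P :=
  add_mem (add_mem (nsmul_mem (sum_mem fun i _ => hp i) _) hq)
    (sum_mem fun i _ => nsmul_mem (hp i) _)

end FlattablePeriods

namespace AmalgSystem

variable {d : ℕ} {V : PVAS d} {k : ℕ} {S : AmalgSystem d}

variable (V k) in
/-- An amalgamation system all whose periods are tame and flattable with edges of test level at
most `k`. -/
structure TameFlat (S : AmalgSystem d) : Prop where
  isTame (a : S.Run) : IsTame (S.periods a)
  flattable (a : S.Run) : FlattablePeriods V k (S.ends a) (S.periods a)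

theorem TameFlat.mono {k' : ℕ} (h : TameFlat V k S) (hk : k ≤ k') : TameFlat V k' S where
  isTame := h.isTame
  flattable a := (h.flattable a).mono le_rfl hk

variable (k) in
/-- Every run can be translated by natural vectors vanishing on the first `k` counters. -/
def ShiftClosed (S : AmalgSystem d) : Prop :=
  ∀ a, ∀ δ ∈ natZero d k, (δ, δ) ∈ S.periods a

theorem ShiftClosed.mono {k' : ℕ} (h : ShiftClosed k S) (hk : k ≤ k') : ShiftClosed k' S :=
  fun a δ hδ => h a δ (natZero_antitone d hk hδ)

theorem flattablePeriods_of_forall_flatReach (ws : List (List V.E))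
    (hws : ∀ w ∈ ws, ∀ e ∈ w, V.test e ≤ k)
    (h : ∀ x y, S.Rel x y → FlatReach V ws x y) (a : S.Run) :
    FlattablePeriods V k (S.ends a) (S.periods a) := by
  intro r p hp
  refine ⟨0, fun q hq => ⟨ws, hws, ?_⟩⟩
  rintro z ⟨κ, rfl⟩
  obtain ⟨b, -, hb⟩ := nsmul_sum_add_add_sum_mem hp hq 0 κ
  obtain ⟨x, y, hxy⟩ := S.exists_ends_eq b
  exact ⟨x, y, by simpa only [hb, add_assoc] using hxy, h x y ⟨b, hxy⟩⟩

end AmalgSystem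

end AmalgSystem

/-! ### Constructions of amalgamation systems -/

section WellQuasiOrder

instance wellQuasiOrderedLE_subtype {α : Type*} [Preorder α] [WellQuasiOrderedLE α]
    (p : α → Prop) : WellQuasiOrderedLE {a // p a} :=
  ⟨fun f => (wellQuasiOrdered_le (α := α)) fun n => f n⟩

instance wellQuasiOrderedLE_sigma {ι : Type*} [Finite ι] {α : ι → Type*} [∀ i, Preorder (α i)]
    [∀ i, WellQuasiOrderedLE (α i)] : WellQuasiOrderedLE (Σ i, α i) := by
  cases nonempty_fintype ι
  rw [← Set.isPWO_univ_iff]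
  have hfiber (i : ι) : (Set.range (Sigma.mk i : α i → Σ i, α i)).IsPWO := by
    rw [← Set.image_univ]
    exact (Set.isPWO_of_wellQuasiOrderedLE _).image_of_monotone fun _ _ h => .fiber _ _ _ h
  refine ((Finset.isPWO_bUnion Finset.univ).2 fun i _ => hfiber i).mono fun x _ => ?_
  exact Set.mem_biUnion (Finset.mem_univ x.1) ⟨x.2, rfl⟩

end WellQuasiOrder

namespace AmalgSystem

variable {d : ℕ}

/-- The runs `(a, a + D)` with the first `m` counters of `a` equal to zero. -/
def step (D : Fin d → ℤ) (m : ℕ) : AmalgSystem d where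
  Run := {a : NVec d // (∀ j : Fin d, (j : ℕ) < m → a j = 0) ∧ ∀ i, 0 ≤ (a i : ℤ) + D i}
  ends a := (castVec a.1, castVec a.1 + fun i => (D i : ℚ))
  ends_mem a := by
    refine ⟨castVec_mem_natOrthant _, fun i => ((a.1 i : ℤ) + D i).toNat, funext fun i => ?_⟩
    change (((a.1 i + D i).toNat : ℕ) : ℚ) = a.1 i + D i
    exact_mod_cast congrArg (Int.cast (R := ℚ)) (Int.toNat_of_nonneg (a.2.2 i))
  monotone_ends _ _ h :=
    ⟨castVec_le_castVec.2 h, add_le_add_left (castVec_le_castVec.2 h) _⟩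
  amalg := by
    rintro ⟨a, ha⟩ ⟨b, hb⟩ ⟨c, hc⟩ (hab : a ≤ b) (hac : a ≤ c)
    have hle : c ≤ b + (c - a) := by
      rw [← add_tsub_assoc_of_le hac, add_comm, add_tsub_assoc_of_le hab]
      exact le_self_add
    refine ⟨⟨b + (c - a), fun j hj => ?_, fun i => ?_⟩, le_self_add (a := b), hle, ?_⟩
    · simp [hb.1 j hj, hc.1 j hj]
    · have := hb.2 i
      simp only [Pi.add_apply, Nat.cast_add]
      lia
    · rw [map_add, castVec_sub hac]
      ext i <;>
      · simp only [Prod.fst_add, Prod.snd_add, Prod.fst_sub, Prod.snd_sub, Pi.add_apply,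
          Pi.sub_apply]
        ring

theorem rel_step {D : Fin d → ℤ} {m : ℕ} {x y : NVec d} : (step D m).Rel x y ↔
    (∀ j : Fin d, (j : ℕ) < m → x j = 0) ∧ ∀ i, (y i : ℤ) = x i + D i := by
  constructor
  · rintro ⟨⟨a, ha⟩, h⟩
    obtain ⟨hx, hy⟩ := Prod.mk.inj h
    obtain rfl := castVec_injective hx
    refine ⟨ha.1, fun i => ?_⟩
    have hi := congrFun hy i
    simp only [Pi.add_apply, castVec_apply] at hi
    exact_mod_cast hi.symm
  · rintro ⟨hx, hy⟩
    refine ⟨⟨x, hx, fun i => by rw [← hy]; positivity⟩, Prod.ext rfl (funext fun i => ?_)⟩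
    change (x i + D i : ℚ) = y i
    exact_mod_cast congrArg (Int.cast (R := ℚ)) (hy i).symm

theorem periods_step (D : Fin d → ℤ) (m : ℕ) (a) : (step D m).periods a =
    (natZero d m).map (LinearMap.prod .id .id : QVec d →ₗ[ℚ] PairQ d) := by
  obtain ⟨a, ha⟩ := a
  ext p
  constructor
  · rintro ⟨⟨b, hb⟩, hab, h⟩
    refine ⟨castVec b - castVec a, ⟨sub_mem_natOrthant ⟨_, rfl⟩ ⟨_, rfl⟩
      (castVec_le_castVec.2 hab), fun i hi => ?_⟩, ?_⟩
    · simp [hb.1 i hi, ha.1 i hi]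
    · rw [eq_sub_of_add_eq' h.symm]
      simp [step]
  · rintro ⟨_, ⟨⟨n, rfl⟩, hn⟩, rfl⟩
    refine ⟨⟨a + n, fun j hj => ?_, fun i => ?_⟩, le_self_add (a := a), ?_⟩
    · have hnj : (n j : ℚ) = 0 := hn j hj
      simp [ha.1 j hj, Nat.cast_eq_zero.1 hnj]
    · have := ha.2 i
      simp only [Pi.add_apply, Nat.cast_add]
      lia
    · simp [step, add_right_comm]

theorem tameFlat_step {V : PVAS d} {k : ℕ} {D : Fin d → ℤ} {m : ℕ} (ws : List (List V.E))
    (hws : ∀ w ∈ ws, ∀ e ∈ w, V.test e ≤ k)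
    (h : ∀ x y, (step D m).Rel x y → FlatReach V ws x y) : TameFlat V k (step D m) where
  isTame a := by
    rw [periods_step]
    have htame : IsTame (natZero d m) := isTame_natOrthant.inf_submodule _
    exact htame.map (LinearMap.prod LinearMap.id LinearMap.id)
  flattable := flattablePeriods_of_forall_flatReach ws hws h

theorem shiftClosed_step (D : Fin d → ℤ) (m : ℕ) : ShiftClosed m (step D m) := by
  intro a δ hδ
  rw [periods_step]
  exact ⟨δ, hδ, rfl⟩

/-- The disjoint union of finitely many amalgamation systems. -/
def iUnion {ι : Type} [Finite ι] (S : ι → AmalgSystem d) : AmalgSystem d where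
  Run := Σ i, (S i).Run
  ends x := (S x.1).ends x.2
  ends_mem x := (S x.1).ends_mem _
  monotone_ends := by
    rintro _ _ ⟨i, a, b, h⟩
    exact (S i).monotone_ends h
  amalg := by
    rintro _ _ _ ⟨i, a, b, hab⟩ ⟨_, _, c, hac⟩
    obtain ⟨e, hbe, hce, he⟩ := (S i).amalg hab hac
    exact ⟨⟨i, e⟩, .fiber _ _ _ hbe, .fiber _ _ _ hce, he⟩

section iUnion

variable {ι : Type} [Finite ι] {S : ι → AmalgSystem d}

theorem periods_iUnion (i : ι) (a : (S i).Run) : (iUnion S).periods ⟨i, a⟩ = (S i).periods a := by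
  ext p
  constructor
  · rintro ⟨_, ⟨_, _, b, hab⟩, hb⟩
    exact ⟨b, hab, hb⟩
  · rintro ⟨b, hab, hb⟩
    exact ⟨⟨i, b⟩, .fiber _ _ _ hab, hb⟩

theorem TameFlat.iUnion {V : PVAS d} {k : ℕ} (h : ∀ i, TameFlat V k (S i)) :
    TameFlat V k (iUnion S) where
  isTame := fun ⟨i, a⟩ => by
    rw [periods_iUnion]
    exact (h i).isTame a
  flattable := fun ⟨i, a⟩ => by
    rw [periods_iUnion]
    exact (h i).flattable a

theorem ShiftClosed.iUnion {k : ℕ} (h : ∀ i, ShiftClosed k (S i)) :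
    ShiftClosed k (iUnion S) := by
  rintro ⟨i, a⟩
  rw [periods_iUnion]
  exact h i a

theorem rel_iUnion {x y : NVec d} : (iUnion S).Rel x y ↔ ∃ i, (S i).Rel x y :=
  ⟨fun ⟨⟨i, a⟩, h⟩ => ⟨i, a, h⟩, fun ⟨i, a, h⟩ => ⟨⟨i, a⟩, h⟩⟩

end iUnion

/-- The sequential composition of two amalgamation systems. -/
def comp (S T : AmalgSystem d) : AmalgSystem d where
  Run := {p : S.Run × T.Run // (S.ends p.1).2 = (T.ends p.2).1}
  ends p := ((S.ends p.1.1).1, (T.ends p.1.2).2)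
  ends_mem _ := ⟨(S.ends_mem _).1, (T.ends_mem _).2⟩
  monotone_ends := by
    rintro ⟨p, -⟩ ⟨q, -⟩ (h : p ≤ q)
    exact ⟨(S.monotone_ends h.1).1, (T.monotone_ends h.2).2⟩
  amalg := by
    rintro ⟨⟨a, a'⟩, ha⟩ ⟨⟨b, b'⟩, hb⟩ ⟨⟨c, c'⟩, hc⟩ hab hac
    obtain ⟨e, hbe, hce, he⟩ := S.amalg hab.1 hac.1
    obtain ⟨e', hbe', hce', he'⟩ := T.amalg hab.2 hac.2
    refine ⟨⟨⟨e, e'⟩, ?_⟩, ⟨hbe, hbe'⟩, ⟨hce, hce'⟩, ?_⟩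
    · dsimp only at ha hb hc ⊢
      simp [he, he', ha, hb, hc]
    · simp [he, he']

section comp

variable {S T : AmalgSystem d}

theorem periods_comp (p : (comp S T).Run) :
    (comp S T).periods p = relComp (S.periods p.1.1) (T.periods p.1.2) := by
  obtain ⟨⟨a, a'⟩, ha : (S.ends a).2 = (T.ends a').1⟩ := p
  ext p
  constructor
  · rintro ⟨⟨⟨b, b'⟩, hb : (S.ends b).2 = (T.ends b').1⟩, hab, h⟩
    obtain ⟨h₁, h₂⟩ := Prod.mk.inj h
    exact ⟨(S.ends b).2 - (S.ends a).2, ⟨b, hab.1, Prod.ext h₁ (by simp)⟩,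
      ⟨b', hab.2, Prod.ext (by simp [ha, hb]) h₂⟩⟩
  · rintro ⟨y, ⟨b, hab, hb⟩, ⟨b', hab', hb'⟩⟩
    exact ⟨⟨⟨b, b'⟩, by simp [hb, hb', ha]⟩, ⟨hab, hab'⟩, by
      ext1 <;> simp [comp, hb, hb']⟩

theorem TameFlat.comp {V : PVAS d} {k : ℕ} (hS : TameFlat V k S) (hT : TameFlat V k T) :
    TameFlat V k (comp S T) where
  isTame p := by
    rw [periods_comp]
    exact (hS.isTame _).relComp (hT.isTame _)
  flattable p := by
    rw [periods_comp]
    refine FlattablePeriods.comp (y := (S.ends p.1.1).2) (hS.flattable p.1.1) ?_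
    rw [p.2]
    exact hT.flattable p.1.2

theorem ShiftClosed.comp {k : ℕ} (hS : ShiftClosed k S) (hT : ShiftClosed k T) :
    ShiftClosed k (comp S T) := by
  intro p δ hδ
  rw [periods_comp]
  exact ⟨δ, hS _ _ hδ, hT _ _ hδ⟩

theorem rel_comp {x z : NVec d} : (comp S T).Rel x z ↔ ∃ y, S.Rel x y ∧ T.Rel y z := by
  constructor
  · rintro ⟨⟨⟨a, b⟩, hab : (S.ends a).2 = (T.ends b).1⟩, h⟩
    obtain ⟨hx, hz⟩ := Prod.mk.inj h
    obtain ⟨y, hy⟩ := (S.ends_mem a).2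
    exact ⟨y, ⟨a, Prod.ext hx hy.symm⟩, ⟨b, Prod.ext (hab ▸ hy.symm) hz⟩⟩
  · rintro ⟨y, ⟨a, ha⟩, ⟨b, hb⟩⟩
    exact ⟨⟨⟨a, b⟩, by simp [ha, hb]⟩, by simp [comp, ha, hb]⟩

end comp

/-- The runs whose endpoints lie in a linear subspace. -/
def restrict (S : AmalgSystem d) (W : Submodule ℚ (PairQ d)) : AmalgSystem d where
  Run := {a : S.Run // S.ends a ∈ W}
  ends a := S.ends a.1
  ends_mem _ := S.ends_mem _
  monotone_ends _ _ h := S.monotone_ends h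
  amalg := by
    rintro ⟨a, ha⟩ ⟨b, hb⟩ ⟨c, hc⟩ hab hac
    obtain ⟨e, hbe, hce, he⟩ := S.amalg hab hac
    exact ⟨⟨e, he ▸ W.sub_mem (W.add_mem hb hc) ha⟩, hbe, hce, he⟩

section restrict

variable {S : AmalgSystem d} {W : Submodule ℚ (PairQ d)}

theorem periods_restrict (a : (restrict S W).Run) :
    (restrict S W).periods a = S.periods a.1 ⊓ W.toAddSubmonoid := by
  ext p
  constructor
  · rintro ⟨⟨b, hbW⟩, hab, hb : S.ends b = _⟩
    exact ⟨⟨b, hab, hb⟩, (Submodule.add_mem_iff_right W a.2).1 (hb ▸ hbW)⟩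
  · rintro ⟨⟨b, hab, hb⟩, hp⟩
    exact ⟨⟨b, hb ▸ W.add_mem a.2 hp⟩, hab, hb⟩

theorem TameFlat.restrict {V : PVAS d} {k : ℕ} (h : TameFlat V k S) (W : Submodule ℚ (PairQ d)) :
    TameFlat V k (restrict S W) where
  isTame a := by
    rw [periods_restrict]
    exact (h.isTame _).inf_submodule W
  flattable a := by
    rw [periods_restrict]
    exact (h.flattable a.1).mono inf_le_left le_rfl

theorem ShiftClosed.restrict {k : ℕ} (h : ShiftClosed k S)
    (hW : ∀ δ ∈ natZero d k, (δ, δ) ∈ W) : ShiftClosed k (restrict S W) := by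
  intro a δ hδ
  rw [periods_restrict]
  exact ⟨h _ δ hδ, hW δ hδ⟩

theorem rel_restrict {x y : NVec d} :
    (restrict S W).Rel x y ↔ S.Rel x y ∧ (castVec x, castVec y) ∈ W := by
  constructor
  · rintro ⟨⟨a, ha⟩, h : S.ends a = _⟩
    exact ⟨⟨a, h⟩, h ▸ ha⟩
  · rintro ⟨⟨a, h⟩, hW⟩
    exact ⟨⟨a, h ▸ hW⟩, h⟩

end restrict

/-- The pairs of runs of two amalgamation systems with the same endpoints. -/
def inter (S T : AmalgSystem d) : AmalgSystem d where
  Run := {p : S.Run × T.Run // S.ends p.1 = T.ends p.2}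
  ends p := S.ends p.1.1
  ends_mem _ := S.ends_mem _
  monotone_ends := by
    rintro ⟨p, -⟩ ⟨q, -⟩ (h : p ≤ q)
    exact S.monotone_ends h.1
  amalg := by
    rintro ⟨⟨a, a'⟩, ha⟩ ⟨⟨b, b'⟩, hb⟩ ⟨⟨c, c'⟩, hc⟩ hab hac
    obtain ⟨e, hbe, hce, he⟩ := S.amalg hab.1 hac.1
    obtain ⟨e', hbe', hce', he'⟩ := T.amalg hab.2 hac.2
    refine ⟨⟨⟨e, e'⟩, ?_⟩, ⟨hbe, hbe'⟩, ⟨hce, hce'⟩, he⟩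
    dsimp only at ha hb hc ⊢
    rw [he, he', ha, hb, hc]

section inter

variable {S T : AmalgSystem d}

theorem periods_inter (p : (inter S T).Run) :
    (inter S T).periods p = S.periods p.1.1 ⊓ T.periods p.1.2 := by
  obtain ⟨⟨a, a'⟩, ha : S.ends a = T.ends a'⟩ := p
  ext p
  constructor
  · rintro ⟨⟨⟨b, b'⟩, hb : S.ends b = T.ends b'⟩, hab, h : S.ends b = S.ends a + p⟩
    exact ⟨⟨b, hab.1, h⟩, ⟨b', hab.2, by rw [← hb, h, ha]⟩⟩
  · rintro ⟨⟨b, hab, hb⟩, ⟨b', hab', hb'⟩⟩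
    exact ⟨⟨⟨b, b'⟩, by simp [hb, hb', ha]⟩, ⟨hab, hab'⟩, hb⟩

theorem TameFlat.inter {V : PVAS d} {k : ℕ} (hS : TameFlat V k S)
    (hT : ∀ a, IsTame (T.periods a)) : TameFlat V k (inter S T) where
  isTame p := by
    rw [periods_inter]
    exact (hS.isTame _).inf (hT _)
  flattable p := by
    rw [periods_inter]
    exact (hS.flattable p.1.1).mono inf_le_left le_rfl

theorem rel_inter {x y : NVec d} : (inter S T).Rel x y ↔ S.Rel x y ∧ T.Rel x y := by
  constructor
  · rintro ⟨⟨⟨a, b⟩, hab : S.ends a = T.ends b⟩, h : S.ends a = _⟩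
    exact ⟨⟨a, h⟩, ⟨b, hab ▸ h⟩⟩
  · rintro ⟨⟨a, ha⟩, ⟨b, hb⟩⟩
    exact ⟨⟨⟨a, b⟩, ha.trans hb.symm⟩, ha⟩

end inter

section linear

variable {ι : Type} [Fintype ι] {v : PairQ d} {g : ι → PairQ d}

/-- The points of a linear set of pairs of natural vectors, ordered by their coefficients. -/
def linear (hv : v ∈ natPairs d) (hg : ∀ i, g i ∈ natPairs d) : AmalgSystem d where
  Run := ι → ℕ
  ends μ := v + Fintype.linearCombination ℕ g μ
  ends_mem μ := add_mem hv (sum_mem fun i _ => nsmul_mem (hg i) (μ i))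
  monotone_ends μ ν h := by
    have hg₀ (i : ι) : 0 ≤ g i :=
      ⟨nonneg_of_mem_natOrthant (hg i).1, nonneg_of_mem_natOrthant (hg i).2⟩
    exact add_le_add_right (Finset.sum_le_sum fun i _ => nsmul_le_nsmul_left (hg₀ i) (h i)) v
  amalg {a b c} hab hac := by
    have hle : c ≤ b + (c - a) := by
      rw [← add_tsub_assoc_of_le hac, add_comm, add_tsub_assoc_of_le hab]
      exact le_self_add
    have hsub : Fintype.linearCombination ℕ g (c - a) + Fintype.linearCombination ℕ g a =
        Fintype.linearCombination ℕ g c := by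
      rw [← map_add, tsub_add_cancel_of_le hac]
    exact ⟨b + (c - a), le_self_add, hle, by rw [map_add, ← hsub]; abel⟩

variable (hv : v ∈ natPairs d) (hg : ∀ i, g i ∈ natPairs d)

theorem periods_linear (μ : (linear hv hg).Run) :
    (linear hv hg).periods μ = AddSubmonoid.closure (Set.range g) := by
  ext p
  rw [AddSubmonoid.mem_closure_range_iff_of_fintype]
  let μ : ι → ℕ := μ
  change (∃ ν : ι → ℕ, μ ≤ ν ∧ v + Fintype.linearCombination ℕ g ν =
    v + Fintype.linearCombination ℕ g μ + p) ↔ ∃ c : ι → ℕ, p = Fintype.linearCombination ℕ g c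
  simp only [add_assoc, add_right_inj]
  constructor
  · rintro ⟨ν, hμν, h⟩
    refine ⟨ν - μ, add_left_cancel (h.symm.trans ?_)⟩
    rw [← map_add, add_tsub_cancel_of_le hμν]
  · rintro ⟨c, rfl⟩
    exact ⟨μ + c, le_self_add, map_add _ _ _⟩

theorem isTame_periods_linear (μ : (linear hv hg).Run) : IsTame ((linear hv hg).periods μ) := by
  rw [periods_linear]
  exact isTame_closure_range g

end linear

end AmalgSystem

/-! ### Paths in a system of runs -/

section SublistForall₂

open List

variable {α : Type*} {r : α → α → Prop} {l l' m m' : List α}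

theorem sublistForall₂_append (h : SublistForall₂ r l m) (h' : SublistForall₂ r l' m') :
    SublistForall₂ r (l ++ l') (m ++ m') := by
  rw [sublistForall₂_iff] at *
  obtain ⟨n, hln, hnm⟩ := h
  obtain ⟨n', hln', hnm'⟩ := h'
  exact ⟨n ++ n', rel_append hln hln', hnm.append hnm'⟩

theorem sublistForall₂_append_right (h : SublistForall₂ r l m) (n : List α) :
    SublistForall₂ r l (m ++ n) := by
  simpa using sublistForall₂_append h (.nil (l := n))

theorem sublistForall₂_append_left (h : SublistForall₂ r l m) (n : List α) :
    SublistForall₂ r l (n ++ m) :=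
  sublistForall₂_append .nil h

theorem exists_eq_append_of_cons_sublistForall₂ {a : α} (h : SublistForall₂ r (a :: l) m) :
    ∃ m₁ b m₂, m = m₁ ++ b :: m₂ ∧ r a b ∧ SublistForall₂ r l m₂ := by
  induction m with
  | nil => cases h
  | cons c m ih =>
    cases h with
    | cons hac hlm => exact ⟨[], c, m, rfl, hac, hlm⟩
    | cons_right h =>
      obtain ⟨m₁, b, m₂, rfl, hab, hlm⟩ := ih h
      exact ⟨c :: m₁, b, m₂, rfl, hab, hlm⟩

theorem wellQuasiOrdered_sublistForall₂ [IsPreorder α r] (h : WellQuasiOrdered r) :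
    WellQuasiOrdered (SublistForall₂ r) := by
  have hlists := (Set.partiallyWellOrderedOn_univ_iff.2 h).partiallyWellOrderedOn_sublistForall₂
  simpa only [Set.mem_univ, implies_true, Set.ofPred_true,
    Set.partiallyWellOrderedOn_univ_iff] using hlists

end SublistForall₂

section Walk

variable {α β : Type*} {src tgt : α → β} {x y z : β} {l l' : List α}

variable (src tgt) in
/-- The list `l` of arrows with sources `src` and targets `tgt` is a walk from `x` to `y`. -/
def IsWalk (x : β) : List α → β → Prop
  | [], y => x = y
  | a :: l, y => src a = x ∧ IsWalk (tgt a) l y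

theorem IsWalk.append (h : IsWalk src tgt x l y) (h' : IsWalk src tgt y l' z) :
    IsWalk src tgt x (l ++ l') z := by
  induction l generalizing x with
  | nil => cases h; exact h'
  | cons a l ih => exact ⟨h.1, ih h.2⟩

theorem IsWalk.exists_of_append (h : IsWalk src tgt x (l ++ l') z) :
    ∃ y, IsWalk src tgt x l y ∧ IsWalk src tgt y l' z := by
  induction l generalizing x with
  | nil => exact ⟨x, rfl, h⟩
  | cons a l ih =>
    obtain ⟨y, hl, hl'⟩ := ih h.2
    exact ⟨y, ⟨h.1, hl⟩, hl'⟩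

end Walk

/-- An amalgamation system whose runs have endpoints vanishing on the first `k` counters and can
be translated by natural vectors vanishing on the first `k` counters. -/
structure LevelSystem (d k : ℕ) extends AmalgSystem d where
  ends_mem_natZero : ∀ a, ends a ∈ (natZero d k).prod (natZero d k)
  shiftClosed : toAmalgSystem.ShiftClosed k

namespace LevelSystem

open AmalgSystem List

variable {d k : ℕ} (L : LevelSystem d k)

/-- The list `l` of consecutive runs is a path from `x` to `y`. -/
abbrev IsPath (x : QVec d) (l : List L.Run) (y : QVec d) : Prop :=
  IsWalk (fun a => (L.ends a).1) (fun a => (L.ends a).2) x l y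

/-- The reflexive transitive closure of the relation given by the runs. -/
def Reaches (x y : QVec d) : Prop := ∃ l, L.IsPath x l y

variable {L} {a : L.Run} {x y z δ : QVec d} {l l' m : List L.Run}

theorem IsPath.target_mem (h : L.IsPath x l y) (hx : x ∈ natZero d k) : y ∈ natZero d k := by
  induction l generalizing x with
  | nil => cases h; exact hx
  | cons a l ih => exact ih h.2 (L.ends_mem_natZero a).2

theorem IsPath.add_right (h : L.IsPath x l y) (hδ : δ ∈ natZero d k) :
    ∃ l', SublistForall₂ (· ≤ ·) l l' ∧ L.IsPath (x + δ) l' (y + δ) := by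
  induction l generalizing x with
  | nil => cases h; exact ⟨[], .nil, rfl⟩
  | cons a l ih =>
    obtain ⟨l', hle, hl'⟩ := ih h.2
    obtain ⟨b, hab, hb⟩ := L.shiftClosed a δ hδ
    refine ⟨b :: l', .cons hab hle, ?_, ?_⟩
    · simpa [hb] using h.1
    · simpa [hb] using hl'

@[refl]
theorem Reaches.refl (x : QVec d) : L.Reaches x x := ⟨[], rfl⟩

theorem Reaches.trans (h : L.Reaches x y) (h' : L.Reaches y z) : L.Reaches x z := by
  obtain ⟨l, hl⟩ := h
  obtain ⟨l', hl'⟩ := h'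
  exact ⟨l ++ l', hl.append hl'⟩

theorem Reaches.add_right (h : L.Reaches x y) (hδ : δ ∈ natZero d k) :
    L.Reaches (x + δ) (y + δ) := by
  obtain ⟨l, hl⟩ := h
  obtain ⟨l', -, hl'⟩ := IsPath.add_right hl hδ
  exact ⟨l', hl'⟩

theorem Reaches.target_mem (h : L.Reaches x y) (hx : x ∈ natZero d k) : y ∈ natZero d k := by
  obtain ⟨l, hl⟩ := h
  exact IsPath.target_mem hl hx

variable (a) in
theorem reaches_ends : L.Reaches (L.ends a).1 (L.ends a).2 := ⟨[a], rfl, rfl⟩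

variable (L) in
/-- The pairs `(u, w)` such that `c + u` can be turned into `c + w`. -/
def productions (c : QVec d) : AddSubmonoid (PairQ d) where
  carrier := {p | p ∈ (natZero d k).prod (natZero d k) ∧ L.Reaches (c + p.1) (c + p.2)}
  zero_mem' := ⟨zero_mem _, .refl _⟩
  add_mem' := by
    rintro p q ⟨hp, hpr⟩ ⟨hq, hqr⟩
    refine ⟨add_mem hp hq, ?_⟩
    have hq' := hqr.add_right hp.2
    rw [add_right_comm, add_right_comm c q.2] at hq'
    simpa [add_assoc] using (hpr.add_right hq.1).trans hq'

variable (L) in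
/-- The pairs by which the endpoints of a path `l` from `x` can be increased by enlarging its runs
and inserting runs between them. -/
def pathProductions (x : QVec d) : List L.Run → AddSubmonoid (PairQ d)
  | [] => L.productions x
  | a :: l => relComp (L.productions x) (relComp (L.periods a) (pathProductions (L.ends a).2 l))

theorem IsPath.amalg {x' y' x'' y'' : QVec d} {l' l'' : List L.Run} (hl : L.IsPath x l y)
    (hl' : L.IsPath x' l' y') (hl'' : L.IsPath x'' l'' y'') (hx : x ∈ natZero d k)
    (hx' : x' ∈ natZero d k) (hx'' : x'' ∈ natZero d k) (hxx' : x ≤ x') (hxx'' : x ≤ x'')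
    (hyy' : y ≤ y') (hll' : SublistForall₂ (· ≤ ·) l l') (hll'' : SublistForall₂ (· ≤ ·) l l'') :
    ∃ m, L.IsPath (x' + x'' - x) m (y' + y'' - y) ∧ SublistForall₂ (· ≤ ·) l' m ∧
      SublistForall₂ (· ≤ ·) l'' m := by
  induction l generalizing x x' x'' l' l'' with
  | nil =>
    cases hl
    obtain ⟨m', hlm', hm'⟩ := IsPath.add_right hl' (sub_mem_natZero hx hx'' hxx'')
    obtain ⟨m'', hlm'', hm''⟩ := IsPath.add_right hl''
      (sub_mem_natZero hx (IsPath.target_mem hl' hx') hyy')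
    refine ⟨m' ++ m'', IsWalk.append (y := y' + (x'' - y)) ?_ ?_,
      sublistForall₂_append_right hlm' _, sublistForall₂_append_left hlm'' _⟩
    · rwa [add_sub_assoc]
    · convert hm'' using 1 <;> abel
  | cons a l ih =>
    obtain ⟨l₁', b', l₂', rfl, hab', hl₂'⟩ := exists_eq_append_of_cons_sublistForall₂ hll'
    obtain ⟨l₁'', b'', l₂'', rfl, hab'', hl₂''⟩ := exists_eq_append_of_cons_sublistForall₂ hll''
    obtain ⟨z', hz', rfl, hb'⟩ := hl'.exists_of_append
    obtain ⟨z'', hz'', rfl, hb''⟩ := hl''.exists_of_append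
    obtain ⟨rfl, hl⟩ := hl
    obtain ⟨e, hbe', hbe'', he⟩ := L.amalg hab' hab''
    obtain ⟨m₁, hlm₁, hm₁⟩ := IsPath.add_right hz' (sub_mem_natZero hx hx'' hxx'')
    obtain ⟨m₂, hlm₂, hm₂⟩ := IsPath.add_right hz''
      (sub_mem_natZero hx (IsPath.target_mem hz' hx') (L.monotone_ends hab').1)
    obtain ⟨m₃, hm₃, hlm', hlm''⟩ := ih hl hb' hb'' (L.ends_mem_natZero a).2
      (L.ends_mem_natZero b').2 (L.ends_mem_natZero b'').2 (L.monotone_ends hab').2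
      (L.monotone_ends hab'').2 hl₂' hl₂''
    refine ⟨m₁ ++ (m₂ ++ e :: m₃), ?_,
      sublistForall₂_append hlm₁ (sublistForall₂_append_left (.cons hbe' hlm') _),
      sublistForall₂_append_left (sublistForall₂_append hlm₂ (.cons hbe'' hlm'')) _⟩
    rw [add_sub_assoc]
    refine hm₁.append (IsWalk.append (y := (L.ends e).1) ?_ ⟨rfl, by simpa [he] using hm₃⟩)
    convert hm₂ using 1
    · abel
    · simp only [he, Prod.fst_add, Prod.fst_sub]
      abel

variable (L) in
/-- A path of runs, together with its endpoints. -/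
structure Path where
  source : QVec d
  target : QVec d
  steps : List L.Run
  source_mem : source ∈ natZero d k
  isPath : L.IsPath source steps target

theorem Path.target_mem (p : L.Path) : p.target ∈ natZero d k :=
  IsPath.target_mem p.isPath p.source_mem

instance : Preorder L.Path where
  le p q := p.source ≤ q.source ∧ p.target ≤ q.target ∧ SublistForall₂ (· ≤ ·) p.steps q.steps
  le_refl _ := ⟨le_rfl, le_rfl, refl _⟩
  le_trans _ _ _ h h' := ⟨h.1.trans h'.1, h.2.1.trans h'.2.1, _root_.trans h.2.2 h'.2.2⟩

instance : WellQuasiOrderedLE L.Path where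
  wqo f := by
    choose s hs using fun n => (f n).source_mem.1
    choose t ht using fun n => (f n).target_mem.1
    have hwqo := ((wellQuasiOrdered_le (α := NVec d)).prod (wellQuasiOrdered_le (α := NVec d))).prod
      (wellQuasiOrdered_sublistForall₂ (wellQuasiOrdered_le (α := L.Run)))
    obtain ⟨m, n, hmn, ⟨hst, htt⟩, hsteps⟩ := hwqo fun n => ((s n, t n), (f n).steps)
    refine ⟨m, n, hmn, ?_, ?_, hsteps⟩
    · simpa only [← hs] using castVec_le_castVec.2 hst
    · simpa only [← ht] using castVec_le_castVec.2 htt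

variable (L) in
/-- The paths of runs of `L`, which give the reflexive transitive closure of its relation. -/
def star : AmalgSystem d where
  Run := L.Path
  ends p := (p.source, p.target)
  ends_mem p := ⟨p.source_mem.1, p.target_mem.1⟩
  monotone_ends := fun p q (h : p ≤ q) => ⟨h.1, h.2.1⟩
  amalg := by
    rintro a b c (hab : a ≤ b) (hac : a ≤ c)
    obtain ⟨m, hm, hbm, hcm⟩ := IsPath.amalg a.isPath b.isPath c.isPath a.source_mem b.source_mem
      c.source_mem hab.1 hac.1 hab.2.1 hab.2.2 hac.2.2
    refine ⟨⟨_, _, m, ?_, hm⟩, ⟨?_, ?_, hbm⟩, ⟨?_, ?_, hcm⟩, rfl⟩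
    · rw [add_sub_assoc]
      exact add_mem b.source_mem (sub_mem_natZero a.source_mem c.source_mem hac.1)
    · simpa [add_sub_assoc] using hac.1
    · simpa [add_sub_assoc] using hac.2.1
    · simpa [add_sub_right_comm] using hab.1
    · simpa [add_sub_right_comm] using hab.2.1

theorem rel_star {x y : NVec d} :
    L.star.Rel x y ↔ castVec x ∈ natZero d k ∧ L.Reaches (castVec x) (castVec y) := by
  constructor
  · rintro ⟨p : L.Path, hp⟩
    obtain ⟨hx, hy⟩ : p.source = _ ∧ p.target = _ := Prod.mk.inj hp
    exact ⟨hx ▸ p.source_mem, p.steps, hx ▸ hy ▸ p.isPath⟩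
  · rintro ⟨hx, l, hl⟩
    exact ⟨⟨_, _, l, hx, hl⟩, rfl⟩

theorem mem_natZero_of_mem_pathProductions {p : PairQ d} (hp : p ∈ L.pathProductions x l) :
    p ∈ (natZero d k).prod (natZero d k) := by
  induction l generalizing x p with
  | nil => exact hp.1
  | cons a l ih =>
    obtain ⟨y, hxy, z, -, hz⟩ := hp
    exact ⟨hxy.1.1, (ih hz).2⟩

theorem IsPath.exists_of_mem_pathProductions (hl : L.IsPath x l y) {p : PairQ d}
    (hp : p ∈ L.pathProductions x l) :
    ∃ l', SublistForall₂ (· ≤ ·) l l' ∧ L.IsPath (x + p.1) l' (y + p.2) := by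
  induction l generalizing x p with
  | nil =>
    cases hl
    obtain ⟨-, l', hl'⟩ := hp
    exact ⟨l', .nil, hl'⟩
  | cons a l ih =>
    obtain ⟨u, ⟨-, l₁, hl₁⟩, w, ⟨b, hab, hb⟩, hw⟩ := hp
    obtain ⟨l₂, hle, hl₂⟩ := ih hl.2 hw
    refine ⟨l₁ ++ b :: l₂, sublistForall₂_append_left (.cons hab hle) _, hl₁.append ⟨?_, ?_⟩⟩
    · simp [hb, hl.1]
    · simpa [hb] using hl₂

theorem IsPath.sub_mem_pathProductions {x' y' : QVec d} (hl : L.IsPath x l y)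
    (hl' : L.IsPath x' l' y') (hx : x ∈ natZero d k) (hx' : x' ∈ natZero d k) (hxx' : x ≤ x')
    (hyy' : y ≤ y') (hle : SublistForall₂ (· ≤ ·) l l') :
    (x' - x, y' - y) ∈ L.pathProductions x l := by
  induction l generalizing x x' l' with
  | nil =>
    cases hl
    refine ⟨⟨sub_mem_natZero hx hx' hxx', sub_mem_natZero hx (IsPath.target_mem hl' hx') hyy'⟩,
      l', ?_⟩
    simpa using hl'
  | cons a l ih =>
    obtain ⟨l₁, b, l₂, rfl, hab, hle⟩ := exists_eq_append_of_cons_sublistForall₂ hle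
    obtain ⟨z, hz, rfl, hb⟩ := hl'.exists_of_append
    obtain ⟨rfl, hl⟩ := hl
    refine ⟨(L.ends b).1 - (L.ends a).1,
      ⟨⟨sub_mem_natZero hx hx' hxx', sub_mem_natZero hx (L.ends_mem_natZero b).1
        (L.monotone_ends hab).1⟩, l₁, by simpa using hz⟩,
      (L.ends b).2 - (L.ends a).2, sub_mem_periods hab, ?_⟩
    exact ih hl hb (L.ends_mem_natZero a).2 (L.ends_mem_natZero b).2 (L.monotone_ends hab).2 hle

theorem periods_star (p : L.Path) : L.star.periods p = L.pathProductions p.source p.steps := by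
  ext q
  constructor
  · rintro ⟨p', hpp' : p ≤ p', hq⟩
    obtain rfl : q = (p'.source - p.source, p'.target - p.target) :=
      (sub_eq_of_eq_add' hq).symm
    exact IsPath.sub_mem_pathProductions p.isPath p'.isPath p.source_mem p'.source_mem hpp'.1
      hpp'.2.1 hpp'.2.2
  · intro hq
    obtain ⟨l', hle, hl'⟩ := IsPath.exists_of_mem_pathProductions p.isPath hq
    obtain ⟨h₁, h₂⟩ := mem_natZero_of_mem_pathProductions hq
    exact ⟨⟨_, _, l', add_mem p.source_mem h₁, hl'⟩,
      ⟨le_add_of_nonneg_right (nonneg_of_mem_natOrthant h₁.1),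
        le_add_of_nonneg_right (nonneg_of_mem_natOrthant h₂.1), hle⟩, rfl⟩

theorem isWellDirected_productions (hx : x ∈ natZero d k) : IsWellDirected (L.productions x) := by
  have hstar : IsWellDirected (L.star.periods (⟨x, x, [], hx, rfl⟩ : L.Path)) :=
    isWellDirected_periods
  rwa [periods_star] at hstar

variable (L x) in
theorem shift_mem_productions (hδ : δ ∈ natZero d k) : (δ, δ) ∈ L.productions x :=
  ⟨⟨hδ, hδ⟩, .refl _⟩

theorem shiftClosed_star : L.star.ShiftClosed k := by
  rintro (p : L.Path) δ hδ
  rw [periods_star]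
  generalize p.source = x
  induction p.steps generalizing x with
  | nil => exact shift_mem_productions L x hδ
  | cons a l ih => exact ⟨δ, shift_mem_productions L x hδ, δ, L.shiftClosed a δ hδ, ih _⟩

section Flattability

variable {V : PVAS d} (hL : L.TameFlat V k)

include hL

theorem IsPath.exists_stepWord {x' : NVec d} (hl : L.IsPath (castVec x') l y) :
    ∃ y' : NVec d, y = castVec y' ∧
      ∃ w : List V.E, (∀ e ∈ w, V.test e ≤ k) ∧ V.StepWord w x' y' := by
  induction l generalizing x' with
  | nil => exact ⟨x', hl.symm, [], by simp, rfl⟩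
  | cons a l ih =>
    obtain ⟨A, hflat⟩ := hL.flattable a 0 0 fun _ => zero_mem _
    obtain ⟨ws, hws, hflat⟩ := hflat 0 (zero_mem _)
    obtain ⟨x₁, y₁, ha, hreach⟩ := hflat (L.ends a) ⟨0, by simp⟩
    obtain ⟨w, hw, hstep⟩ := hreach.exists_stepWord hws
    obtain ⟨ha₁, hl⟩ := hl
    obtain rfl : x₁ = x' := castVec_injective ((congrArg Prod.fst ha).symm.trans ha₁)
    obtain ⟨y', hy, w', hw', hstep'⟩ := ih (x' := y₁) (by simpa [ha] using hl)
    exact ⟨y', hy, w ++ w', List.forall_mem_append.2 ⟨hw, hw'⟩, stepWord_append hstep hstep'⟩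

theorem exists_word_of_mem_productions (hx : x ∈ natZero d k) {p : PairQ d}
    (hp : p ∈ L.productions x) : ∃ w : List V.E, (∀ e ∈ w, V.test e ≤ k) ∧
      ∀ n : ℕ, ∀ δ ∈ natZero d k, ∃ u v : NVec d, x + δ + n • p.1 = castVec u ∧
        x + δ + n • p.2 = castVec v ∧ Relation.ReflTransGen (V.StepWord w) u v := by
  obtain ⟨⟨hp₁, hp₂⟩, l, hl⟩ := hp
  obtain ⟨u₀, hu₀⟩ := (add_mem hx hp₁).1
  obtain ⟨v₀, hv₀, w, hw, hstep⟩ := IsPath.exists_stepWord hL (hu₀ ▸ hl)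
  refine ⟨w, hw, fun n => ?_⟩
  induction n with
  | zero =>
    intro δ hδ
    obtain ⟨u, hu⟩ := (add_mem hx hδ).1
    exact ⟨u, u, by simp [hu], by simp [hu], .refl⟩
  | succ n ih =>
    intro δ hδ
    obtain ⟨u, v, hu, hv, hreach⟩ := ih (δ + p.2) (add_mem hδ hp₂)
    obtain ⟨⟨δ', hδ'⟩, hzero⟩ := add_mem hδ (nsmul_mem hp₁ n)
    have hu' : u = v₀ + δ' := castVec_injective <| by
      rw [map_add, ← hv₀, hδ', ← hu]
      abel
    refine ⟨u₀ + δ', v, ?_, ?_, .head ?_ (hu' ▸ hreach)⟩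
    · rw [map_add, hu₀, hδ', succ_nsmul]
      abel
    · rw [← hv, succ_nsmul]
      abel
    · refine stepWord_add_right hw (fun i hi => ?_) hstep
      have hi := hzero i hi
      rwa [← hδ', castVec_apply, Nat.cast_eq_zero] at hi

theorem flattableBelow_sum_nsmul_productions (hx : x ∈ natZero d k) {r : ℕ} {p : Fin r → PairQ d}
    (hp : ∀ i, p i ∈ L.productions x) : FlattableBelow V k
      {z | ∃ κ : Fin r → ℕ, ∃ δ ∈ natZero d k, z = (x + δ, x + δ) + ∑ i, κ i • p i} := by
  induction r with
  | zero =>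
    refine ⟨[], by simp, ?_⟩
    rintro z ⟨κ, δ, hδ, rfl⟩
    obtain ⟨u, hu⟩ := (add_mem hx hδ).1
    exact ⟨u, u, by simp [hu], .refl _ _⟩
  | succ r ih =>
    obtain ⟨w, hw, hreach⟩ := exists_word_of_mem_productions hL hx (hp 0)
    have hfirst : FlattableBelow V k
        {z | ∃ n : ℕ, ∃ δ ∈ natZero d k, z = (x + δ, x + δ) + n • p 0} := by
      refine ⟨[w], by simpa using hw, ?_⟩
      rintro z ⟨n, δ, hδ, rfl⟩
      obtain ⟨u, v, hu, hv, huv⟩ := hreach n δ hδ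
      exact ⟨u, v, Prod.ext hu hv, v, huv, rfl⟩
    refine hfirst.comp (ih fun i => hp i.succ) ?_
    rintro z ⟨κ, δ, hδ, rfl⟩
    have hmem : ∑ i : Fin r, κ i.succ • (p i.succ).1 ∈ natZero d k :=
      sum_mem fun i _ => nsmul_mem (hp i.succ).1.1 _
    refine ⟨x + (δ + ∑ i : Fin r, κ i.succ • (p i.succ).1) + κ 0 • (p 0).2,
      ⟨κ 0, _, add_mem hδ hmem, ?_⟩,
      ⟨fun i => κ i.succ, _, add_mem hδ (nsmul_mem (hp 0).1.2 (κ 0)), ?_⟩⟩ <;>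
    · ext1 <;>
        simp [Fin.sum_univ_succ, Prod.fst_sum, Prod.snd_sum, add_assoc, add_left_comm, add_comm]

theorem flattablePeriods_productions (hx : x ∈ natZero d k) :
    FlattablePeriods V k (x, x) (L.productions x) := by
  refine fun r p hp => ⟨0, fun q hq => ?_⟩
  obtain ⟨ws, hws, hflat⟩ := flattableBelow_sum_nsmul_productions hL hx
    (p := (Fin.cons q p : Fin (r + 1) → PairQ d)) (Fin.cases hq hp)
  refine ⟨ws, hws, ?_⟩
  rintro z ⟨κ, rfl⟩
  refine hflat _ ⟨Fin.cons 1 κ, 0, zero_mem _, ?_⟩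
  simp [Fin.sum_univ_succ, add_assoc]

theorem tameFlat_star (htame : ∀ x ∈ natZero d k, IsTame (L.productions x)) :
    L.star.TameFlat V k := by
  suffices h : ∀ l x y, x ∈ natZero d k → L.IsPath x l y →
      IsTame (L.pathProductions x l) ∧ FlattablePeriods V k (x, y) (L.pathProductions x l) from
    ⟨fun p => periods_star p ▸ (h _ _ _ p.source_mem p.isPath).1,
      fun p => periods_star p ▸ (h _ _ _ p.source_mem p.isPath).2⟩
  intro l
  induction l with
  | nil =>
    rintro x _ hx rfl
    exact ⟨htame x hx, flattablePeriods_productions hL hx⟩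
  | cons a l ih =>
    rintro _ y hx ⟨rfl, hl⟩
    obtain ⟨htame', hflat'⟩ := ih _ y (L.ends_mem_natZero a).2 hl
    exact ⟨(htame _ hx).relComp ((hL.isTame a).relComp htame'),
      (flattablePeriods_productions hL hx).comp ((hL.flattable a).comp hflat')⟩

end Flattability

end LevelSystem

/-! ### Paths modulo an unconstrained set of counters -/

section NatOn

variable {d k : ℕ} {I J : Set (Fin d)} {x y ξ : QVec d}

variable (k I) in
/-- The natural vectors vanishing on the first `k` counters and on `I`. -/
def natOff : AddSubmonoid (QVec d) := natZero d k ⊓ (zeroOn I).toAddSubmonoid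

variable (k I) in
/-- The integer vectors vanishing on the first `k` counters and nonnegative on `I`. They are
encoded as those vectors that become natural by adding a natural vector vanishing on `I`. -/
def natOn : AddSubmonoid (QVec d) where
  carrier := {x | ∃ b ∈ natOff k I, x + b ∈ natZero d k}
  zero_mem' := ⟨0, zero_mem _, by simp [zero_mem]⟩
  add_mem' := by
    rintro x y ⟨b, hb, hx⟩ ⟨c, hc, hy⟩
    exact ⟨b + c, add_mem hb hc, by simpa [add_add_add_comm] using add_mem hx hy⟩

theorem natOff_antitone : Antitone (natOff (d := d) k) :=
  fun _ _ h _ hx => ⟨hx.1, fun i hi => hx.2 i (h hi)⟩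

theorem natZero_le_natOn : natZero d k ≤ natOn k I :=
  fun _ hx => ⟨0, zero_mem _, by simpa using hx⟩

theorem natOn_antitone : Antitone (natOn (d := d) k) :=
  fun _ _ h _ ⟨b, hb, hx⟩ => ⟨b, natOff_antitone h hb, hx⟩

theorem natOn_univ_le : natOn k (Set.univ : Set (Fin d)) ≤ natZero d k := by
  rintro x ⟨b, hb, hx⟩
  obtain rfl : b = 0 := funext fun i => hb.2 i trivial
  simpa using hx

theorem nonneg_of_mem_natOn (hx : x ∈ natOn k I) {i : Fin d} (hi : i ∈ I) : 0 ≤ x i := by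
  obtain ⟨b, hb, hx⟩ := hx
  simpa [hb.2 i hi] using nonneg_of_mem_natOrthant hx.1 i

theorem indicator_mem_natZero (hx : x ∈ natZero d k) (J : Set (Fin d)) :
    J.indicator x ∈ natZero d k := by
  obtain ⟨⟨n, rfl⟩, hzero⟩ := hx
  refine ⟨⟨J.indicator n, ?_⟩, fun i hi => ?_⟩
  · ext i
    by_cases hi : i ∈ J <;> simp [hi]
  · by_cases hiJ : i ∈ J <;> simp only [hiJ, Set.indicator_of_mem, Set.indicator_of_notMem,
      not_false_eq_true, hzero i hi]

theorem indicator_compl_mem_natOff (hx : x ∈ natZero d k) : Iᶜ.indicator x ∈ natOff k I :=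
  ⟨indicator_mem_natZero hx _, fun _ hi => Set.indicator_of_notMem (not_not.2 hi) _⟩

theorem sub_mem_natOn (hx : x ∈ natOn k I) (hy : y ∈ natOn k I) (h : ∀ i ∈ I, x i ≤ y i) :
    y - x ∈ natOn k I := by
  obtain ⟨b, hb, hx⟩ := hx
  obtain ⟨c, hc, hy⟩ := hy
  refine ⟨Iᶜ.indicator (x + b) + c, add_mem (indicator_compl_mem_natOff hx) hc, ?_⟩
  have hsub : y - x + (Iᶜ.indicator (x + b) + c) = y + c + b - I.indicator (x + b) := by
    rw [Set.indicator_compl]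
    abel
  rw [hsub]
  refine sub_mem_natZero (indicator_mem_natZero hx I) (add_mem hy hb.1)
    (Set.indicator_le' (fun i hi => ?_) fun i _ => ?_)
  · simpa [hb.2 i hi, hc.2 i hi] using h i hi
  · exact nonneg_of_mem_natOrthant (add_mem hy hb.1).1 i

theorem neg_mem_natOn (hx : x ∈ natOn k I) (hxI : x ∈ zeroOn I) : -x ∈ natOn k I := by
  simpa using sub_mem_natOn hx (zero_mem _) fun i hi => (hxI i hi).le

theorem sub_mem_natOn_of_sub_mem_zeroOn (hx : x ∈ natOn k I) (hy : y ∈ natOn k I)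
    (h : y - x ∈ zeroOn I) : y - x ∈ natOn k I :=
  sub_mem_natOn hx hy fun i hi => (sub_eq_zero.1 (h i hi)).ge

theorem exists_nsmul_sub_mem_natOn (hξ : ξ ∈ natOn k I) (hx : x ∈ natOn k I)
    (h : ∀ i ∈ I, ξ i = 0 → x i = 0) : ∃ N : ℕ, N • ξ - x ∈ natOn k I := by
  have hlarge : ∀ i, ∃ N : ℕ, i ∈ I → x i ≤ N * ξ i := by
    intro i
    by_cases hi : i ∈ I ∧ ξ i ≠ 0
    · obtain ⟨N, hN⟩ := Archimedean.arch (x i)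
        (lt_of_le_of_ne (nonneg_of_mem_natOn hξ hi.1) hi.2.symm)
      exact ⟨N, fun _ => by simpa using hN⟩
    · refine ⟨0, fun hiI => ?_⟩
      simp [h i hiI (of_not_not fun h0 => hi ⟨hiI, h0⟩)]
  choose N hN using hlarge
  refine ⟨∑ i, N i, sub_mem_natOn hx (nsmul_mem hξ _) fun i hi => (hN i hi).trans ?_⟩
  have hle : N i ≤ ∑ j, N j := Finset.single_le_sum (fun _ _ => Nat.zero_le _) (Finset.mem_univ i)
  rw [Pi.smul_apply, nsmul_eq_mul]
  exact mul_le_mul_of_nonneg_right (mod_cast hle) (nonneg_of_mem_natOn hξ hi)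

theorem exists_mem_forall_eq_zero {ι : Type*} [Finite ι] {M : AddSubmonoid (ι → ℚ)} {I : Set ι}
    (hM : ∀ x ∈ M, ∀ i ∈ I, 0 ≤ x i) : ∃ y ∈ M, ∀ i ∈ I, y i = 0 → ∀ x ∈ M, x i = 0 := by
  classical
  cases nonempty_fintype ι
  have hchoice : ∀ i, ∃ y ∈ M, y i = 0 → ∀ x ∈ M, x i = 0 := by
    intro i
    by_cases h : ∃ y ∈ M, y i ≠ 0
    · obtain ⟨y, hy, hyi⟩ := h
      exact ⟨y, hy, fun h => absurd h hyi⟩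
    · push Not at h
      exact ⟨0, zero_mem _, fun _ => h⟩
  choose f hf hfzero using hchoice
  refine ⟨∑ i, f i, sum_mem fun i _ => hf i, fun i hi hzero => hfzero i ?_⟩
  rw [Finset.sum_apply] at hzero
  exact (Finset.sum_eq_zero_iff_of_nonneg fun j _ => hM _ (hf j) i hi).1 hzero i (Finset.mem_univ i)

end NatOn

/-- The effect `y - x` of a pair `(x, y)`. -/
def dispMap (d : ℕ) : PairQ d →ₗ[ℚ] QVec d := LinearMap.snd ℚ _ _ - LinearMap.fst ℚ _ _

@[simp]
theorem dispMap_apply {d : ℕ} (p : PairQ d) : dispMap d p = p.2 - p.1 := rfl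

namespace LevelSystem

open AmalgSystem

variable {d k : ℕ} {L : LevelSystem d k} {I J : Set (Fin d)} {T : AddSubmonoid (PairQ d)}
  {s r x y z ζ : QVec d} {a b : L.Run}

theorem periods_le_natZero (a : L.Run) : L.periods a ≤ (natZero d k).prod (natZero d k) := by
  rintro p ⟨b, hab, hb⟩
  obtain rfl : p = L.ends b - L.ends a := (sub_eq_of_eq_add' hb).symm
  exact ⟨sub_mem_natZero (L.ends_mem_natZero a).1 (L.ends_mem_natZero b).1 (L.monotone_ends hab).1,
    sub_mem_natZero (L.ends_mem_natZero a).2 (L.ends_mem_natZero b).2 (L.monotone_ends hab).2⟩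

variable (L I) in
/-- Reachability after raising the counters outside `I`. -/
def ReachesMod (x y : QVec d) : Prop := ∃ δ ∈ natOff k I, L.Reaches (x + δ) (y + δ)

theorem Reaches.reachesMod (h : L.Reaches x y) : L.ReachesMod I x y :=
  ⟨0, zero_mem _, by simpa using h⟩

namespace ReachesMod

theorem refl (x : QVec d) : L.ReachesMod I x x := (Reaches.refl x).reachesMod

theorem trans (h : L.ReachesMod I x y) (h' : L.ReachesMod I y z) : L.ReachesMod I x z := by
  obtain ⟨δ, hδ, h⟩ := h
  obtain ⟨δ', hδ', h'⟩ := h'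
  refine ⟨δ + δ', add_mem hδ hδ', ?_⟩
  have hleft := h.add_right hδ'.1
  have hright := h'.add_right hδ.1
  rw [add_right_comm] at hright
  simpa [add_assoc, add_comm δ'] using hleft.trans hright

theorem add_right (h : L.ReachesMod I x y) (hζ : ζ ∈ natOn k I) :
    L.ReachesMod I (x + ζ) (y + ζ) := by
  obtain ⟨δ, hδ, h⟩ := h
  obtain ⟨b, hb, hζ⟩ := hζ
  refine ⟨b + δ, add_mem hb hδ, ?_⟩
  convert h.add_right hζ using 1 <;> abel

theorem target_mem (h : L.ReachesMod I x y) (hx : x ∈ natOn k I) : y ∈ natOn k I := by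
  obtain ⟨δ, hδ, h⟩ := h
  obtain ⟨b, hb, hx⟩ := hx
  refine ⟨b + δ, add_mem hb hδ, ?_⟩
  have hreach := h.add_right hb.1
  rw [add_right_comm] at hreach
  simpa [add_assoc, add_comm δ] using hreach.target_mem (add_mem hx hδ.1)

theorem mono (h : L.ReachesMod J x y) (hIJ : I ⊆ J) : L.ReachesMod I x y := by
  obtain ⟨δ, hδ, h⟩ := h
  exact ⟨δ, natOff_antitone hIJ hδ, h⟩

end ReachesMod

variable (L I) in
/-- The effects, vanishing on `I`, of the paths that start at `s` modulo the counters outside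
`I`. -/
def cyclesMod (s : QVec d) : AddSubmonoid (QVec d) where
  carrier := {z | (z ∈ natOn k I ∧ z ∈ zeroOn I) ∧ L.ReachesMod I s (s + z)}
  zero_mem' := ⟨⟨zero_mem _, zero_mem _⟩, by simpa using ReachesMod.refl s⟩
  add_mem' := by
    rintro z z' ⟨⟨hz, hzI⟩, h⟩ ⟨⟨hz', hzI'⟩, h'⟩
    refine ⟨⟨add_mem hz hz', add_mem hzI hzI'⟩, ?_⟩
    have hshift := h'.add_right hz
    rw [add_right_comm, add_assoc] at hshift
    exact h.trans hshift

theorem mem_cyclesMod (hs : s ∈ natOn k I) (hz : z ∈ zeroOn I) (h : L.ReachesMod I s (s + z)) :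
    z ∈ L.cyclesMod I s := by
  refine ⟨⟨?_, hz⟩, h⟩
  simpa using sub_mem_natOn_of_sub_mem_zeroOn hs (h.target_mem hs) (by simpa using hz)

variable (L I T) in
/-- The vector `r` lies on a path, modulo the counters outside `I`, which leads from `s + p.1` to
`s + p.2` for some pair `p` in `T`. -/
def IsVisited (s r : QVec d) : Prop :=
  ∃ p ∈ T ⊓ (natOn k I).prod (natOn k I), L.ReachesMod I (s + p.1) r ∧ L.ReachesMod I r (s + p.2)

variable (L I T) in
/-- The run `a` lies on a path, modulo the counters outside `I`, which leads from `s + p.1` to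
`s + p.2` for some pair `p` in `T`. -/
def Occurs (s : QVec d) (a : L.Run) : Prop :=
  ∃ p ∈ T ⊓ (natOn k I).prod (natOn k I),
    L.ReachesMod I (s + p.1) (L.ends a).1 ∧ L.ReachesMod I (L.ends a).2 (s + p.2)

theorem Occurs.isVisited_fst (h : L.Occurs I T s a) : L.IsVisited I T s (L.ends a).1 := by
  obtain ⟨p, hp, h, h'⟩ := h
  exact ⟨p, hp, h, (reaches_ends a).reachesMod.trans h'⟩

theorem Occurs.isVisited_snd (h : L.Occurs I T s a) : L.IsVisited I T s (L.ends a).2 := by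
  obtain ⟨p, hp, h, h'⟩ := h
  exact ⟨p, hp, h.trans (reaches_ends a).reachesMod, h'⟩

variable (L I T) in
/-- The visited vectors above `s`, relative to `s`. -/
def intermediatesMod (s : QVec d) : AddSubmonoid (QVec d) where
  carrier := {ξ | ξ ∈ natOn k I ∧ L.IsVisited I T s (s + ξ)}
  zero_mem' := ⟨zero_mem _, 0, zero_mem _, .refl _, .refl _⟩
  add_mem' := by
    rintro ξ ξ' ⟨hξ, p, hp, h, h'⟩ ⟨hξ', q, hq, hq', hq''⟩
    refine ⟨add_mem hξ hξ', p + q, add_mem hp hq, ?_, ?_⟩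
    · refine .trans (y := s + ξ + q.1) ?_ ?_
      · simpa [add_assoc] using h.add_right hq.2.1
      · convert hq'.add_right hξ using 1 <;> abel
    · refine .trans (y := s + ξ + q.2) ?_ ?_
      · convert hq''.add_right hξ using 1 <;> abel
      · simpa [add_assoc] using h'.add_right hq.2.2

/-- Otherwise the difference could be pumped, giving an intermediate vector that is not zero on
`I`. -/
theorem IsVisited.sub_mem_zeroOn (hs : s ∈ natOn k I)
    (hzero : ∀ ξ ∈ L.intermediatesMod I T s, ξ ∈ zeroOn I) {r r' : QVec d}
    (hr : L.IsVisited I T s r) (hr' : L.IsVisited I T s r') (hle : ∀ i ∈ I, r i ≤ r' i) :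
    r' - r ∈ zeroOn I := by
  obtain ⟨p, ⟨hpT, hp⟩, h, h'⟩ := hr
  obtain ⟨q, ⟨hqT, hq⟩, hq', hq''⟩ := hr'
  have hsub : r' - r ∈ natOn k I := sub_mem_natOn (h.target_mem (add_mem hs hp.1))
    (hq'.target_mem (add_mem hs hq.1)) hle
  have hξ := hzero (p.1 + p.2 + (r' - r)) ⟨add_mem (add_mem hp.1 hp.2) hsub, p + q,
    ⟨add_mem hpT hqT, add_mem hp hq⟩, ?_, ?_⟩
  · intro i hi
    have hp₁ := nonneg_of_mem_natOn hp.1 hi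
    have hp₂ := nonneg_of_mem_natOn hp.2 hi
    have hsub := nonneg_of_mem_natOn hsub hi
    have hsum := hξ i hi
    simp only [Pi.add_apply] at hsum
    linarith
  · refine .trans (y := r' + p.1) ?_ ?_
    · convert hq'.add_right hp.1 using 1
      rw [Prod.fst_add]
      abel
    · convert h'.add_right (add_mem hsub hp.1) using 1 <;> abel
  · refine .trans (y := r' + p.2) ?_ ?_
    · convert h.add_right (add_mem hsub hp.2) using 1 <;> abel
    · convert hq''.add_right hp.2 using 1
      rw [Prod.snd_add]
      abel

theorem Occurs.sub_mem_zeroOn (hs : s ∈ natOn k I)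
    (hzero : ∀ ξ ∈ L.intermediatesMod I T s, ξ ∈ zeroOn I) (ha : L.Occurs I T s a)
    (hb : L.Occurs I T s b) (hab : a ≤ b) :
    L.ends b - L.ends a ∈ (zeroOn I).prod (zeroOn I) :=
  ⟨ha.isVisited_fst.sub_mem_zeroOn hs hzero hb.isVisited_fst fun i _ => (L.monotone_ends hab).1 i,
    ha.isVisited_snd.sub_mem_zeroOn hs hzero hb.isVisited_snd fun i _ => (L.monotone_ends hab).2 i⟩

theorem IsPath.occurs {p : PairQ d} (hp : p ∈ T ⊓ (natOn k I).prod (natOn k I)) {l : List L.Run}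
    (hl : L.IsPath x l y) (hx : L.ReachesMod I (s + p.1) x) (hy : L.ReachesMod I y (s + p.2))
    (ha : a ∈ l) : L.Occurs I T s a := by
  obtain ⟨l₁, l₂, rfl⟩ := List.append_of_mem ha
  obtain ⟨_, hl₁, rfl, hl₂⟩ := hl.exists_of_append
  have hl₁ : L.Reaches x (L.ends a).1 := ⟨l₁, hl₁⟩
  have hl₂ : L.Reaches (L.ends a).2 y := ⟨l₂, hl₂⟩
  exact ⟨p, hp, hx.trans hl₁.reachesMod, hl₂.reachesMod.trans hy⟩

end LevelSystem

/-! ### Cycles modulo an unconstrained set of counters -/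

section ClosedWalk

variable {α β M : Type*} {src tgt : α → β} {x : β} {l : List α}

theorem exists_eq_append_of_not_nodup (h : ¬ l.Nodup) :
    ∃ a l₁ l₂ l₃, l = l₁ ++ a :: (l₂ ++ a :: l₃) := by
  obtain ⟨a, ha⟩ := List.exists_duplicate_iff_not_nodup.2 h
  obtain ⟨m, m', rfl, hm, hm'⟩ := List.cons_sublist_iff.1 (List.duplicate_iff_sublist.1 ha)
  obtain ⟨l₁, l₂, rfl⟩ := List.append_of_mem hm
  obtain ⟨l₂', l₃, rfl⟩ := List.append_of_mem (List.singleton_sublist.1 hm')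
  exact ⟨a, l₁, l₂ ++ l₂', l₃, by simp⟩

/-- A repetition splits a closed walk into two shorter ones. -/
theorem IsWalk.sum_map_mem [AddCommMonoid M] {f : α → M} {K : AddSubmonoid M}
    (hK : ∀ l x, l.Nodup → IsWalk src tgt x l x → (l.map f).sum ∈ K)
    (h : IsWalk src tgt x l x) : (l.map f).sum ∈ K := by
  induction hn : l.length using Nat.strong_induction_on generalizing l x with
  | h n ih =>
    by_cases hl : l.Nodup
    · exact hK l x hl h
    · obtain ⟨a, l₁, l₂, l₃, rfl⟩ := exists_eq_append_of_not_nodup hl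
      obtain ⟨_, h₁, rfl, h₂⟩ := h.exists_of_append
      obtain ⟨_, h₂, rfl, h₃⟩ := h₂.exists_of_append
      have hinner := ih _ (by simp [← hn]; omega) (l := a :: l₂) ⟨rfl, h₂⟩ rfl
      have houter := ih _ (by simp [← hn]) (l := l₁ ++ a :: l₃) (h₁.append ⟨rfl, h₃⟩) rfl
      convert add_mem hinner houter using 1
      simp only [List.map_append, List.map_cons, List.sum_append, List.sum_cons, add_assoc,
        add_left_comm]

end ClosedWalk

section Rays

variable {E : Type*} [AddCommGroup E] [Module ℚ E] {P : AddSubmonoid E} {W : Submodule ℚ E}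

variable (P W) in
/-- The directions of the rays of `P` that start in `W`. -/
def raysFrom : AddSubmonoid E where
  carrier := {z | ∃ x ∈ W, ∀ m : ℕ, x + m • z ∈ P}
  zero_mem' := ⟨0, zero_mem _, by simp [zero_mem]⟩
  add_mem' := by
    rintro z z' ⟨x, hx, hz⟩ ⟨x', hx', hz'⟩
    refine ⟨x + x', add_mem hx hx', fun m => ?_⟩
    simpa [add_add_add_comm] using add_mem (hz m) (hz' m)

theorem hull_raysFrom_inf_le :
    PointedCone.hull ℚ (raysFrom P W : Set E) ⊓ (W : PointedCone ℚ E) ≤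
      dirCone (P ⊓ W.toAddSubmonoid) := by
  rintro z ⟨hz, hzW : z ∈ W⟩
  obtain ⟨n, hn, x, hx, hz⟩ := mem_hull_coe_iff.1 hz
  exact ⟨n, hn, x, fun m => ⟨by simpa [mul_smul] using hz m,
    W.add_mem hx (W.toAddSubmonoid.nsmul_mem hzW _)⟩⟩

theorem isAlmostFG_hull_inf_of_le_raysFrom [FiniteDimensional ℚ E] {U : PointedCone ℚ E}
    (hU : IsTameCone U) (hle : ∀ z ∈ P, z ∈ W → z ∈ U)
    (hrays : U ⊓ W ≤ PointedCone.hull ℚ (raysFrom P W : Set E)) :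
    IsAlmostFG (PointedCone.hull ℚ (P : Set E) ⊓ (W : PointedCone ℚ E)) := by
  rw [← hull_inf_submodule]
  refine (hU W).of_le_of_le_algClosure
    (Submodule.span_le.2 fun z hz => ⟨hle z hz.1 hz.2, hz.2⟩) ?_
  exact (le_inf hrays inf_le_right).trans
    (hull_raysFrom_inf_le.trans (dirCone_le_algClosure_hull _))

end Rays

namespace LevelSystem

open AmalgSystem

variable {d k : ℕ} {L : LevelSystem d k} {I J : Set (Fin d)} {T : AddSubmonoid (PairQ d)}
  {W : Submodule ℚ (QVec d)} {s r x y z : QVec d} {a b : L.Run}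

theorem domRestrict_eq_domRestrict_iff :
    I.domRestrict x = I.domRestrict y ↔ x - y ∈ zeroOn I := by
  simp [Set.domRestrict_eq_domRestrict_iff, Set.EqOn, zeroOn, sub_eq_zero]

variable (L I) in
/-- The list `l` of runs from `G` is a walk from `x` to `y`, as far as the counters in `I` are
concerned. -/
abbrev IsWalkMod {G : Finset L.Run} (x : I → ℚ) (l : List G) (y : I → ℚ) : Prop :=
  IsWalk (fun a : G => I.domRestrict (L.ends a).1) (fun a : G => I.domRestrict (L.ends a).2) x l y

variable (L) in
/-- The total effect of a list of runs. -/
def effect {G : Finset L.Run} (l : List G) : QVec d :=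
  (l.map fun a : G => dispMap d (L.ends a)).sum

theorem IsWalkMod.reachesMod {G : Finset L.Run} {l : List G} (hx : x ∈ natOn k I)
    (h : L.IsWalkMod I (I.domRestrict x) l (I.domRestrict y)) :
    L.ReachesMod I x (x + L.effect l) ∧ x + L.effect l - y ∈ zeroOn I := by
  induction l generalizing x with
  | nil => exact ⟨by simpa [effect] using ReachesMod.refl x,
      by simpa [effect] using domRestrict_eq_domRestrict_iff.1 h⟩
  | cons a l ih =>
    obtain ⟨hax, hl⟩ := h
    have hsub : x - (L.ends a).1 ∈ natOn k I := sub_mem_natOn_of_sub_mem_zeroOn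
      (natZero_le_natOn (L.ends_mem_natZero a).1) hx (domRestrict_eq_domRestrict_iff.1 hax.symm)
    have hstep : L.ReachesMod I x (x + dispMap d (L.ends a)) := by
      convert (reaches_ends a.1).reachesMod.add_right hsub using 1
      · abel
      · rw [dispMap_apply]
        abel
    have htarget : I.domRestrict (x + dispMap d (L.ends a)) = I.domRestrict (L.ends a).2 := by
      rw [domRestrict_eq_domRestrict_iff] at hax ⊢
      convert neg_mem hax using 1
      rw [dispMap_apply]
      abel
    obtain ⟨hreach, hzero⟩ := ih (hstep.target_mem hx) (htarget ▸ hl)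
    rw [add_assoc] at hreach hzero
    exact ⟨hstep.trans hreach, hzero⟩

variable (L I) in
/-- The cone of the effects obtained from a path by enlarging its runs, without any change in the
counters in `I`. -/
def enlargementCone (G : Finset L.Run) : PointedCone ℚ (QVec d) :=
  ⨆ a : G, (PointedCone.hull ℚ ((L.periods a ⊓ ((zeroOn I).prod (zeroOn I)).toAddSubmonoid :
    AddSubmonoid (PairQ d)) : Set (PairQ d))).map (dispMap d)

variable (L I) in
/-- The effects of the closed walks without repetition over `G`. -/
def simpleCycleEffects (G : Finset L.Run) : Set (QVec d) :=
  {w | ∃ l : List G, l.Nodup ∧ ∃ x, L.IsWalkMod I x l x ∧ L.effect l = w}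

theorem finite_simpleCycleEffects (G : Finset L.Run) : (L.simpleCycleEffects I G).Finite := by
  classical
  refine (Set.finite_range fun l : {l : List G // l.Nodup} => L.effect l.1).subset ?_
  rintro w ⟨l, hl, -, -, rfl⟩
  exact ⟨⟨l, hl⟩, rfl⟩

variable (L I) in
/-- The cone generated by the cycles over `G` and by the enlargements of runs from `G`. -/
def cycleCone (G : Finset L.Run) : PointedCone ℚ (QVec d) :=
  PointedCone.hull ℚ (L.simpleCycleEffects I G) ⊔ L.enlargementCone I G

theorem isTameCone_cycleCone (htame : ∀ a, IsTame (L.periods a)) (G : Finset L.Run) :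
    IsTameCone (L.cycleCone I G) :=
  (isTameCone_of_fg (Submodule.fg_span (finite_simpleCycleEffects G))).sup
    (.iSup fun a => ((htame a).inf_submodule _).isTameCone_hull.map _)

theorem IsPath.exists_isWalkMod {G : Finset L.Run} {l : List L.Run} (hl : L.IsPath x l y)
    (hG : ∀ a ∈ l, ∃ b ∈ G, b ≤ a ∧ L.ends a - L.ends b ∈ (zeroOn I).prod (zeroOn I)) :
    ∃ g : List G, L.IsWalkMod I (I.domRestrict x) g (I.domRestrict y) ∧
      y - x - L.effect g ∈ L.enlargementCone I G := by
  induction l generalizing x with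
  | nil =>
    cases hl
    exact ⟨[], rfl, by simp [effect]⟩
  | cons a l ih =>
    obtain ⟨rfl, hl⟩ := hl
    obtain ⟨g, hg, hmem⟩ := ih hl fun b hb => hG b (List.mem_cons_of_mem a hb)
    obtain ⟨b, hb, hba, hsub⟩ := hG a List.mem_cons_self
    have hstart : I.domRestrict (L.ends a).1 = I.domRestrict (L.ends b).1 :=
      domRestrict_eq_domRestrict_iff.2 hsub.1
    have hend : I.domRestrict (L.ends a).2 = I.domRestrict (L.ends b).2 :=
      domRestrict_eq_domRestrict_iff.2 hsub.2
    refine ⟨⟨b, hb⟩ :: g, ⟨hstart.symm, by simpa only [hend] using hg⟩, ?_⟩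
    have henlarge : dispMap d (L.ends a - L.ends b) ∈ L.enlargementCone I G :=
      Submodule.mem_iSup_of_mem (⟨b, hb⟩ : G)
        ⟨_, Submodule.subset_span ⟨sub_mem_periods hba, hsub⟩, rfl⟩
    convert add_mem henlarge hmem using 1
    simp only [effect, List.map_cons, List.sum_cons, dispMap_apply, Prod.fst_sub, Prod.snd_sub]
    abel

theorem IsPath.sub_mem_cycleCone {G : Finset L.Run} {l : List L.Run} (hl : L.IsPath x l y)
    (hG : ∀ a ∈ l, ∃ b ∈ G, b ≤ a ∧ L.ends a - L.ends b ∈ (zeroOn I).prod (zeroOn I))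
    (hxy : y - x ∈ zeroOn I) : y - x ∈ L.cycleCone I G := by
  obtain ⟨g, hg, hmem⟩ := IsPath.exists_isWalkMod hl hG
  rw [domRestrict_eq_domRestrict_iff.2 hxy] at hg
  have heffect : L.effect g ∈ (PointedCone.hull ℚ (L.simpleCycleEffects I G)).toAddSubmonoid :=
    hg.sum_map_mem fun g x hg hgx => Submodule.subset_span ⟨g, hg, x, hgx, rfl⟩
  have hsum : y - x - L.effect g + L.effect g ∈ L.cycleCone I G :=
    add_mem (Submodule.mem_sup_right hmem) (Submodule.mem_sup_left heffect)
  rwa [sub_add_cancel] at hsum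

theorem reachesMod_add_nsmul_of_mem_cyclesMod {p : PairQ d} (h : L.ReachesMod I (s + p.1) r)
    (h' : L.ReachesMod I r (s + p.2)) (hz : z ∈ L.cyclesMod I r) (m : ℕ) :
    L.ReachesMod I (s + p.1) (s + p.2 + m • z) := by
  obtain ⟨⟨hmem, -⟩, hm⟩ := nsmul_mem hz m
  exact (h.trans hm).trans (h'.add_right hmem)

theorem reachesMod_add_nsmul_of_mem_periods {p q : PairQ d}
    (h : L.ReachesMod I (s + p.1) (L.ends a).1) (h' : L.ReachesMod I (L.ends a).2 (s + p.2))
    (hq : q ∈ L.periods a) (hqI : q ∈ (zeroOn I).prod (zeroOn I)) (m : ℕ) :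
    L.ReachesMod I (s + p.1) (s + p.2 + m • dispMap d q) := by
  obtain ⟨b, -, hb⟩ := nsmul_mem hq m
  have hmq := periods_le_natZero a (nsmul_mem hq m)
  have hb : L.ReachesMod I ((L.ends a).1 + m • q.1) ((L.ends a).2 + m • q.2) := by
    convert (reaches_ends b).reachesMod using 1 <;> rw [hb] <;> rfl
  have hneg : -(m • q.1) ∈ natOn k I :=
    neg_mem_natOn (natZero_le_natOn hmq.1) (nsmul_mem hqI.1 m)
  have hreach := (((h.add_right (natZero_le_natOn hmq.1)).trans hb).trans
    (h'.add_right (natZero_le_natOn hmq.2))).add_right hneg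
  convert hreach using 1
  · simp
  · rw [dispMap_apply, smul_sub]
    abel

variable (I W) in
/-- The pairs `(x, x + z)` of vectors vanishing on `I` with `z` in `W`. -/
def closingPairs : AddSubmonoid (PairQ d) :=
  ((zeroOn I).comap (LinearMap.fst ℚ _ _) ⊓ (W ⊓ zeroOn I).comap (dispMap d)).toAddSubmonoid

theorem mem_raysFrom_cyclesMod (hs : s ∈ natOn k I) {p : PairQ d}
    (hp : p ∈ closingPairs I W ⊓ (natOn k I).prod (natOn k I)) (hz : z ∈ zeroOn I)
    (h : ∀ m : ℕ, L.ReachesMod I (s + p.1) (s + p.2 + m • z)) :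
    z ∈ raysFrom (L.cyclesMod I s) W := by
  obtain ⟨⟨hp₁ : p.1 ∈ zeroOn I, hpW, hpI⟩, hp, -⟩ := hp
  refine ⟨p.2 - p.1, hpW, fun m => mem_cyclesMod hs (add_mem hpI (nsmul_mem hz m)) ?_⟩
  convert (h m).add_right (neg_mem_natOn hp hp₁) using 1 <;> abel

theorem cycleCone_le_hull_raysFrom (hs : s ∈ natOn k I) {G : Finset L.Run}
    (hG : ∀ a ∈ G, L.Occurs I (closingPairs I W) s a) :
    L.cycleCone I G ≤ PointedCone.hull ℚ (raysFrom (L.cyclesMod I s) W : Set (QVec d)) := by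
  refine sup_le (Submodule.span_le.2 ?_) (iSup_le fun a => ?_)
  · rintro _ ⟨_ | ⟨a, l⟩, -, x, hl, rfl⟩
    · exact zero_mem _
    obtain ⟨p, hp, h, h'⟩ := (hG a a.2).isVisited_fst
    have hsource := natZero_le_natOn (I := I) (L.ends_mem_natZero a).1
    obtain ⟨hreach, hzero⟩ := IsWalkMod.reachesMod hsource (hl.1.symm ▸ hl)
    rw [add_sub_cancel_left] at hzero
    exact Submodule.subset_span <| mem_raysFrom_cyclesMod hs hp hzero <|
      reachesMod_add_nsmul_of_mem_cyclesMod h h' (mem_cyclesMod hsource hzero hreach)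
  · rw [PointedCone.map, Submodule.map_span_le]
    rintro q ⟨hq, hqI⟩
    obtain ⟨p, hp, h, h'⟩ := hG a a.2
    exact Submodule.subset_span <| mem_raysFrom_cyclesMod hs hp
      (Submodule.sub_mem _ hqI.2 hqI.1) (reachesMod_add_nsmul_of_mem_periods h h' hq hqI)

theorem isAlmostFG_hull_cyclesMod_inf_of_intermediates_eq_zero
    (htame : ∀ a, IsTame (L.periods a)) (hs : s ∈ natZero d k)
    (hzero : ∀ ξ ∈ L.intermediatesMod I (closingPairs I W) s, ξ ∈ zeroOn I) :
    IsAlmostFG (PointedCone.hull ℚ (L.cyclesMod I s : Set (QVec d)) ⊓ W) := by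
  have hs' : s ∈ natOn k I := natZero_le_natOn hs
  obtain ⟨G, hG, hbasis⟩ := exists_finset_forall_exists_le {a | L.Occurs I (closingPairs I W) s a}
  refine isAlmostFG_hull_inf_of_le_raysFrom (isTameCone_cycleCone (I := I) htame G) ?_
    (inf_le_left.trans (cycleCone_le_hull_raysFrom hs' hG))
  rintro z hz hzW
  obtain ⟨⟨hzI, hzzero⟩, δ, hδ, l, hl⟩ := hz
  have hδI : δ ∈ natOn k I := natZero_le_natOn hδ.1
  have hpair : ((δ, δ + z) : PairQ d) ∈ closingPairs I W ⊓ (natOn k I).prod (natOn k I) :=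
    ⟨⟨hδ.2, by simpa using ⟨hzW, hzzero⟩⟩, hδI, add_mem hδI hzI⟩
  have hsub := IsPath.sub_mem_cycleCone (G := G) hl (fun a ha => ?_) (by simpa using hzzero)
  · simpa using hsub
  · have hocc := IsPath.occurs hpair hl (.refl _) (by rw [add_assoc, add_comm δ]; exact .refl _) ha
    obtain ⟨b, hb, hba⟩ := hbasis a hocc
    exact ⟨b, hb, hba, Occurs.sub_mem_zeroOn hs' hzero (hG b hb) hocc hba⟩

theorem isAlmostFG_hull_cyclesMod_inf_of_pump (hs : s ∈ natZero d k) {ξ : QVec d}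
    (hξ : ξ ∈ L.intermediatesMod I (closingPairs I W) s)
    (htame : IsTameCone
      (PointedCone.hull ℚ (L.cyclesMod {i ∈ I | ξ i = 0} s : Set (QVec d)))) :
    IsAlmostFG (PointedCone.hull ℚ (L.cyclesMod I s : Set (QVec d)) ⊓ W) := by
  have hsub : {i ∈ I | ξ i = 0} ⊆ I := Set.sep_subset _ _
  have hs' : s ∈ natOn k I := natZero_le_natOn hs
  refine isAlmostFG_hull_inf_of_le_raysFrom (htame.inf_submodule (zeroOn I)) ?_ ?_
  · rintro z ⟨⟨hz, hzI⟩, hreach⟩ -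
    exact ⟨Submodule.subset_span ⟨⟨natOn_antitone hsub hz, fun i hi => hzI i hi.1⟩,
      hreach.mono hsub⟩, hzI⟩
  refine inf_le_left.trans ?_
  rw [← hull_inf_submodule]
  refine Submodule.span_mono ?_
  rintro z ⟨⟨-, δ, hδ, hreach⟩, hz⟩
  obtain ⟨N, hN⟩ := exists_nsmul_sub_mem_natOn hξ.1 (natZero_le_natOn hδ.1)
    fun i hi h => hδ.2 i ⟨hi, h⟩
  obtain ⟨hNξ, p, hp, h, h'⟩ := nsmul_mem hξ N
  have hcycle : L.ReachesMod I (s + N • ξ) (s + N • ξ + z) := by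
    convert (hreach.reachesMod (I := I)).add_right hN using 1 <;> abel
  exact mem_raysFrom_cyclesMod hs' hp hz <| reachesMod_add_nsmul_of_mem_cyclesMod h h' <|
    mem_cyclesMod (add_mem hs' hNξ) hz hcycle

theorem isTameCone_hull_cyclesMod (htame : ∀ a, IsTame (L.periods a)) (I : Set (Fin d))
    (hs : s ∈ natZero d k) :
    IsTameCone (PointedCone.hull ℚ (L.cyclesMod I s : Set (QVec d))) := by
  induction I using WellFoundedLT.induction with
  | ind I ih =>
    intro W
    obtain ⟨ξ, hξ, hmax⟩ := exists_mem_forall_eq_zero (I := I)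
      (M := L.intermediatesMod I (closingPairs I W) s) fun x hx i hi => nonneg_of_mem_natOn hx.1 hi
    by_cases hzero : ∀ i ∈ I, ξ i = 0
    · exact isAlmostFG_hull_cyclesMod_inf_of_intermediates_eq_zero htame hs
        fun x hx i hi => hmax i hi (hzero i hi) x hx
    · push Not at hzero
      obtain ⟨i, hi, hξi⟩ := hzero
      exact isAlmostFG_hull_cyclesMod_inf_of_pump hs hξ <|
        ih _ ⟨Set.sep_subset _ _, fun hle => hξi (hle hi).2⟩

end LevelSystem

/-! ### Productions with a prescribed effect -/

section Asymptotics

theorem mem_algClosure_of_forall_nsmul_add_mem {E : Type*} [AddCommGroup E] [Module ℚ E]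
    {U : PointedCone ℚ E} {v m : E} (h : ∀ R : ℕ, R • v + m ∈ U) : v ∈ algClosure U := by
  have hm : m ∈ U := by simpa using h 0
  refine ⟨m, hm, fun ε hε => ?_⟩
  obtain ⟨R, hR⟩ := exists_nat_gt ε⁻¹
  have hRpos : (0 : ℚ) < R := (inv_pos.2 hε).trans hR
  have hle : (R : ℚ)⁻¹ ≤ ε := (inv_lt_of_inv_lt₀ hε hR).le
  convert add_mem (U.smul_mem (inv_nonneg.2 hRpos.le) (h R)) (U.smul_mem (sub_nonneg.2 hle) hm)
    using 1
  rw [smul_add, ← Nat.cast_smul_eq_nsmul ℚ, inv_smul_smul₀ hRpos.ne', sub_smul]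
  abel

theorem dirCone_eq_hull_raysFrom {E : Type*} [AddCommGroup E] [Module ℚ E] (P : AddSubmonoid E) :
    dirCone P = PointedCone.hull ℚ (raysFrom P ⊤ : Set E) := by
  refine le_antisymm ?_ (by simpa using hull_raysFrom_inf_le (P := P) (W := ⊤))
  rintro v ⟨n, hn, x, hx⟩
  exact mem_hull_coe_iff.2 ⟨n, hn, x, trivial, fun m => by simpa [mul_smul] using hx m⟩

theorem mem_natZero_of_forall_add_nsmul_mem {d k : ℕ} {x z : QVec d}
    (h : ∀ m : ℕ, x + m • z ∈ natZero d k) : z ∈ natZero d k := by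
  have hx : x ∈ natZero d k := by simpa using h 0
  have hxz : x + z ∈ natZero d k := by simpa using h 1
  have hz : 0 ≤ z := by
    intro i
    by_contra! hi
    obtain ⟨m, hm⟩ := Archimedean.arch (x i + 1) (neg_pos.2 hi)
    have hxm := nonneg_of_mem_natOrthant (h m).1 i
    simp only [smul_neg, Pi.add_apply, Pi.smul_apply, Pi.zero_apply] at hm hxm
    linarith
  simpa using sub_mem_natZero hx hxz (le_add_of_nonneg_right hz)

theorem exists_nsmul_sub_mem_natZero {d k : ℕ} {I : Set (Fin d)} {x y : QVec d}
    (hy : y ∈ natZero d k) (hyI : ∀ i, y i = 0 → i ∈ I) (hx : x ∈ natOff k I) :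
    ∃ N : ℕ, N • y - x ∈ natZero d k := by
  obtain ⟨N, hN⟩ := exists_nsmul_sub_mem_natOn (I := Set.univ) (natZero_le_natOn hy)
    (natZero_le_natOn hx.1) fun i _ hi => hx.2 i (hyI i hi)
  exact ⟨N, natOn_univ_le hN⟩

theorem mem_cone_of_nsmul_mem {E : Type*} [AddCommGroup E] [Module ℚ E] {C : PointedCone ℚ E}
    {n : ℕ} (hn : 0 < n) {v : E} (h : n • v ∈ C) : v ∈ C := by
  convert C.smul_mem (inv_nonneg.2 (Nat.cast_nonneg (α := ℚ) n)) h using 1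
  rw [← Nat.cast_smul_eq_nsmul ℚ, inv_smul_smul₀ (Nat.cast_ne_zero.2 hn.ne')]

end Asymptotics

section Reversible

variable {E F : Type*} [AddCommGroup E] [AddCommGroup F] {M : AddSubmonoid (E × F)}

variable (M) in
/-- The vectors `w` such that both `(w, 0)` and `(-w, 0)` belong to `M`. -/
def reversible : AddSubmonoid E :=
  M.comap (AddMonoidHom.inl E F) ⊓ M.comap (-AddMonoidHom.inl E F)

theorem mem_reversible {w : E} : w ∈ reversible M ↔ (w, 0) ∈ M ∧ (-w, 0) ∈ M := by
  simp [reversible]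

theorem mem_hull_comap_inr_of_mem_span_reversible [Module ℚ E] [Module ℚ F] {w : E} {z : F}
    (h : (w, z) ∈ M) (hw : w ∈ Submodule.span ℚ (reversible M : Set E)) :
    z ∈ PointedCone.hull ℚ (M.comap (AddMonoidHom.inr E F) : Set F) := by
  obtain ⟨n, hn, a, ha, b, hb, hab⟩ := exists_nsmul_eq_sub_of_mem_span hw
  refine mem_hull_coe_iff.2 ⟨n, hn, ?_⟩
  have hsum := add_mem (add_mem (nsmul_mem h n) (mem_reversible.1 ha).2) (mem_reversible.1 hb).1
  have hzero : n • w + -a + b = 0 := by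
    rw [hab]
    abel
  simpa [hzero] using hsum

end Reversible

namespace LevelSystem

open AmalgSystem

variable {d k : ℕ} {L : LevelSystem d k} {I J : Set (Fin d)} {T T' : AddSubmonoid (PairQ d)}
  {c r w z α β X Y : QVec d} {p q u : PairQ d} {v v₀ : PairQ d × QVec d} {a b : L.Run}

variable (L T) in
/-- The triples consisting of a pair `(x, y)` in `T` and a vector `X` such that `c + x` can be
turned into `c + X` and then into `c + y`. -/
def visits (c : QVec d) : AddSubmonoid (PairQ d × QVec d) where
  carrier := {v | v.1 ∈ T ∧ (v.1.1, v.2) ∈ L.productions c ∧ (v.2, v.1.2) ∈ L.productions c}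
  zero_mem' := ⟨zero_mem _, zero_mem _, zero_mem _⟩
  add_mem' := fun h h' => ⟨add_mem h.1 h'.1, add_mem h.2.1 h'.2.1, add_mem h.2.2 h'.2.2⟩

theorem snd_mem_natZero_of_mem_visits (hv : v ∈ L.visits T c) : v.2 ∈ natZero d k := hv.2.1.1.2

theorem add_mem_productions_of_mem_visits (hv : v ∈ L.visits T c)
    (hq : q ∈ L.productions (c + v.2)) : v.1 + q ∈ L.productions c := by
  obtain ⟨-, ⟨⟨hv₁, -⟩, h⟩, ⟨-, hv₂⟩, h'⟩ := hv
  obtain ⟨⟨hq₁, hq₂⟩, hq⟩ := hq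
  refine ⟨⟨add_mem hv₁ hq₁, add_mem hv₂ hq₂⟩, ?_⟩
  simpa [add_assoc] using ((h.add_right hq₁).trans hq).trans (h'.add_right hq₂)

variable (L T I J) in
/-- The pairs `(w, z)` such that the effect `w + n • z` can be realized for every `n`, at the price
of raising the source by a vector vanishing on `I`, and by `n` times a vector vanishing on `J`. -/
def insertions (c : QVec d) : AddSubmonoid (PairQ d) where
  carrier := {q | ∃ p ∈ T, ∃ α ∈ natOff k I, ∃ β ∈ natOff k J,
    ∀ n : ℕ, (p.1 + α + n • β, p.2 + α + q.1 + n • (β + q.2)) ∈ L.productions c}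
  zero_mem' := ⟨0, zero_mem _, 0, zero_mem _, 0, zero_mem _, fun n => by simp [← Prod.zero_eq_mk]⟩
  add_mem' := by
    rintro q q' ⟨p, hp, α, hα, β, hβ, h⟩ ⟨p', hp', α', hα', β', hβ', h'⟩
    refine ⟨p + p', add_mem hp hp', α + α', add_mem hα hα', β + β', add_mem hβ hβ', fun n => ?_⟩
    convert add_mem (h n) (h' n) using 1
    ext1 <;> simp only [Prod.fst_add, Prod.snd_add, smul_add] <;> abel

theorem mem_insertions (hp : p ∈ T ⊓ (natZero d k).prod (natZero d k)) (hα : α ∈ natOff k I)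
    (hβ : β ∈ natOff k J) (hw : w ∈ natOn k I) (hz : β + z ∈ natZero d k)
    (h : ∀ n : ℕ, L.Reaches (c + p.1 + α + n • β) (c + p.2 + α + w + n • (β + z))) :
    (w, z) ∈ L.insertions I J T c := by
  obtain ⟨b, hb, hwb⟩ := hw
  refine ⟨p, hp.1, α + b, add_mem hα hb, β, hβ, fun n => ⟨⟨?_, ?_⟩, ?_⟩⟩
  · exact add_mem (add_mem hp.2.1 (add_mem hα.1 hb.1)) (nsmul_mem hβ.1 n)
  · have hsnd : p.2 + (α + b) + w + n • (β + z) = p.2 + (α + (w + b)) + n • (β + z) := by abel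
    change p.2 + (α + b) + w + n • (β + z) ∈ natZero d k
    rw [hsnd]
    exact add_mem (add_mem hp.2.2 (add_mem hα.1 hwb)) (nsmul_mem hz n)
  · convert (h n).add_right hb.1 using 1
    · simp only
      abel
    · simp only
      abel

theorem mem_insertions_of_reachesMod (hp : p ∈ T ⊓ (natZero d k).prod (natZero d k))
    (hw : w ∈ natOn k I) (h : L.ReachesMod I (c + p.1) (c + p.2 + w)) :
    (w, 0) ∈ L.insertions I J T c := by
  obtain ⟨δ, hδ, h⟩ := h
  refine mem_insertions hp hδ (zero_mem _) hw (by simp [zero_mem]) fun n => ?_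
  convert h using 1
  · simp
  · simp only [add_zero, smul_zero]
    abel

theorem Occurs.dispMap_sub_mem_reversible (hT : T ≤ (natZero d k).prod (natZero d k))
    (ha : L.Occurs I T c a) (hb : L.Occurs I T c b) (hab : a ≤ b)
    (hsub : L.ends b - L.ends a ∈ (zeroOn I).prod (zeroOn I)) :
    dispMap d (L.ends b - L.ends a) ∈ reversible (L.insertions I J T c) := by
  obtain ⟨p, ⟨hp, -⟩, h, h'⟩ := ha
  obtain ⟨p', ⟨hp', -⟩, hb, hb'⟩ := hb
  have hends := add_sub_cancel (L.ends a) (L.ends b)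
  obtain ⟨hq₁, hq₂⟩ := periods_le_natZero a (sub_mem_periods hab)
  generalize L.ends b - L.ends a = q at *
  have hq₁ := natZero_le_natOn (I := I) hq₁
  have hq₂ := natZero_le_natOn (I := I) hq₂
  have hneg₁ := neg_mem_natOn hq₁ hsub.1
  have hneg₂ := neg_mem_natOn hq₂ hsub.2
  have hrun : L.ReachesMod I ((L.ends a).1 + q.1) ((L.ends a).2 + q.2) := by
    convert (reaches_ends b).reachesMod (I := I) using 1 <;> rw [← hends] <;> rfl
  rw [← hends] at hb hb'
  refine mem_reversible.2 ⟨mem_insertions_of_reachesMod ⟨hp, hT hp⟩ ?_ ?_,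
    mem_insertions_of_reachesMod ⟨hp', hT hp'⟩ ?_ ?_⟩
  · simpa [sub_eq_add_neg] using add_mem hq₂ hneg₁
  · convert (((h.add_right hq₁).trans hrun).trans (h'.add_right hq₂)).add_right hneg₁ using 1
    · abel
    · rw [dispMap_apply]
      abel
  · simpa [sub_eq_add_neg] using add_mem hq₁ hneg₂
  · have hrun' := (reaches_ends a).reachesMod.add_right hq₁
    convert (hb.trans hrun').trans (by
      convert hb'.add_right (add_mem hq₁ hneg₂) using 1
      rw [Prod.snd_add]
      abel) using 1
    rw [dispMap_apply]
    abel

theorem mem_zeroOn_of_mem_intermediatesMod (hT : T ≤ (natZero d k).prod (natZero d k))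
    (hv : v ∈ L.visits T c) (hvI : ∀ i, v.2 i = 0 → i ∈ I)
    (hzero : ∀ v ∈ L.visits T c, v.2 ∈ zeroOn I) {ξ : QVec d}
    (hξ : ξ ∈ L.intermediatesMod I T c) : ξ ∈ zeroOn I := by
  obtain ⟨⟨b, hb, hξb⟩, p, ⟨hp, -⟩, ⟨δ, hδ, h⟩, ⟨δ', hδ', h'⟩⟩ := hξ
  obtain ⟨N, hN⟩ := exists_nsmul_sub_mem_natZero (snd_mem_natZero_of_mem_visits hv) hvI
    (add_mem (add_mem hδ hδ') hb)
  have hvN := nsmul_mem hv N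
  obtain ⟨-, ⟨⟨hv₁, -⟩, hreach⟩, ⟨-, hv₂⟩, hreach'⟩ := hvN
  have hmem : ξ + N • v.2 ∈ natZero d k := by
    convert add_mem (add_mem (add_mem hξb hδ.1) hδ'.1) hN using 1
    abel
  have hvisit : (p + N • v.1, ξ + N • v.2) ∈ L.visits T c := by
    refine ⟨add_mem hp (nsmul_mem hv.1 N), ⟨⟨add_mem (hT hp).1 hv₁, hmem⟩, ?_⟩,
      ⟨hmem, add_mem (hT hp).2 hv₂⟩, ?_⟩
    · convert (hreach.add_right (hT hp).1).trans (by
        convert h.add_right (add_mem (add_mem hδ'.1 hb.1) hN) using 1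
        rw [Prod.smul_snd]
        abel) using 1 <;> simp only [Prod.fst_add, Prod.smul_fst] <;> abel
    · convert (h'.add_right (add_mem (add_mem hδ.1 hb.1) hN)).trans (by
        convert hreach'.add_right (hT hp).2 using 1
        rw [Prod.smul_snd]
        abel) using 1 <;> simp only [Prod.snd_add, Prod.smul_fst, Prod.smul_snd] <;> abel
  simpa using Submodule.sub_mem _ (hzero _ hvisit) (Submodule.smul_of_tower_mem _ N (hzero v hv))

theorem mem_insertions_of_mem_cyclesMod (hT : T ≤ (natZero d k).prod (natZero d k))
    (hr : r ∈ natZero d k) (h : L.IsVisited I T c r) (hz : z ∈ L.cyclesMod I r)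
    (hzJ : z ∈ zeroOn J) : (0, z) ∈ L.insertions I J T c := by
  obtain ⟨p, ⟨hp, -⟩, ⟨δ, hδ, h⟩, ⟨δ', hδ', h'⟩⟩ := h
  obtain ⟨-, δ₀, hδ₀, hcycle⟩ := hz
  rw [add_right_comm] at hcycle
  have hs := add_mem hr hδ₀.1
  have hsz := hcycle.target_mem hs
  generalize hs_eq : r + δ₀ = s at *
  have hβz : Jᶜ.indicator s + z = Jᶜ.indicator (s + z) := by
    have hz_eq : Jᶜ.indicator z = z := Set.indicator_eq_self.2 fun i hi hiJ => hi (hzJ i hiJ)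
    rw [Set.indicator_add', hz_eq]
  have hβ := indicator_compl_mem_natOff (I := J) hs
  have hβz_mem : Jᶜ.indicator s + z ∈ natZero d k := hβz ▸ indicator_mem_natZero hsz _
  have hloop : (Jᶜ.indicator s, Jᶜ.indicator s + z) ∈ L.productions s := by
    refine ⟨⟨hβ.1, hβz_mem⟩, ?_⟩
    simpa [add_assoc, add_comm z] using hcycle.add_right hβ.1
  generalize Jᶜ.indicator s = β at *
  refine mem_insertions (p := p) (α := δ + δ' + δ₀) (β := β) ⟨hp, hT hp⟩
    (add_mem (add_mem hδ hδ') hδ₀) hβ (zero_mem _) hβz_mem fun n => ?_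
  have hto := h.add_right (add_mem (add_mem hδ'.1 hδ₀.1) (nsmul_mem hβ.1 n))
  have hback := h'.add_right (add_mem (add_mem hδ.1 hδ₀.1) (nsmul_mem hβz_mem n))
  subst hs_eq
  convert (hto.trans (by
    convert (nsmul_mem hloop n).2.add_right (add_mem hδ.1 hδ'.1) using 1
    rw [Prod.smul_fst]
    abel)).trans (by
      convert hback using 1
      rw [Prod.smul_snd]
      abel) using 1
  · abel
  · rw [add_zero]
    abel

theorem reaches_of_mem_periods (hp : p ∈ L.periods a) :
    L.Reaches ((L.ends a).1 + p.1) ((L.ends a).2 + p.2) := by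
  obtain ⟨b, -, hb⟩ := hp
  convert reaches_ends b using 1 <;> rw [hb] <;> rfl

theorem mem_insertions_of_forall_mem_periods (hT : T ≤ (natZero d k).prod (natZero d k))
    (h : L.Occurs I T c a) (hp : p ∈ (zeroOn I).prod (zeroOn I))
    (hu : u ∈ (zeroOn J).prod (zeroOn J)) (hpu : ∀ n : ℕ, p + n • u ∈ L.periods a) :
    (dispMap d p, dispMap d u) ∈ L.insertions I J T c := by
  obtain ⟨q, ⟨hq, -⟩, ⟨δ, hδ, h⟩, ⟨δ', hδ', h'⟩⟩ := h
  have hp_mem := periods_le_natZero a (by simpa using hpu 0)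
  have hmem := fun n => periods_le_natZero a (hpu n)
  have hu₁ := mem_natZero_of_forall_add_nsmul_mem fun n => (hmem n).1
  have hu₂ := mem_natZero_of_forall_add_nsmul_mem fun n => (hmem n).2
  refine mem_insertions (p := q) (α := δ + δ' + p.1) (β := u.1) ⟨hq, hT hq⟩
    (add_mem (add_mem hδ hδ') ⟨hp_mem.1, hp.1⟩) ⟨hu₁, hu.1⟩ ?_ (by simpa using hu₂) fun n => ?_
  · simpa [sub_eq_add_neg] using
      add_mem (natZero_le_natOn hp_mem.2) (neg_mem_natOn (natZero_le_natOn hp_mem.1) hp.1)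
  · have hto := h.add_right (add_mem hδ'.1 (hmem n).1)
    have hrun := (reaches_of_mem_periods (hpu n)).add_right (add_mem hδ.1 hδ'.1)
    have hback := h'.add_right (add_mem hδ.1 (hmem n).2)
    convert (hto.trans (by convert hrun using 1; abel)).trans (by convert hback using 1; abel)
      using 1
    · simp only [Prod.fst_add, Prod.smul_fst]
      abel
    · simp only [dispMap_apply, Prod.snd_add, Prod.smul_snd, add_sub_cancel]
      abel

theorem map_dispMap_dirCone_le_hull_insertions (hT : T ≤ (natZero d k).prod (natZero d k))
    (h : L.Occurs I T c a) {W : Submodule ℚ (PairQ d)} (hWI : W ≤ (zeroOn I).prod (zeroOn I))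
    (hW : W ≤ (Submodule.span ℚ (reversible (L.insertions I J T c) : Set (QVec d))).comap
      (dispMap d)) :
    PointedCone.map (dispMap d) (dirCone (L.periods a ⊓ W.toAddSubmonoid) ⊓
        ((zeroOn J).prod (zeroOn J) : Submodule ℚ (PairQ d))) ≤
      PointedCone.hull ℚ ((L.insertions I J T c).comap (AddMonoidHom.inr _ _) : Set (QVec d)) := by
  rintro _ ⟨u, hu, rfl⟩
  rw [dirCone_eq_hull_raysFrom, ← hull_inf_submodule] at hu
  obtain ⟨n, hn, ⟨p, -, hpu⟩, hnu⟩ := mem_hull_coe_iff.1 hu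
  have hpW : p ∈ W := by simpa using (hpu 0).2
  have hmem := mem_hull_comap_inr_of_mem_span_reversible
    (mem_insertions_of_forall_mem_periods hT h (hWI hpW) hnu fun m => (hpu m).1) (hW hpW)
  rw [map_nsmul] at hmem
  exact mem_cone_of_nsmul_mem hn hmem

theorem productions_le_productions_add (hz : z ∈ natZero d k) :
    L.productions c ≤ L.productions (c + z) :=
  fun p hp => ⟨hp.1, by simpa [add_right_comm] using hp.2.add_right hz⟩

theorem exists_forall_add_nsmul_mem_productions (hT : T ≤ (natZero d k).prod (natZero d k))
    (hX : X ∈ natZero d k) (hXJ : ∀ i, X i = 0 → i ∈ J) (hY : Y ∈ natZero d k)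
    (hYI : ∀ i, Y i = 0 → i ∈ I) (hu : u ∈ T) (h : (0, dispMap d u) ∈ L.insertions I J T c) :
    ∃ p ∈ T, ∃ N B : ℕ, ∀ n : ℕ, p + n • u ∈ L.productions (c + (N • Y + n • B • X)) := by
  obtain ⟨p, hp, α, hα, β, hβ, h⟩ := h
  obtain ⟨N, hN⟩ := exists_nsmul_sub_mem_natZero hY hYI hα
  obtain ⟨B, hB⟩ := exists_nsmul_sub_mem_natZero hX hXJ hβ
  refine ⟨p, hp, N, B, fun n => ⟨hT (add_mem hp (nsmul_mem hu n)), ?_⟩⟩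
  convert (h n).2.add_right (add_mem (add_mem hN (nsmul_mem hB n)) (nsmul_mem (hT hu).1 n)) using 1
  · simp only [Prod.fst_add, Prod.smul_fst, smul_sub]
    abel
  · simp only [Prod.snd_add, Prod.smul_snd, smul_sub, smul_add, dispMap_apply]
    abel

theorem exists_nsmul_add_nsmul_mem_dirCone_productions
    (hT : T ≤ (natZero d k).prod (natZero d k)) (hv : v ∈ L.visits T c)
    (hvI : ∀ i, v.2 i = 0 → i ∈ I) {u₀ : PairQ d}
    (hray : ∀ m : ℕ, v₀ + m • (u₀, X) ∈ L.visits T c) (hXJ : ∀ i, X i = 0 → i ∈ J) (hu : u ∈ T)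
    (h : (0, dispMap d u) ∈ L.insertions I J T c) :
    ∃ B : ℕ, ∀ R : ℕ, R • u + B • u₀ ∈ dirCone (L.productions c ⊓ T) := by
  have hX := mem_natZero_of_forall_add_nsmul_mem fun m => snd_mem_natZero_of_mem_visits (hray m)
  obtain ⟨p, hp, N, B, hpu⟩ := exists_forall_add_nsmul_mem_productions hT hX hXJ
    (snd_mem_natZero_of_mem_visits hv) hvI hu h
  have hv₀ : v₀ ∈ L.visits T c := by simpa using hray 0
  refine ⟨B, fun R => ⟨1, one_pos, v₀.1 + N • v.1 + R • p, fun n => ?_⟩⟩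
  have hvisit := add_mem (hray (n * B)) (nsmul_mem hv N)
  have hmem : R • (p + n • u) ∈ L.productions (c + (v₀ + (n * B) • (u₀, X) + N • v).2) := by
    convert nsmul_mem (productions_le_productions_add hv₀.2.1.1.2 (hpu n)) R using 2
    simp only [Prod.snd_add, Prod.smul_snd, mul_smul]
    abel
  have hsum : v₀.1 + N • v.1 + R • p + (n * 1) • (R • u + B • u₀) =
      (v₀ + (n * B) • (u₀, X) + N • v).1 + R • (p + n • u) := by
    simp only [Prod.fst_add, Prod.smul_fst, smul_add, mul_one, mul_smul, smul_comm n R]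
    abel
  rw [hsum]
  exact ⟨add_mem_productions_of_mem_visits hvisit hmem,
    add_mem hvisit.1 (nsmul_mem (add_mem hp (nsmul_mem hu n)) R)⟩

end LevelSystem

/-! ### Tameness of the productions -/

theorem IsTameCone.biSup_of_antitoneOn {𝕜 E α : Type*} [Field 𝕜] [LinearOrder 𝕜]
    [IsStrictOrderedRing 𝕜] [AddCommGroup E] [Module 𝕜 E] [FiniteDimensional 𝕜 E] [Preorder α]
    [WellQuasiOrderedLE α] {A : Set α} {U : α → PointedCone 𝕜 E}
    (h : ∀ a ∈ A, IsTameCone (U a)) (hU : AntitoneOn U A) : IsTameCone (⨆ a ∈ A, U a) := by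
  obtain ⟨F, hFA, hF⟩ := exists_finset_forall_exists_le A
  convert IsTameCone.iSup fun a : F => h a (hFA a a.2) using 1
  refine le_antisymm (iSup₂_le fun a ha => ?_) (iSup_le fun a => le_biSup U (hFA a a.2))
  obtain ⟨f, hf, hfa⟩ := hF a ha
  exact (hU (hFA f hf) ha hfa).trans (le_iSup (fun a : F => U a) ⟨f, hf⟩)

theorem exists_mem_forall_snd_eq_zero {E ι : Type*} [AddCommMonoid E] [Finite ι]
    {M : AddSubmonoid (E × (ι → ℚ))} (hM : ∀ x ∈ M, 0 ≤ x.2) :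
    ∃ y ∈ M, ∀ i, y.2 i = 0 → ∀ x ∈ M, x.2 i = 0 := by
  obtain ⟨_, ⟨y, hy, rfl⟩, hzero⟩ := exists_mem_forall_eq_zero
    (M := M.map (AddMonoidHom.snd E (ι → ℚ))) (I := .univ) (by
      rintro _ ⟨x, hx, rfl⟩ i -
      exact hM x hx i)
  exact ⟨y, hy, fun i hi x hx => hzero i trivial hi x.2 ⟨x, hx, rfl⟩⟩

namespace LevelSystem

open AmalgSystem

variable {d k : ℕ} {L : LevelSystem d k} {I J : Set (Fin d)} {T : AddSubmonoid (PairQ d)}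
  {c r x y X X' : QVec d} {p u v : PairQ d} {a b : L.Run} {l : List L.Run}
  {W W' : Submodule ℚ (PairQ d)}

section EffectCone

variable (L T I J) in
/-- The pairs vanishing on `I` whose effect is a combination of reversible insertions. -/
def reversiblePairs (c : QVec d) : Submodule ℚ (PairQ d) :=
  (zeroOn I).prod (zeroOn I) ⊓
    (Submodule.span ℚ (reversible (L.insertions I J T c) : Set (QVec d))).comap (dispMap d)

variable (L T I J) in
/-- The cone of effects `v.2 - v.1` of the directions `v` of the productions of `c` in `T`. They
are combinations of the effects of cycles at visited vectors and of the effects of the periods of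
occurring runs; the counters in `J` cannot grow. -/
def effectCone (c : QVec d) : PointedCone ℚ (QVec d) :=
  (⨆ r ∈ {r : NVec d | castVec r ∈ natZero d k ∧ L.IsVisited I T c (castVec r)},
    PointedCone.hull ℚ (L.cyclesMod I (castVec r) : Set (QVec d)) ⊓ (zeroOn J : Submodule ℚ _)) ⊔
  ⨆ a ∈ {a | L.Occurs I T c a},
    PointedCone.map (dispMap d)
      (dirCone (L.periods a ⊓ (L.reversiblePairs I J T c).toAddSubmonoid) ⊓
        ((zeroOn J).prod (zeroOn J) : Submodule ℚ (PairQ d)))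

theorem cyclesMod_le_of_sub_mem_zeroOn (hx : x ∈ natOn k I) (hy : y ∈ natOn k I)
    (h : y - x ∈ zeroOn I) : L.cyclesMod I y ≤ L.cyclesMod I x := by
  rintro z ⟨hz, hyz⟩
  refine ⟨hz, ?_⟩
  convert hyz.add_right (sub_mem_natOn_of_sub_mem_zeroOn hy hx (by
    simpa using Submodule.neg_mem _ h)) using 1 <;> abel

theorem isTameCone_effectCone (htame : ∀ a, IsTame (L.periods a))
    (hT : T ≤ (natZero d k).prod (natZero d k)) (hc : c ∈ natZero d k)
    (hzero : ∀ ξ ∈ L.intermediatesMod I T c, ξ ∈ zeroOn I) :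
    IsTameCone (L.effectCone I J T c) := by
  have hc := natZero_le_natOn (I := I) hc
  refine .sup (.biSup_of_antitoneOn (fun r hr => ?_) fun r hr r' hr' hle => ?_)
    (.biSup_of_antitoneOn (fun a _ => ?_) fun a ha b hb hab => ?_)
  · exact (isTameCone_hull_cyclesMod htame I hr.1).inf_submodule _
  · refine inf_le_inf_right _ (Submodule.span_mono ?_)
    exact cyclesMod_le_of_sub_mem_zeroOn (natZero_le_natOn hr.1) (natZero_le_natOn hr'.1)
      (hr.2.sub_mem_zeroOn hc hzero hr'.2 fun i _ => castVec_le_castVec.2 hle i)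
  · exact (((htame a).isTameCone_dirCone_inf _).inf_submodule _).map _
  · have hsub := ha.sub_mem_zeroOn hc hzero hb hab
    have hmem : L.ends b - L.ends a ∈ L.reversiblePairs I J T c :=
      ⟨hsub, Submodule.subset_span (ha.dispMap_sub_mem_reversible hT hb hab hsub)⟩
    refine Submodule.map_mono (inf_le_inf_right _ ?_)
    rintro v ⟨n, hn, x, hx⟩
    refine ⟨n, hn, L.ends b - L.ends a + x, fun m => ?_⟩
    rw [add_assoc]
    exact ⟨sub_add_mem_periods hab (hx m).1, add_mem hmem (hx m).2⟩

theorem effectCone_le (hT : T ≤ (natZero d k).prod (natZero d k)) :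
    L.effectCone I J T c ≤
      PointedCone.hull ℚ ((L.insertions I J T c).comap (AddMonoidHom.inr _ _) : Set (QVec d)) := by
  refine sup_le (iSup₂_le fun r hr => ?_) (iSup₂_le fun a ha => ?_)
  · rw [← hull_inf_submodule]
    exact Submodule.span_mono fun z hz => mem_insertions_of_mem_cyclesMod hT hr.1 hr.2 hz.1 hz.2
  · exact map_dispMap_dirCone_le_hull_insertions hT ha inf_le_left inf_le_right

end EffectCone

section Upper

variable (L) in
/-- The vectors `r + m • X` are visited by paths from `c + p.1 + m • u.1` to
`c + p.2 + m • u.2`. -/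
def VisitsRay (c : QVec d) (p u : PairQ d) (r X : QVec d) : Prop :=
  ∀ m : ℕ, L.Reaches (c + p.1 + m • u.1) (r + m • X) ∧ L.Reaches (r + m • X) (c + p.2 + m • u.2)

namespace VisitsRay

theorem isVisited (h : L.VisitsRay c p u r X) (hT : T ≤ (natZero d k).prod (natZero d k))
    (hp : p ∈ T) : L.IsVisited I T c r := by
  obtain ⟨h, h'⟩ := h 0
  simp only [zero_smul, add_zero] at h h'
  exact ⟨p, ⟨hp, natZero_le_natOn (hT hp).1, natZero_le_natOn (hT hp).2⟩, h.reachesMod,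
    h'.reachesMod⟩

theorem mem_raysFrom_visits (h : L.VisitsRay c p u r X)
    (hT : T ≤ (natZero d k).prod (natZero d k)) (hp : p ∈ T) (hu : u ∈ T)
    (hX : X ∈ natZero d k) : (u, X) ∈ raysFrom (L.visits T c) ⊤ := by
  refine ⟨(2 • p, p.1 + p.2), trivial, fun m => ?_⟩
  obtain ⟨h₀, h₀'⟩ := h 0
  obtain ⟨h, h'⟩ := h m
  simp only [zero_smul, add_zero] at h₀ h₀'
  have hmX := nsmul_mem hX m
  obtain ⟨hp₁, hp₂⟩ := hT hp
  have hpu := add_mem (nsmul_mem hp 2) (nsmul_mem hu m)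
  have hmem := add_mem (add_mem hp₁ hp₂) hmX
  rw [Prod.smul_mk, Prod.mk_add_mk]
  refine ⟨hpu, ⟨⟨(hT hpu).1, hmem⟩, ?_⟩, ⟨hmem, (hT hpu).2⟩, ?_⟩
  · convert (h.add_right hp₁).trans (by
      convert h₀'.add_right (add_mem hp₁ hmX) using 1
      abel) using 1 <;> simp only [Prod.fst_add, Prod.smul_fst, two_nsmul] <;> abel
  · convert (h₀.add_right (add_mem hp₂ hmX)).trans (by
      convert h'.add_right hp₂ using 1
      abel) using 1 <;> simp only [Prod.snd_add, Prod.smul_snd, two_nsmul] <;> abel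

theorem sub_mem_effectCone (h : L.VisitsRay c p u r X)
    (hT : T ≤ (natZero d k).prod (natZero d k)) (hp : p ∈ T) (hIJ : I ⊆ J)
    (hr : r ∈ natZero d k) (hXX' : (X, X') ∈ L.productions r) (hX : X ∈ zeroOn J)
    (hX' : X' ∈ zeroOn J) : X' - X ∈ L.effectCone I J T c := by
  have hsub := Submodule.sub_mem _ hX' hX
  refine Submodule.mem_sup_left ?_
  obtain ⟨n, rfl⟩ := hr.1
  refine Submodule.mem_iSup_of_mem n (Submodule.mem_iSup_of_mem ⟨hr, h.isVisited hT hp⟩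
    ⟨Submodule.subset_span (mem_cyclesMod (natZero_le_natOn hr) (fun i hi => hsub i (hIJ hi)) ?_),
      hsub⟩)
  have hneg := neg_mem_natOn (I := I) (natZero_le_natOn hXX'.1.1) fun i hi => hX i (hIJ hi)
  convert hXX'.2.reachesMod.add_right hneg using 1 <;> abel

end VisitsRay

theorem sub_mem_effectCone_of_mem_periods (hT : T ≤ (natZero d k).prod (natZero d k))
    (hp : p ∈ T) (hu : u ∈ T) (hIJ : I ⊆ J) (hXX' : (X, X') ∈ L.periods a)
    (h : ∀ m : ℕ, L.Reaches (c + p.1 + m • u.1) ((L.ends a).1 + m • X))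
    (h' : ∀ m : ℕ, L.Reaches ((L.ends a).2 + m • X') (c + p.2 + m • u.2)) (hX : X ∈ zeroOn J)
    (hX' : X' ∈ zeroOn J) : X' - X ∈ L.effectCone I J T c := by
  have hzero : (X, X') ∈ (zeroOn I).prod (zeroOn I) :=
    ⟨fun i hi => hX i (hIJ hi), fun i hi => hX' i (hIJ hi)⟩
  have hoccurs : ∀ (m : ℕ) (b : L.Run), L.ends b = L.ends a + m • (X, X') → L.Occurs I T c b := by
    intro m b hb
    have hpu := add_mem hp (nsmul_mem hu m)
    refine ⟨p + m • u, ⟨hpu, natZero_le_natOn (hT hpu).1, natZero_le_natOn (hT hpu).2⟩, ?_, ?_⟩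
    · simpa [hb, add_assoc] using (h m).reachesMod
    · simpa [hb, add_assoc] using (h' m).reachesMod
  have ha := hoccurs 0 a (by simp)
  obtain ⟨b, hab, hb⟩ := id hXX'
  have hsub : L.ends b - L.ends a = (X, X') := by rw [hb, add_sub_cancel_left]
  refine Submodule.mem_sup_right (Submodule.mem_iSup_of_mem a (Submodule.mem_iSup_of_mem ha
    ⟨(X, X'), ⟨hull_le_dirCone _ (Submodule.subset_span ⟨hXX', hzero, ?_⟩), hX, hX'⟩, rfl⟩))
  have hrev := ha.dispMap_sub_mem_reversible (J := J) hT (hoccurs 1 b (by simpa using hb)) hab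
    (hsub ▸ hzero)
  rw [hsub] at hrev
  exact Submodule.subset_span hrev

theorem IsPath.reaches_of_mem_pathProductions (hl : L.IsPath x l y)
    (hp : p ∈ L.pathProductions x l) (m : ℕ) : L.Reaches (x + m • p.1) (y + m • p.2) := by
  obtain ⟨l', -, hl'⟩ := IsPath.exists_of_mem_pathProductions hl (nsmul_mem hp m)
  exact ⟨l', hl'⟩

theorem sub_mem_effectCone_of_mem_pathProductions (hT : T ≤ (natZero d k).prod (natZero d k))
    (hp : p ∈ T) (hu : u ∈ T) (hIJ : I ⊆ J)
    (hJ : ∀ X, (u, X) ∈ raysFrom (L.visits T c) ⊤ → X ∈ zeroOn J) (hr : r ∈ natZero d k)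
    (hl : L.IsPath r l (c + p.2)) (hX : (X, u.2) ∈ L.pathProductions r l)
    (h : ∀ m : ℕ, L.Reaches (c + p.1 + m • u.1) (r + m • X)) :
    u.2 - X ∈ L.effectCone I J T c := by
  have hzero : ∀ {r X}, X ∈ natZero d k → L.VisitsRay c p u r X → X ∈ zeroOn J :=
    fun hX h => hJ _ (h.mem_raysFrom_visits hT hp hu hX)
  induction l generalizing r X with
  | nil =>
    obtain rfl : r = c + p.2 := hl
    have hXu := fun m : ℕ => (nsmul_mem hX m).2
    have hray : L.VisitsRay c p u (c + p.2) X := fun m => ⟨h m, hXu m⟩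
    exact hray.sub_mem_effectCone hT hp hIJ hr hX (hzero hX.1.1 hray)
      (hzero hX.1.2 fun m => ⟨(h m).trans (hXu m), .refl _⟩)
  | cons a l ih =>
    obtain ⟨rfl, hl⟩ := hl
    obtain ⟨Y, hXY, Z, hYZ, hZ⟩ := hX
    have ha := (L.ends_mem_natZero a).2
    have hXY_reach := fun m : ℕ => (nsmul_mem hXY m).2
    have hYZ_reach := fun m : ℕ => reaches_of_mem_periods (nsmul_mem hYZ m)
    have hZ_reach := IsPath.reaches_of_mem_pathProductions hl hZ
    have hY := fun m => (h m).trans (hXY_reach m)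
    have hY' := fun m => (hYZ_reach m).trans (hZ_reach m)
    have hX_ray : L.VisitsRay c p u _ X := fun m => ⟨h m, (hXY_reach m).trans (hY' m)⟩
    have hX_zero := hzero hXY.1.1 hX_ray
    have hY_zero := hzero hXY.1.2 fun m => ⟨hY m, hY' m⟩
    have hZ_zero := hzero (periods_le_natZero a hYZ).2
      fun m => ⟨(hY m).trans (hYZ_reach m), hZ_reach m⟩
    have hcycle := hX_ray.sub_mem_effectCone hT hp hIJ hr hXY hX_zero hY_zero
    have hrun := sub_mem_effectCone_of_mem_periods hT hp hu hIJ hYZ hY hZ_reach hY_zero hZ_zero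
    have hrest := ih ha hl hZ fun m => (hY m).trans (hYZ_reach m)
    convert add_mem (add_mem hcycle hrun) hrest using 1
    abel

theorem exists_nsmul_mem_pathProductions_of_mem_dirCone (hc : c ∈ natZero d k)
    (hv : v ∈ dirCone (L.productions c ⊓ T)) :
    ∃ p ∈ L.productions c ⊓ T, ∃ l, L.IsPath (c + p.1) l (c + p.2) ∧
      ∃ N : ℕ, 0 < N ∧ N • v ∈ L.pathProductions (c + p.1) l := by
  obtain ⟨n, hn, x, hx⟩ := hv
  choose l hl using fun m => (hx m).1.2
  have hmem := fun m => add_mem hc (hx m).1.1.1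
  obtain ⟨i, j, hij, hle⟩ := wellQuasiOrdered_le (α := L.Path) fun m => ⟨_, _, l m, hmem m, hl m⟩
  refine ⟨_, hx i, l i, hl i, (j - i) * n, Nat.mul_pos (Nat.sub_pos_of_lt hij) hn, ?_⟩
  convert IsPath.sub_mem_pathProductions (hl i) (hl j) (hmem i) (hmem j) hle.1 hle.2.1 hle.2.2
    using 1
  have hj : (j * n) • v = ((j - i) * n) • v + (i * n) • v := by
    rw [← add_smul, ← add_mul, Nat.sub_add_cancel hij.le]
  ext1 <;> simp only [hj, Prod.fst_add, Prod.snd_add] <;> abel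

theorem exists_nsmul_mem_of_mem_dirCone_productions (hc : c ∈ natZero d k)
    (hT : T = (natZero d k).prod (natZero d k) ⊓ W.toAddSubmonoid) (hIJ : I ⊆ J)
    (hJ : ∀ u ∈ W', ∀ X, (u, X) ∈ raysFrom (L.visits T c) ⊤ → X ∈ zeroOn J)
    (hv : v ∈ dirCone (L.productions c ⊓ T)) (hvW' : v ∈ W') :
    ∃ N : ℕ, 0 < N ∧ N • v ∈ T ∧ dispMap d (N • v) ∈ L.effectCone I J T c := by
  obtain ⟨p, hp, l, hl, N, hN, hNv⟩ := exists_nsmul_mem_pathProductions_of_mem_dirCone hc hv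
  have hvW : v ∈ W :=
    dirCone_inf_submodule_le (L.productions c ⊓ (natZero d k).prod (natZero d k)) W
      (by rwa [inf_assoc, ← hT])
  have hu : N • v ∈ T := by
    rw [hT]
    exact ⟨mem_natZero_of_mem_pathProductions hNv, nsmul_mem hvW N⟩
  refine ⟨N, hN, hu, ?_⟩
  rw [dispMap_apply]
  exact sub_mem_effectCone_of_mem_pathProductions (hT.le.trans inf_le_left) hp.2 hu hIJ
    (hJ _ (nsmul_mem hvW' N)) (add_mem hc hp.1.1.1) hl hNv fun m => .refl _

end Upper

theorem le_algClosure_dirCone_productions (hT : T ≤ (natZero d k).prod (natZero d k))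
    {w v₀ : PairQ d × QVec d} (hw : w ∈ L.visits T c) (hwI : ∀ i, w.2 i = 0 → i ∈ I)
    (hray : ∀ m : ℕ, v₀ + m • (u, X) ∈ L.visits T c) (hu : u ∈ W') (hXJ : ∀ i, X i = 0 → i ∈ J) :
    PointedCone.hull ℚ (T : Set (PairQ d)) ⊓ W' ⊓ (L.effectCone I J T c).comap (dispMap d) ≤
      algClosure (dirCone (L.productions c ⊓ T) ⊓ W') := by
  rintro v ⟨⟨hv, hvW'⟩, hvC⟩
  obtain ⟨m, hm, hmv⟩ := mem_hull_coe_iff.1 hv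
  obtain ⟨n, hn, hnv⟩ := mem_hull_coe_iff.1 (effectCone_le hT hvC)
  have hins : (0, dispMap d ((m * n) • v)) ∈ L.insertions I J T c := by
    rw [map_nsmul, mul_smul]
    exact nsmul_mem hnv m
  have hmnv : (m * n) • v ∈ T := by
    rw [mul_comm, mul_smul]
    exact nsmul_mem hmv n
  obtain ⟨B, hB⟩ := exists_nsmul_add_nsmul_mem_dirCone_productions hT hw hwI hray hXJ hmnv hins
  refine mem_cone_of_nsmul_mem (Nat.mul_pos hm hn) (mem_algClosure_of_forall_nsmul_add_mem fun R =>
    ⟨hB R, add_mem (nsmul_mem (nsmul_mem hvW' _) R) (nsmul_mem hu B)⟩)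

theorem isAlmostFG_dirCone_productions (htame : ∀ a, IsTame (L.periods a))
    (hc : c ∈ natZero d k) (hT : T = (natZero d k).prod (natZero d k) ⊓ W.toAddSubmonoid)
    (W' : Submodule ℚ (PairQ d)) :
    IsAlmostFG (dirCone (L.productions c ⊓ T) ⊓ (W' : PointedCone ℚ (PairQ d))) := by
  have hTle : T ≤ (natZero d k).prod (natZero d k) := hT.le.trans inf_le_left
  obtain ⟨w, hw, hwI⟩ := exists_mem_forall_snd_eq_zero (M := L.visits T c)
    fun v hv => nonneg_of_mem_natOrthant (snd_mem_natZero_of_mem_visits hv).1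
  obtain ⟨⟨u, X⟩, ⟨⟨v₀, -, hray⟩, hu⟩, hX⟩ := exists_mem_forall_snd_eq_zero
    (M := raysFrom (L.visits T c) ⊤ ⊓ (W'.comap (.fst ℚ _ (QVec d))).toAddSubmonoid) (by
      rintro v ⟨⟨v₀, -, hv⟩, -⟩
      exact nonneg_of_mem_natOrthant (mem_natZero_of_forall_add_nsmul_mem
        fun m => snd_mem_natZero_of_mem_visits (hv m)).1)
  have hsub : {i | w.2 i = 0} ⊆ {i | X i = 0} := by
    intro i hi
    simpa [hwI i hi v₀ (by simpa using hray 0)] using hwI i hi _ (hray 1)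
  have hD : IsTameCone (PointedCone.hull ℚ (T : Set (PairQ d)) ⊓ W' ⊓
      (L.effectCone {i | w.2 i = 0} {i | X i = 0} T c).comap (dispMap d)) := by
    have hZ : IsTame (natZero d k) := isTame_natOrthant.inf_submodule _
    have hTtame : IsTame T := hT ▸ (hZ.prod hZ).inf_submodule W
    refine (hTtame.isTameCone_hull.inf_submodule W').inf (.comap ?_ _)
    exact isTameCone_effectCone htame hTle hc fun ξ =>
      mem_zeroOn_of_mem_intermediatesMod hTle hw (fun i => id) fun v hv i hi => hwI i hi v hv
  refine hD.isAlmostFG.of_le_of_le_algClosure ?_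
    (le_algClosure_dirCone_productions hTle hw (fun i => id) hray hu fun i => id)
  rintro v ⟨hv, hvW'⟩
  obtain ⟨N, hN, hNT, hNC⟩ := exists_nsmul_mem_of_mem_dirCone_productions hc hT hsub
    (fun u hu X' hX' i hi => hX i hi (u, X') ⟨hX', hu⟩) hv hvW'
  exact ⟨⟨mem_hull_coe_iff.2 ⟨N, hN, hNT⟩, hvW'⟩,
    mem_cone_of_nsmul_mem hN (C := (L.effectCone _ _ T c).comap (dispMap d)) hNC⟩

theorem isTame_productions (htame : ∀ a, IsTame (L.periods a)) (hc : c ∈ natZero d k) :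
    IsTame (L.productions c) where
  isWellDirected := isWellDirected_productions hc
  isTameCone_dirCone_inf W := by
    have hle : L.productions c ≤ (natZero d k).prod (natZero d k) := fun p hp => hp.1
    intro W'
    rw [← inf_eq_left.2 hle, inf_assoc]
    exact isAlmostFG_dirCone_productions htame hc rfl W'

end LevelSystem

/-! ### The reachability relation of a priority vector addition system -/

open Relation in
theorem reflTransGen_or_iff {α : Type*} {R E : α → α → Prop} {Z : α → Prop}
    (hE : ∀ x y, E x y → Z x) {x y : α} :
    ReflTransGen (fun x y => R x y ∨ E x y) x y ↔ ReflTransGen R x y ∨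
      ∃ u, ReflTransGen R x u ∧ ∃ w,
        (Z u ∧ ReflTransGen (fun x y => Comp E (ReflTransGen R) x y ∧ Z x ∧ Z y) u w) ∧
          Comp E (ReflTransGen R) w y := by
  have hR {x y} (h : ReflTransGen R x y) : ReflTransGen (fun x y => R x y ∨ E x y) x y :=
    ReflTransGen.mono (fun _ _ => Or.inl) _ _ h
  have hcomp {x y} (h : Comp E (ReflTransGen R) x y) :
      ReflTransGen (fun x y => R x y ∨ E x y) x y := by
    obtain ⟨z, hxz, hzy⟩ := h
    exact (hR hzy).head (Or.inr hxz)
  constructor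
  · intro h
    induction h using ReflTransGen.head_induction_on with
    | refl => exact Or.inl .refl
    | @head x z hxz _ ih =>
      obtain hxz | hxz := hxz
      · exact ih.imp (·.head hxz) fun ⟨u, hzu, h⟩ => ⟨u, hzu.head hxz, h⟩
      · obtain hzy | ⟨u, hzu, w, ⟨hu, huw⟩, hwy⟩ := ih
        · exact Or.inr ⟨x, .refl, x, ⟨hE x z hxz, .refl⟩, z, hxz, hzy⟩
        · have hxu := huw.head ⟨⟨z, hxz, hzu⟩, hE x z hxz, hu⟩
          exact Or.inr ⟨x, .refl, w, ⟨hE x z hxz, hxu⟩, hwy⟩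
  · rintro (h | ⟨u, hxu, w, ⟨-, huw⟩, hwy⟩)
    · exact hR h
    · have huw := ReflTransGen.mono (fun _ _ h => hcomp h.1) _ _ huw
      rw [reflTransGen_eq_self] at huw
      exact ((hR hxu).trans huw).trans (hcomp hwy)

theorem LevelSystem.reaches_castVec_iff {d k : ℕ} {L : LevelSystem d k} {x y : NVec d} :
    L.Reaches (castVec x) (castVec y) ↔ Relation.ReflTransGen L.Rel x y := by
  constructor
  · rintro ⟨l, hl⟩
    induction l generalizing x with
    | nil => rw [castVec_injective hl]
    | cons a l ih =>
      obtain ⟨x', z, ha⟩ := L.exists_ends_eq a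
      obtain ⟨hx, hl⟩ := hl
      simp only [ha] at hx hl
      obtain rfl := castVec_injective hx
      exact (ih hl).head ⟨a, ha⟩
  · intro h
    induction h with
    | refl => exact .refl _
    | tail _ h ih =>
      obtain ⟨a, ha⟩ := h
      simpa [ha] using ih.trans (by simpa [ha] using reaches_ends a)

namespace AmalgSystem

variable {d k : ℕ} {V : PVAS d}

theorem castVec_mem_natZero_iff {x : NVec d} :
    castVec x ∈ natZero d k ↔ castVec x ∈ zeroOn {i : Fin d | (i : ℕ) < k} :=
  and_iff_right (castVec_mem_natOrthant x)

theorem exists_rel_iff_reflTransGen_or {R : NVec d → NVec d → Prop} {S A : AmalgSystem d}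
    (hS : S.TameFlat V k) (hSshift : S.ShiftClosed k) (hA : A.TameFlat V k)
    (hAshift : A.ShiftClosed k) (hR : ∀ x y, S.Rel x y ↔ Relation.ReflTransGen R x y)
    (hzero : ∀ x y, A.Rel x y → castVec x ∈ natZero d k) :
    ∃ N : AmalgSystem d, N.TameFlat V k ∧ N.ShiftClosed k ∧
      ∀ x y, N.Rel x y ↔ Relation.ReflTransGen (fun x y => R x y ∨ A.Rel x y) x y := by
  let Z : Submodule ℚ (QVec d) := zeroOn {i | (i : ℕ) < k}
  have hG := hA.comp hS
  have hGshift := hAshift.comp hSshift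
  have hZshift : ∀ δ ∈ natZero d k, (δ, δ) ∈ Z.prod Z := fun δ hδ => ⟨hδ.2, hδ.2⟩
  let L : LevelSystem d k :=
    { (comp A S).restrict (Z.prod Z) with
      ends_mem_natZero := fun a =>
        ⟨⟨((comp A S).ends_mem a.1).1, a.2.1⟩, ⟨((comp A S).ends_mem a.1).2, a.2.2⟩⟩
      shiftClosed := hGshift.restrict hZshift }
  have hL : L.TameFlat V k := hG.restrict _
  have hstar : L.star.TameFlat V k :=
    LevelSystem.tameFlat_star hL fun x hx => LevelSystem.isTame_productions hL.isTame hx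
  refine ⟨iUnion fun b : Bool => bif b then S else comp S (comp L.star (comp A S)),
    .iUnion (Bool.forall_bool.2 ⟨hS.comp (hstar.comp hG), hS⟩),
    .iUnion (Bool.forall_bool.2
      ⟨hSshift.comp (LevelSystem.shiftClosed_star.comp hGshift), hSshift⟩), fun x y => ?_⟩
  have hcomp : ∀ x y, (comp A S).Rel x y ↔ Relation.Comp A.Rel (Relation.ReflTransGen R) x y :=
    fun x y => by simp only [rel_comp, hR, Relation.Comp]
  have hLrel : L.Rel = fun x y => Relation.Comp A.Rel (Relation.ReflTransGen R) x y ∧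
      castVec x ∈ natZero d k ∧ castVec y ∈ natZero d k := by
    ext x y
    rw [← hcomp, castVec_mem_natZero_iff, castVec_mem_natZero_iff]
    exact rel_restrict
  rw [reflTransGen_or_iff hzero, ← hLrel, or_comm]
  simp only [rel_iUnion, Bool.exists_bool, cond_false, cond_true, rel_comp (S := S),
    rel_comp (S := L.star), LevelSystem.rel_star, LevelSystem.reaches_castVec_iff, hcomp, hR]

end AmalgSystem

namespace PVAS

variable {d : ℕ}

open Relation AmalgSystem

/-- The steps of the edges that test fewer than `k` counters. -/
def StepBelow (V : PVAS d) (k : ℕ) (x y : NVec d) : Prop := ∃ e, V.test e < k ∧ V.StepE e x y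

theorem stepBelow_succ_iff {V : PVAS d} {k : ℕ} {x y : NVec d} :
    V.StepBelow (k + 1) x y ↔ V.StepBelow k x y ∨ ∃ e, V.test e = k ∧ V.StepE e x y := by
  simp only [StepBelow, Nat.lt_succ_iff_lt_or_eq, or_and_right, exists_or]

theorem exists_tameFlat_rel_iff_reflTransGen_stepBelow (V : PVAS d) (k : ℕ) :
    ∃ S : AmalgSystem d, S.TameFlat V k ∧ S.ShiftClosed k ∧
      ∀ x y, S.Rel x y ↔ ReflTransGen (V.StepBelow k) x y := by
  induction k with
  | zero =>
    have hstep : ∀ x y, (step (d := d) 0 0).Rel x y ↔ x = y := fun x y => by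
      simp [rel_step, funext_iff, eq_comm]
    refine ⟨step 0 0, tameFlat_step [] (by simp) fun x y h => (hstep x y).1 h,
      shiftClosed_step 0 0, fun x y => ?_⟩
    rw [hstep, reflTransGen_iff_eq fun z ⟨e, he, _⟩ => Nat.not_lt_zero _ he, eq_comm]
  | succ k ih =>
    obtain ⟨S, hS, hSshift, hR⟩ := ih
    have := V.fintypeE
    let A : AmalgSystem d := iUnion fun e : {e // V.test e = k} => step (V.upd e.1) (V.test e.1)
    have hA : A.TameFlat V k := .iUnion fun ⟨e, he⟩ =>
      tameFlat_step [[e]] (by simpa using he.le) fun x y h =>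
        ⟨y, .single ⟨y, rel_step.1 h, rfl⟩, rfl⟩
    have hAshift : A.ShiftClosed k := .iUnion fun e => (shiftClosed_step _ _).mono e.2.le
    have hArel : ∀ x y, A.Rel x y ↔ ∃ e, V.test e = k ∧ V.StepE e x y := fun x y => by
      simp only [A, rel_iUnion, rel_step, StepE, Subtype.exists, exists_prop]
    obtain ⟨N, hN, hNshift, hNrel⟩ := exists_rel_iff_reflTransGen_or hS hSshift hA hAshift hR
      fun x y h => by
        obtain ⟨e, he, hxy⟩ := (hArel x y).1 h
        exact castVec_mem_natZero_iff.2 fun i hi => congrArg Nat.cast (hxy.1 i (he ▸ hi))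
    refine ⟨N, hN.mono k.le_succ, hNshift.mono k.le_succ, fun x y => ?_⟩
    rw [hNrel]
    simp only [hArel, ← stepBelow_succ_iff]

theorem exists_tameFlat_rel_iff_reach (V : PVAS d) :
    ∃ S : AmalgSystem d, S.TameFlat V (d + 1) ∧ ∀ x y, S.Rel x y ↔ V.Reach x y := by
  obtain ⟨S, hS, -, hR⟩ := V.exists_tameFlat_rel_iff_reflTransGen_stepBelow (d + 1)
  have hstep : V.StepBelow (d + 1) = V.Step := by
    ext x y
    simp only [StepBelow, Step, Nat.lt_succ_of_le (V.test_le _), true_and]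
  exact ⟨S, hS, fun x y => by rw [hR, hstep, Reach]⟩

end PVAS

/-! ### Decomposition of the reachability relation -/

section Decomposition

variable {d : ℕ}

/-- The embedding of `ℕ^d × ℕ^d` into `ℚ^d × ℚ^d`, as a bundled form of `castPQ`. -/
def castPair : PairN d →+ PairQ d := castVec.prodMap castVec

theorem castPair_apply (p : PairN d) : castPair p = (castVec p.1, castVec p.2) := rfl

theorem castPQ_eq_castPair : castPQ (d := d) = castPair := rfl

theorem castPair_injective : Function.Injective (castPair (d := d)) :=
  castVec_injective.prodMap castVec_injective

theorem exists_castPair_eq {p : PairQ d} (hp : p ∈ natPairs d) : ∃ x, castPair x = p := by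
  obtain ⟨⟨x, hx⟩, ⟨y, hy⟩⟩ := hp
  exact ⟨(x, y), Prod.ext hx hy⟩

theorem isPeriodic_coe {M : Type*} [AddCommMonoid M] (P : AddSubmonoid M) :
    IsPeriodic (P : Set M) :=
  ⟨P.zero_mem, fun _ hp _ hq => P.add_mem hp hq⟩

section comap

variable {P : AddSubmonoid (PairQ d)}

theorem dirSet_comap_castPair (hP : P ≤ natPairs d) :
    dirSet (P.comap castPair : Set (PairN d)) = dirCone P := by
  ext v
  constructor
  · rintro ⟨n, hn, x, h⟩
    refine ⟨n, hn, castPair x, fun k => ?_⟩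
    obtain ⟨p, hp, hpk⟩ := h k
    rw [castPQ_eq_castPair, Nat.cast_smul_eq_nsmul] at hpk
    exact hpk ▸ hp
  · rintro ⟨n, hn, x, h⟩
    have hx : x ∈ P := by simpa using h 0
    obtain ⟨x, rfl⟩ := exists_castPair_eq (hP hx)
    refine ⟨n, hn, x, fun k => ?_⟩
    obtain ⟨p, hp⟩ := exists_castPair_eq (hP (h k))
    rw [castPQ_eq_castPair, Nat.cast_smul_eq_nsmul]
    exact ⟨p, AddSubmonoid.mem_comap.2 (hp ▸ h k), hp⟩

theorem wellDirected_comap_castPair (hP : P ≤ natPairs d) (h : IsWellDirected P) :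
    WellDirected (P.comap castPair : Set (PairN d)) := by
  intro p hp
  obtain ⟨φ, hφ, hmem⟩ := h (fun m => castPair (p m)) hp
  refine ⟨φ, hφ, fun j k hjk t => ?_⟩
  obtain ⟨q, hq⟩ := exists_castPair_eq (hP (hmem j k hjk t))
  rw [castPQ_eq_castPair, Nat.cast_smul_eq_nsmul]
  exact ⟨q, AddSubmonoid.mem_comap.2 (hq ▸ hmem j k hjk t), hq⟩

theorem IsTame.isSmooth_comap_castPair (h : IsTame P) (hP : P ≤ natPairs d) :
    IsSmooth (P.comap castPair : Set (PairN d)) := by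
  refine ⟨⟨?_, ?_⟩, wellDirected_comap_castPair hP h.isWellDirected⟩
  · rw [dirSet_comap_castPair hP]
    exact ⟨zero_mem _, fun _ hu _ hv => add_mem hu hv,
      fun _ hu c hc => (dirCone P).smul_mem hc.le hu⟩
  · rw [dirSet_comap_castPair hP]
    exact h.isTameCone_dirCone.isQDef

end comap

section Flattable

variable {V : PVAS d} {k : ℕ}

theorem FlattableBelow.flattable {R : Set (PairN d)} (h : FlattableBelow V k (castPair '' R)) :
    Flattable V R := by
  obtain ⟨ws, -, hflat⟩ := h
  refine ⟨ws, fun p hp => ?_⟩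
  obtain ⟨x, y, hxy, hreach⟩ := hflat _ ⟨p, hp, rfl⟩
  obtain rfl : p = (x, y) := castPair_injective hxy
  exact hreach

theorem FlattableBelow.mono {R R' : Set (PairQ d)} (h : FlattableBelow V k R') (hR : R ⊆ R') :
    FlattableBelow V k R := by
  obtain ⟨ws, hws, hflat⟩ := h
  exact ⟨ws, hws, fun p hp => hflat p (hR hp)⟩

theorem FlattableBelow.union {R R' : Set (PairQ d)} (h : FlattableBelow V k R)
    (h' : FlattableBelow V k R') : FlattableBelow V k (R ∪ R') := by
  obtain ⟨ws, hws, hflat⟩ := h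
  obtain ⟨ws', hws', hflat'⟩ := h'
  refine ⟨ws ++ ws', List.forall_mem_append.2 ⟨hws, hws'⟩, ?_⟩
  rintro p (hp | hp)
  · obtain ⟨x, y, hxy, hreach⟩ := hflat p hp
    exact ⟨x, y, hxy, hreach.append (.refl _ _)⟩
  · obtain ⟨x, y, hxy, hreach⟩ := hflat' p hp
    exact ⟨x, y, hxy, .append (.refl _ _) hreach⟩

theorem FlattableBelow.iUnion {ι : Type*} [Finite ι] {R : ι → Set (PairQ d)}
    (h : ∀ i, FlattableBelow V k (R i)) : FlattableBelow V k (⋃ i, R i) := by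
  cases nonempty_fintype ι
  rw [← Set.iSup_eq_iUnion, ← Finset.sup_univ_eq_iSup]
  exact Finset.sup_induction ⟨[], by simp, by simp⟩ (fun _ h _ h' => h.union h') fun i _ => h i

end Flattable

namespace AmalgSystem

variable {S : AmalgSystem d} {a : S.Run}

theorem exists_forall_le {ι : Type*} [Finite ι] {b : ι → S.Run} (hb : ∀ i, a ≤ b i) :
    ∃ e, a ≤ e ∧ ∀ i, b i ≤ e := by
  have : Nonempty (Set.Ici a) := ⟨a, le_rfl⟩
  have : IsDirectedOrder (Set.Ici a) := ⟨fun ⟨b, hb⟩ ⟨c, hc⟩ => by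
    obtain ⟨e, hbe, hce, -⟩ := S.amalg hb hc
    exact ⟨⟨e, le_trans hb hbe⟩, hbe, hce⟩⟩
  obtain ⟨e, he⟩ := Finite.exists_le fun i => (⟨b i, hb i⟩ : Set.Ici a)
  exact ⟨e, e.2, he⟩

theorem exists_nsmul_mem_periods {l p : PairQ d}
    (h : ∀ t : ℕ, ∃ b, a ≤ b ∧ S.ends b = l + t • p) :
    ∃ b, a ≤ b ∧ ∃ n : ℕ, 0 < n ∧ n • p ∈ S.periods b := by
  choose b hab hb using h
  obtain ⟨m, n, hmn, hle⟩ := (wellQuasiOrdered_le (α := S.Run)) b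
  refine ⟨b m, hab m, n - m, Nat.sub_pos_of_lt hmn, ?_⟩
  rw [sub_nsmul _ hmn.le, ← sub_eq_add_neg, ← add_sub_add_left_eq_sub _ _ l, ← hb, ← hb]
  exact sub_mem_periods hle

theorem TameFlat.exists_mem_periods_flattableBelow {V : PVAS d} {k : ℕ} (hS : S.TameFlat V k)
    {r : ℕ} {l : PairQ d} {p : Fin r → PairQ d}
    (h : ∀ c : Fin r → ℕ, ∃ b, a ≤ b ∧ S.ends b = l + ∑ i, c i • p i) :
    ∃ q ∈ S.periods a,
      FlattableBelow V k {z | ∃ c : Fin r → ℕ, z = q + (l + ∑ i, c i • p i)} := by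
  have hper (i) : ∃ b, a ≤ b ∧ ∃ n : ℕ, 0 < n ∧ n • p i ∈ S.periods b := by
    refine exists_nsmul_mem_periods (l := l) fun t => ?_
    simpa [Pi.single_apply] using h (Pi.single i t)
  choose b hab N hN hp using hper
  obtain ⟨e, hae, hbe⟩ := exists_forall_le hab
  have hpe (i) : N i • p i ∈ S.periods e := periods_mono (hbe i) (hp i)
  obtain ⟨A, hA⟩ := hS.flattable e r _ hpe
  refine ⟨S.ends e - S.ends a + A • ∑ i, N i • p i,
    sub_add_mem_periods hae (nsmul_mem (sum_mem fun i _ => hpe i) _), ?_⟩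
  choose b' hab' hb' using h
  have hflat := FlattableBelow.iUnion fun ρ : ∀ i, Fin (N i) => hA
    (S.ends (b' fun i => ρ i) - S.ends a) (periods_mono hae (sub_mem_periods (hab' _)))
  refine hflat.mono ?_
  rintro _ ⟨c, rfl⟩
  refine Set.mem_iUnion.2 ⟨fun i => ⟨c i % N i, Nat.mod_lt _ (hN i)⟩, fun i => c i / N i, ?_⟩
  have hdiv : ∑ i, c i • p i = ∑ i, (c i % N i) • p i + ∑ i, (c i / N i) • N i • p i := by
    simp only [← Finset.sum_add_distrib, ← mul_smul, ← add_smul, mul_comm (_ / _), Nat.mod_add_div]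
  rw [hb', hdiv]
  abel

theorem TameFlat.exists_flattable {V : PVAS d} {k : ℕ} (hS : S.TameFlat V k) {b : PairN d}
    (hb : castPair b = S.ends a) {L : Set (PairN d)} (hL : IsLinSet L)
    (hLb : L ⊆ (b + ·) '' ((S.periods a).comap castPair : Set (PairN d))) :
    ∃ p ∈ (S.periods a).comap castPair, Flattable V ((p + ·) '' L) := by
  obtain ⟨l, r, g, rfl⟩ := hL
  have hrun (c : Fin r → ℕ) :
      ∃ b, a ≤ b ∧ S.ends b = castPair l + ∑ i, c i • castPair (g i) := by
    obtain ⟨q, ⟨b', hab', hb'⟩, hq : b + q = _⟩ := hLb ⟨c, rfl⟩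
    refine ⟨b', hab', ?_⟩
    rw [hb', ← hb, ← map_add, hq]
    simp only [map_add, map_sum, map_nsmul]
  obtain ⟨q, hq, hflat⟩ := hS.exists_mem_periods_flattableBelow hrun
  obtain ⟨q, rfl⟩ := exists_castPair_eq (periods_le_natPairs hq)
  refine ⟨q, hq, FlattableBelow.flattable (hflat.mono ?_)⟩
  rintro _ ⟨_, ⟨_, ⟨c, rfl⟩, rfl⟩, rfl⟩
  exact ⟨c, by simp only [map_add, map_sum, map_nsmul]⟩

theorem exists_setOf_rel_eq_iUnion (S : AmalgSystem d) :
    ∃ (n : ℕ) (a : Fin n → S.Run) (b : Fin n → PairN d), (∀ i, castPair (b i) = S.ends (a i)) ∧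
      {p : PairN d | S.Rel p.1 p.2} =
        ⋃ i, (b i + ·) '' ((S.periods (a i)).comap castPair : Set (PairN d)) := by
  obtain ⟨F, -, hF⟩ := exists_finset_forall_exists_le (Set.univ : Set S.Run)
  choose b hb using fun a => exists_castPair_eq (S.ends_mem a)
  refine ⟨F.card, fun i => F.equivFin.symm i, fun i => b (F.equivFin.symm i), fun i => hb _, ?_⟩
  rw [F.equivFin.symm.surjective.iUnion_comp
    fun a : F => (b a + ·) '' ((S.periods a).comap castPair : Set (PairN d))]
  ext p
  simp only [Set.mem_iUnion]
  constructor
  · rintro ⟨c, hc⟩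
    obtain ⟨a, haF, hac⟩ := hF c trivial
    obtain ⟨q, hq⟩ := exists_castPair_eq (periods_le_natPairs (sub_mem_periods hac))
    refine ⟨⟨a, haF⟩, q, ?_, castPair_injective ?_⟩
    · exact AddSubmonoid.mem_comap.2 (hq ▸ sub_mem_periods hac)
    · rw [map_add, hq, hb, hc, castPair_apply]
      abel
  · rintro ⟨a, q, ⟨c, -, hc⟩, rfl⟩
    exact ⟨c, by rw [hc, ← hb, ← map_add, castPair_apply]⟩

end AmalgSystem

theorem IsLinSet.exists_rel_iff {L : Set (PairN d)} (hL : IsLinSet L) :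
    ∃ T : AmalgSystem d, (∀ a, IsTame (T.periods a)) ∧ ∀ p, T.Rel p.1 p.2 ↔ p ∈ L := by
  obtain ⟨b, r, g, rfl⟩ := hL
  have hmem (x : PairN d) : castPair x ∈ natPairs d :=
    ⟨castVec_mem_natOrthant _, castVec_mem_natOrthant _⟩
  refine ⟨.linear (hmem b) fun i => hmem (g i), AmalgSystem.isTame_periods_linear _ _,
    fun p => exists_congr fun c => ?_⟩
  rw [← castPair_apply, eq_comm, ← castPair_injective.eq_iff]
  simp only [AmalgSystem.linear, Fintype.linearCombination_apply, map_add, map_sum, map_nsmul]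

theorem IsSemilinSet.exists_rel_iff {S : Set (PairN d)} (hS : IsSemilinSet S) :
    ∃ T : AmalgSystem d, (∀ a, IsTame (T.periods a)) ∧ ∀ p, T.Rel p.1 p.2 ↔ p ∈ S := by
  obtain ⟨n, L, hL, rfl⟩ := hS
  choose T hT hrel using fun i => (hL i).exists_rel_iff
  refine ⟨.iUnion T, fun ⟨i, a⟩ => ?_, fun p => ?_⟩
  · rw [AmalgSystem.periods_iUnion]
    exact hT i a
  · simp only [AmalgSystem.rel_iUnion, hrel, Set.mem_iUnion]

end Decomposition

/-- For a PVAS `V` and a semilinear relation `S`, the intersection of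
the reachability relation with `S` is a finite union of relations `b_i + P_i`, with
each `P_i` a smooth periodic relation such that every linear relation `L ⊆ b_i + P_i`
admits `p ∈ P_i` with `p + L` flattable with respect to `V`. -/
theorem pvas_reach_inter_semilinear_decomposition {d : ℕ} (V : PVAS d)
    (S : Set (PairN d)) (hS : IsSemilinSet S) :
    ∃ (n : ℕ) (b : Fin n → PairN d) (P : Fin n → Set (PairN d)),
      (∀ i, IsPeriodic (P i) ∧ IsSmooth (P i)) ∧
      {p : PairN d | V.Reach p.1 p.2} ∩ S = ⋃ i, (b i + ·) '' P i ∧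
      ∀ i, ∀ L : Set (PairN d), IsLinSet L → L ⊆ (b i + ·) '' P i →
        ∃ p ∈ P i, Flattable V ((p + ·) '' L) := by
  obtain ⟨R, hR, hReach⟩ := V.exists_tameFlat_rel_iff_reach
  obtain ⟨T, hT, hTS⟩ := hS.exists_rel_iff
  have hRT : (R.inter T).TameFlat V (d + 1) := hR.inter hT
  have hrel : {p : PairN d | V.Reach p.1 p.2} ∩ S = {p | (R.inter T).Rel p.1 p.2} := by
    ext p
    exact (and_congr (hReach _ _) (hTS p)).symm.trans AmalgSystem.rel_inter.symm
  obtain ⟨n, a, b, hb, hU⟩ := (R.inter T).exists_setOf_rel_eq_iUnion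
  exact ⟨n, b, fun i => ((R.inter T).periods (a i)).comap castPair,
    fun i => ⟨isPeriodic_coe _,
      (hRT.isTame _).isSmooth_comap_castPair AmalgSystem.periods_le_natPairs⟩,
    hrel.trans hU, fun i _ hL hLb => hRT.exists_flattable (hb i) hL hLb⟩
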